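/- arXiv:2405.05664 — 3 statements merged into one kernel-verified Lean document; each statement's English description precedes it below -/
import Mathlib

section
/- (Leibniz rule for BV functions.) Let $I \subseteq \mathbb{R}$ be an interval, and let $BV(I)$ be the set of (classes modulo a.e. equality of) functions $u \in L^1(I)$ whose distributional derivative $u'$ on the interior $\mathring I$ of $I$ is a finite signed Radon measure on $\mathring I$, i.e. $\int_I u\,\varphi'\,dx = -\int \varphi\,du'$ for all $\varphi \in C_c^\infty(\mathring I)$. Every $u \in BV(I)$ admits one-sided limits $u(x-)$ and $u(x+)$ at every $x \in \mathring I$ (taken up to Lebesgue null sets, hence independent of the representative); put $\langle u\rangle(x) := \tfrac12\bigl(u(x-)+u(x+)\bigr)$. Let $u, v \in BV(I)$. Then $uv \in BV(I)$, the function $\langle v\rangle$ is $|u'|$-integrable, $\langle u\rangle$ is $|v'|$-integrable, and, as signed Radon measures on $\mathring I$, $$(uv)' = \langle v\rangle\, u' + \langle u\rangle\, v',$$ where $f\mu$ denotes the measure $E \mapsto \int_E f\,d\mu$. -/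
/-!
By du Bois-Reymond's lemma, `u` has distributional derivative `μ` on an interval if and only if
`u x = c + μ (-∞, x]` almost everywhere there for some constant `c`. Such a `u` has one-sided limits
`c + μ (-∞, x)` and `c + μ (-∞, x]`. If moreover `v x = d + ν (-∞, x]`, the Leibniz rule amounts to
`∫_{(-∞, t]} ⟨v⟩ dμ + ∫_{(-∞, t]} ⟨u⟩ dν = (c + μ (-∞, t]) (d + ν (-∞, t]) - c d`.
Fubini's theorem on the half-planes `{y ≤ x}` and `{y < x}` gives the two versions of integration by
parts in which one integrand is right-continuous and the other left-continuous, and their average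
is this identity: the diagonal, where common atoms of `μ` and `ν` sit, is split evenly.
-/

open Set MeasureTheory Filter Topology
open scoped ContDiff

/-- The signed measure `μ` is the distributional derivative on the interval `I` of (the class of)
`u`: `∫_I u φ' dx = - ∫ φ dμ` for all smooth `φ` with compact support in the interior of `I`.
A signed measure on the interior of `I` is represented by its extension by zero to `ℝ`, which is
what the first conjunct says; it makes `μ` unique. (Finite signed Borel measures on an open subset
of `ℝ` are automatically Radon.) -/
def IsDistribDeriv (I : Set ℝ) (u : ℝ → ℝ) (μ : SignedMeasure ℝ) : Prop :=
  (∀ E : Set ℝ, MeasurableSet E → Disjoint E (interior I) → μ E = 0) ∧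
  ∀ φ : ℝ → ℝ, ContDiff ℝ ∞ φ → HasCompactSupport φ → tsupport φ ⊆ interior I →
    ∫ x in I, u x * deriv φ x = - VectorMeasure.integral μ φ (ContinuousLinearMap.lsmul ℝ ℝ)

/-- `u ∈ BV(I)`: `u ∈ L¹(I)` and its distributional derivative is a finite signed measure. -/
def MemBV (I : Set ℝ) (u : ℝ → ℝ) : Prop :=
  IntegrableOn u I ∧ ∃ μ : SignedMeasure ℝ, IsDistribDeriv I u μ

/-- The limit of `u(y)` as `y → x` within `s`, up to Lebesgue null sets: it depends only on the
class of `u` modulo equality almost everywhere on `s`. -/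
noncomputable def essLimWithin (s : Set ℝ) (u : ℝ → ℝ) (x : ℝ) : ℝ :=
  limUnder (𝓝[s] x ⊓ ae volume) u

open Classical in
/-- `u(x-)`, taken inside `I`. At the left endpoint of `I`, where there is nothing to the left,
it is the limit from the right. -/
noncomputable def bvLeftLim (I : Set ℝ) (u : ℝ → ℝ) (x : ℝ) : ℝ :=
  if ∃ y ∈ I, y < x then essLimWithin (I ∩ Iio x) u x else essLimWithin (I ∩ Ioi x) u x

open Classical in
/-- `u(x+)`, taken inside `I`. At the right endpoint of `I`, where there is nothing to the right,
it is the limit from the left. -/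
noncomputable def bvRightLim (I : Set ℝ) (u : ℝ → ℝ) (x : ℝ) : ℝ :=
  if ∃ y ∈ I, x < y then essLimWithin (I ∩ Ioi x) u x else essLimWithin (I ∩ Iio x) u x

/-- The precise representative `⟨u⟩(x) = (u(x-) + u(x+)) / 2`. -/
noncomputable def preciseRep (I : Set ℝ) (u : ℝ → ℝ) (x : ℝ) : ℝ :=
  (bvLeftLim I u x + bvRightLim I u x) / 2

/-- The signed measure `f μ : E ↦ ∫_E f dμ`, for `f` integrable with respect to `|μ|`. -/
noncomputable def densityMul (f : ℝ → ℝ) (μ : SignedMeasure ℝ) : SignedMeasure ℝ :=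
  VectorMeasure.withDensity μ f (ContinuousLinearMap.lsmul ℝ ℝ)

open ContinuousLinearMap (lsmul)

section SignedMeasure

variable {X Y : Type*} [MeasurableSpace X] [MeasurableSpace Y]

instance isFiniteMeasure_variation_signedMeasure (μ : SignedMeasure X) :
    IsFiniteMeasure μ.variation := by
  rw [← SignedMeasure.totalVariation_eq_variation]
  unfold SignedMeasure.totalVariation
  infer_instance

theorem flip_lsmul_real : (lsmul ℝ ℝ : ℝ →L[ℝ] ℝ →L[ℝ] ℝ).flip = lsmul ℝ ℝ := by
  ext
  simp

theorem integral_toSignedMeasure_lsmul (m : Measure X) [IsFiniteMeasure m] (f : X → ℝ) :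
    ∫ᵛ x, f x ∂•m.toSignedMeasure = ∫ x, f x ∂m := by
  rw [← flip_lsmul_real, VectorMeasure.integral_toSignedMeasure]

theorem integral_withDensityᵥ_lsmul {m : Measure X} {f g : X → ℝ} (hg : Integrable g m)
    (hf : (m.withDensityᵥ g).Integrable f) :
    ∫ᵛ x, f x ∂•(m.withDensityᵥ g) = ∫ x, f x * g x ∂m := by
  have hfin : IsFiniteMeasure (m.withDensity fun x ↦ .ofReal (g x)) :=
    isFiniteMeasure_withDensity_ofReal hg.2
  have hfin_neg : IsFiniteMeasure (m.withDensity fun x ↦ .ofReal (-g x)) :=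
    isFiniteMeasure_withDensity_ofReal hg.neg.2
  rw [VectorMeasure.Integrable, Measure.variation_withDensityᵥ hg] at hf
  have hpos : Integrable f (m.withDensity fun x ↦ .ofReal (g x)) :=
    hf.mono_measure (withDensity_mono (.of_forall fun x ↦ Real.ofReal_le_enorm (g x)))
  have hneg : Integrable f (m.withDensity fun x ↦ .ofReal (-g x)) :=
    hf.mono_measure (withDensity_mono (.of_forall fun x ↦ by
      simpa using Real.ofReal_le_enorm (-g x)))
  have hmeas : AEMeasurable (fun x ↦ ENNReal.ofReal (g x)) m := hg.aemeasurable.ennreal_ofReal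
  have hmeas_neg : AEMeasurable (fun x ↦ ENNReal.ofReal (-g x)) m :=
    hg.neg.aemeasurable.ennreal_ofReal
  have hlt (h : X → ℝ) : ∀ᵐ x ∂m, ENNReal.ofReal (h x) < ⊤ := .of_forall fun _ ↦ by simp
  rw [withDensityᵥ_eq_withDensity_pos_part_sub_withDensity_neg_part hg,
    VectorMeasure.integral_sub_vectorMeasure (by simpa [VectorMeasure.Integrable] using hpos)
      (by simpa [VectorMeasure.Integrable] using hneg),
    integral_toSignedMeasure_lsmul, integral_toSignedMeasure_lsmul,
    integral_withDensity_eq_integral_toReal_smul₀ hmeas (hlt g),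
    integral_withDensity_eq_integral_toReal_smul₀ hmeas_neg (hlt fun x ↦ -g x),
    ← integral_sub ((integrable_withDensity_iff_integrable_smul₀' hmeas (hlt g)).1 hpos)
      ((integrable_withDensity_iff_integrable_smul₀' hmeas_neg (hlt fun x ↦ -g x)).1 hneg)]
  congr 1 with x
  rw [← sub_smul, ENNReal.toReal_ofReal', ENNReal.toReal_ofReal', max_zero_sub_max_neg_zero_eq_self,
    smul_eq_mul, mul_comm]

theorem integral_apply_prodMk_comm (μ : SignedMeasure X) (ν : SignedMeasure Y) {s : Set (X × Y)}
    (hs : MeasurableSet s) :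
    ∫ᵛ x, ν (Prod.mk x ⁻¹' s) ∂•μ = ∫ᵛ y, μ ((fun x ↦ (x, y)) ⁻¹' s) ∂•ν := by
  have hswap : μ.prod ν (lsmul ℝ ℝ) = (ν.prod μ (lsmul ℝ ℝ)).map Prod.swap :=
    VectorMeasure.prod_eq_of_forall_apply_prod fun A B hA hB ↦ by
      rw [VectorMeasure.map_apply _ measurable_swap (hA.prod hB), preimage_swap_prod]
      simp [mul_comm]
  have h := congrArg (· s) hswap
  simp only [VectorMeasure.map_apply _ measurable_swap hs] at h
  rwa [VectorMeasure.prod_apply_eq_integral hs,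
    VectorMeasure.prod_apply_eq_integral (measurable_swap hs), flip_lsmul_real] at h

theorem setIntegral_const_lsmul (μ : SignedMeasure X) (s : Set X) (c : ℝ) :
    ∫ᵛ _ in s, c ∂•μ = c * μ s := by
  rw [VectorMeasure.setIntegral_const]
  simp

variable [LinearOrder X] [TopologicalSpace X] [OrderClosedTopology X] [OpensMeasurableSpace X]

/-- The mean of the right- and left-continuous primitives `x ↦ μ (Iic x)` and `x ↦ μ (Iio x)` of
`μ`, that is, the precise representative of either of them. -/
noncomputable def meanPrimitive (μ : SignedMeasure X) (x : X) : ℝ := (μ (Iic x) + μ (Iio x)) / 2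

theorem meanPrimitive_restrict_Iic (μ : SignedMeasure X) {x t : X} (h : x ≤ t) :
    meanPrimitive (μ.restrict (Iic t)) x = meanPrimitive μ x := by
  simp only [meanPrimitive, VectorMeasure.restrict_apply _ measurableSet_Iic measurableSet_Iic,
    VectorMeasure.restrict_apply _ measurableSet_Iic measurableSet_Iio,
    inter_eq_left.2 (Iic_subset_Iic.2 h),
    inter_eq_left.2 (Iio_subset_Iic_self.trans (Iic_subset_Iic.2 h))]

variable [SecondCountableTopology X]

theorem measurable_apply_Iic (μ : SignedMeasure X) : Measurable fun x ↦ μ (Iic x) :=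
  (VectorMeasure.stronglyMeasurable_vectorMeasure_prodMk_left
    (measurableSet_le measurable_snd measurable_fst)).measurable

theorem measurable_apply_Iio (μ : SignedMeasure X) : Measurable fun x ↦ μ (Iio x) :=
  (VectorMeasure.stronglyMeasurable_vectorMeasure_prodMk_left
    (measurableSet_lt measurable_snd measurable_fst)).measurable

theorem integrable_apply_Iic (m : Measure X) [IsFiniteMeasure m] (μ : SignedMeasure X) :
    Integrable (fun x ↦ μ (Iic x)) m :=
  .of_bound (measurable_apply_Iic μ).aestronglyMeasurable μ.bound
    (.of_forall fun _ ↦ VectorMeasure.norm_apply_le_bound)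

theorem integrable_apply_Iio (m : Measure X) [IsFiniteMeasure m] (μ : SignedMeasure X) :
    Integrable (fun x ↦ μ (Iio x)) m :=
  .of_bound (measurable_apply_Iio μ).aestronglyMeasurable μ.bound
    (.of_forall fun _ ↦ VectorMeasure.norm_apply_le_bound)

theorem integrable_meanPrimitive (m : Measure X) [IsFiniteMeasure m] (μ : SignedMeasure X) :
    Integrable (meanPrimitive μ) m :=
  ((integrable_apply_Iic m μ).add (integrable_apply_Iio m μ)).div_const 2

theorem integral_apply_Iic_eq_integral_apply_Ici (μ ν : SignedMeasure X) :
    ∫ᵛ x, ν (Iic x) ∂•μ = ∫ᵛ y, μ (Ici y) ∂•ν :=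
  integral_apply_prodMk_comm μ ν (s := {p | p.2 ≤ p.1})
    (measurableSet_le measurable_snd measurable_fst)

theorem integral_apply_Iic_add_integral_apply_Iio (μ ν : SignedMeasure X) :
    ∫ᵛ x, ν (Iic x) ∂•μ + ∫ᵛ x, μ (Iio x) ∂•ν = μ univ * ν univ := by
  have hcompl (y : X) : μ (Ici y) = μ univ - μ (Iio y) := by
    rw [← compl_Iio, VectorMeasure.of_compl measurableSet_Iio]
  simp_rw [integral_apply_Iic_eq_integral_apply_Ici, hcompl]
  rw [VectorMeasure.integral_fun_sub (integrable_const _) (integrable_apply_Iio _ μ),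
    sub_add_cancel, ← VectorMeasure.setIntegral_univ, setIntegral_const_lsmul]

theorem integral_meanPrimitive_add_integral_meanPrimitive (μ ν : SignedMeasure X) :
    ∫ᵛ x, meanPrimitive ν x ∂•μ + ∫ᵛ x, meanPrimitive μ x ∂•ν = μ univ * ν univ := by
  have hsplit (μ ν : SignedMeasure X) :
      ∫ᵛ x, meanPrimitive ν x ∂•μ = 2⁻¹ * (∫ᵛ x, ν (Iic x) ∂•μ + ∫ᵛ x, ν (Iio x) ∂•μ) := by
    simp_rw [meanPrimitive, div_eq_inv_mul, ← smul_eq_mul (2⁻¹ : ℝ)]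
    rw [VectorMeasure.integral_fun_smul, VectorMeasure.integral_fun_add
      (integrable_apply_Iic _ ν) (integrable_apply_Iio _ ν)]
  rw [hsplit μ ν, hsplit ν μ]
  linarith [integral_apply_Iic_add_integral_apply_Iio μ ν,
    integral_apply_Iic_add_integral_apply_Iio ν μ]

theorem setIntegral_Iic_meanPrimitive_add_setIntegral_Iic_meanPrimitive (μ ν : SignedMeasure X)
    (t : X) :
    ∫ᵛ x in Iic t, meanPrimitive ν x ∂•μ + ∫ᵛ x in Iic t, meanPrimitive μ x ∂•ν =
      μ (Iic t) * ν (Iic t) := by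
  have hrestrict (μ ν : SignedMeasure X) : ∫ᵛ x in Iic t, meanPrimitive ν x ∂•μ =
      ∫ᵛ x, meanPrimitive (ν.restrict (Iic t)) x ∂•(μ.restrict (Iic t)) :=
    VectorMeasure.setIntegral_congr_fun fun x hx ↦ (meanPrimitive_restrict_Iic ν hx).symm
  rw [hrestrict μ ν, hrestrict ν μ, integral_meanPrimitive_add_integral_meanPrimitive]
  simp only [VectorMeasure.restrict_apply _ measurableSet_Iic MeasurableSet.univ, univ_inter]

end SignedMeasure

section OneSidedLimits

theorem tendsto_apply_of_eventually_mem_iff {X ι : Type*} [MeasurableSpace X] (μ : SignedMeasure X)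
    {l : Filter ι} [l.IsCountablyGenerated] {s : ι → Set X} {s₀ : Set X}
    (hs : ∀ i, MeasurableSet (s i)) (hs₀ : MeasurableSet s₀)
    (hlim : ∀ x, ∀ᶠ i in l, x ∈ s i ↔ x ∈ s₀) :
    Tendsto (fun i ↦ μ (s i)) l (𝓝 (μ s₀)) := by
  have hint {t : Set X} (ht : MeasurableSet t) : ∫ᵛ x, t.indicator (fun _ ↦ 1) x ∂•μ = μ t := by
    rw [VectorMeasure.integral_indicator ht, setIntegral_const_lsmul, one_mul]
  rw [← hint hs₀]
  refine Tendsto.congr (fun i ↦ hint (hs i))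
    (VectorMeasure.tendsto_integral_filter_of_norm_le_const ?_ ⟨1, ?_⟩ ?_)
  · exact .of_forall fun i ↦ (measurable_const.indicator (hs i)).aestronglyMeasurable
  · exact .of_forall fun i ↦ .of_forall fun x ↦
      (norm_indicator_le_norm_self _ x).trans norm_one.le
  · exact .of_forall fun x ↦ (tendsto_indicator_const_apply_iff_eventually l 1 x).2 (hlim x)

variable {X : Type*} [MeasurableSpace X] [LinearOrder X] [TopologicalSpace X]
  [OrderClosedTopology X] [OpensMeasurableSpace X] [FirstCountableTopology X]

theorem tendsto_apply_Iic_nhdsLT (μ : SignedMeasure X) (x : X) :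
    Tendsto (fun t ↦ μ (Iic t)) (𝓝[<] x) (𝓝 (μ (Iio x))) := by
  refine tendsto_apply_of_eventually_mem_iff μ (fun _ ↦ measurableSet_Iic) measurableSet_Iio
    fun y ↦ ?_
  rcases lt_or_ge y x with hyx | hxy
  · filter_upwards [Ioo_mem_nhdsLT hyx] with t ht using iff_of_true ht.1.le hyx
  · filter_upwards [self_mem_nhdsWithin] with t (ht : t < x)
    exact iff_of_false (ht.trans_le hxy).not_ge hxy.not_gt

theorem tendsto_apply_Iic_nhdsGT (μ : SignedMeasure X) (x : X) :
    Tendsto (fun t ↦ μ (Iic t)) (𝓝[>] x) (𝓝 (μ (Iic x))) := by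
  refine tendsto_apply_of_eventually_mem_iff μ (fun _ ↦ measurableSet_Iic) measurableSet_Iic
    fun y ↦ ?_
  rcases le_or_gt y x with hyx | hxy
  · filter_upwards [self_mem_nhdsWithin] with t (ht : x < t)
    exact iff_of_true (hyx.trans ht.le) hyx
  · filter_upwards [Ioo_mem_nhdsGT hxy] with t ht using iff_of_false ht.2.not_ge hxy.not_ge

end OneSidedLimits

theorem neBot_nhdsWithin_inf_ae {X : Type*} [TopologicalSpace X] [MeasurableSpace X]
    (m : Measure X) [m.IsOpenPosMeasure] {U : Set X} (hU : IsOpen U) {x : X} (hx : x ∈ closure U) :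
    (𝓝[U] x ⊓ ae m).NeBot := by
  refine inf_neBot_iff.2 fun s hs t ht ↦ ?_
  obtain ⟨V, hV, hxV, hVU⟩ := mem_nhdsWithin.1 hs
  exact ((Measure.dense_of_ae ht).inter_open_nonempty _ (hV.inter hU)
    (mem_closure_iff.1 hx V hV hxV)).mono (inter_subset_inter_left t hVU)

theorem essLimWithin_inter_eq {I U : Set ℝ} {u w : ℝ → ℝ} {x L : ℝ} (hI : I ∈ 𝓝 x)
    (hU : IsOpen U) (hx : x ∈ closure U) (huw : u =ᶠ[𝓝 x ⊓ ae volume] w)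
    (hw : Tendsto w (𝓝[U] x) (𝓝 L)) : essLimWithin (I ∩ U) u x = L := by
  have := neBot_nhdsWithin_inf_ae volume hU hx
  rw [essLimWithin, nhdsWithin_inter_of_mem (mem_nhdsWithin_of_mem_nhds hI)]
  exact ((hw.mono_left inf_le_left).congr'
    (huw.filter_mono (inf_le_inf_right _ nhdsWithin_le_nhds)).symm).limUnder_eq

theorem preciseRep_eq_add_meanPrimitive {I : Set ℝ} {u : ℝ → ℝ} {μ : SignedMeasure ℝ} {c : ℝ}
    (hu : ∀ᵐ x, x ∈ interior I → u x = c + μ (Iic x)) {x : ℝ} (hx : x ∈ interior I) :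
    preciseRep I u x = c + meanPrimitive μ x := by
  have hI : I ∈ 𝓝 x := mem_interior_iff_mem_nhds.1 hx
  have huw : u =ᶠ[𝓝 x ⊓ ae volume] fun t ↦ c + μ (Iic t) := by
    filter_upwards [mem_inf_of_left (isOpen_interior.mem_nhds hx), mem_inf_of_right hu]
      with t ht htu using htu ht
  have hleft : bvLeftLim I u x = c + μ (Iio x) := by
    obtain ⟨y, hyI, hyx⟩ := (mem_closure_iff_nhds.1 (by simp : x ∈ closure (Iio x))) I hI
    rw [bvLeftLim, if_pos ⟨y, hyI, hyx⟩]
    exact essLimWithin_inter_eq hI isOpen_Iio (by simp) huw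
      ((tendsto_apply_Iic_nhdsLT μ x).const_add c)
  have hright : bvRightLim I u x = c + μ (Iic x) := by
    obtain ⟨y, hyI, hxy⟩ := (mem_closure_iff_nhds.1 (by simp : x ∈ closure (Ioi x))) I hI
    rw [bvRightLim, if_pos ⟨y, hyI, hxy⟩]
    exact essLimWithin_inter_eq hI isOpen_Ioi (by simp) huw
      ((tendsto_apply_Iic_nhdsGT μ x).const_add c)
  rw [preciseRep, hleft, hright, meanPrimitive]
  ring

section DuBoisReymond

theorem exists_Icc_superset_of_isCompact {K J : Set ℝ} (hK : IsCompact K) (hJ : J.OrdConnected)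
    (hKJ : K ⊆ J) : ∃ a b, K ⊆ Icc a b ∧ Icc a b ⊆ J := by
  rcases K.eq_empty_or_nonempty with rfl | hne
  · exact ⟨1, 0, by simp⟩
  · exact ⟨sInf K, sSup K, hK.isBounded.subset_Icc_sInf_sSup,
      hJ.out (hKJ (hK.sInf_mem hne)) (hKJ (hK.sSup_mem hne))⟩

theorem hasDerivAt_setIntegral_Iic {E : Type*} [NormedAddCommGroup E] [NormedSpace ℝ E]
    [CompleteSpace E] {f : ℝ → E} (hf : Continuous f) (hfi : Integrable f) (x : ℝ) :
    HasDerivAt (fun x ↦ ∫ t in Iic x, f t) (f x) x := by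
  have hsplit (x : ℝ) : ∫ t in Iic x, f t = (∫ t in Iic 0, f t) + ∫ t in (0 : ℝ)..x, f t := by
    rw [← intervalIntegral.integral_Iic_sub_Iic hfi.integrableOn hfi.integrableOn,
      add_sub_cancel]
  exact ((hf.integral_hasStrictDerivAt 0 x).hasDerivAt.const_add _).congr_of_eventuallyEq
    (.of_forall hsplit)

theorem exists_contDiff_deriv_eq_of_integral_eq_zero {J : Set ℝ} (hJ : J.OrdConnected) {η : ℝ → ℝ}
    (hη : ContDiff ℝ ∞ η) (hηc : HasCompactSupport η) (hηJ : tsupport η ⊆ J)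
    (hη₀ : ∫ x, η x = 0) :
    ∃ φ : ℝ → ℝ, ContDiff ℝ ∞ φ ∧ HasCompactSupport φ ∧ tsupport φ ⊆ J ∧ deriv φ = η := by
  obtain ⟨a, b, hab, habJ⟩ := exists_Icc_superset_of_isCompact hηc hJ hηJ
  have hη_zero {t : ℝ} (ht : t ∉ Icc a b) : η t = 0 :=
    image_eq_zero_of_notMem_tsupport fun h ↦ ht (hab h)
  have hderiv := hasDerivAt_setIntegral_Iic hη.continuous
    (hη.continuous.integrable_of_hasCompactSupport hηc)
  have hsupp : tsupport (fun x ↦ ∫ t in Iic x, η t) ⊆ Icc a b := by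
    refine closure_minimal (fun x hx ↦ ?_) isClosed_Icc
    by_contra hxab
    refine hx ?_
    rcases lt_or_ge x a with hxa | hax
    · exact setIntegral_eq_zero_of_forall_eq_zero fun t ht ↦
        hη_zero fun h ↦ (h.1.trans ht).not_gt hxa
    · refine (setIntegral_eq_integral_of_forall_compl_eq_zero fun t ht ↦ ?_).trans hη₀
      exact hη_zero fun h ↦ hxab ⟨hax, (not_le.1 ht).le.trans h.2⟩
  have hderiv_eq : deriv (fun x ↦ ∫ t in Iic x, η t) = η := funext fun x ↦ (hderiv x).deriv
  refine ⟨fun x ↦ ∫ t in Iic x, η t, ?_, ?_, hsupp.trans habJ, hderiv_eq⟩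
  · exact contDiff_infty_iff_deriv.2
      ⟨fun x ↦ (hderiv x).differentiableAt, hderiv_eq.symm ▸ hη⟩
  · exact isCompact_Icc.of_isClosed_subset (isClosed_tsupport _) hsupp

theorem exists_contDiff_integral_eq_one {J : Set ℝ} (hJ : IsOpen J) (hne : J.Nonempty) :
    ∃ ψ : ℝ → ℝ, ContDiff ℝ ∞ ψ ∧ HasCompactSupport ψ ∧ tsupport ψ ⊆ J ∧ ∫ x, ψ x = 1 := by
  obtain ⟨x, hx⟩ := hne
  obtain ⟨r, hr, hrJ⟩ := Metric.nhds_basis_closedBall.mem_iff.1 (hJ.mem_nhds hx)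
  let bump : ContDiffBump x := ⟨r / 2, r, half_pos hr, half_lt_self hr⟩
  exact ⟨bump.normed volume, bump.contDiff_normed, bump.hasCompactSupport_normed,
    bump.tsupport_normed_eq.trans_subset hrJ, bump.integral_normed⟩

variable {E : Type*} [NormedAddCommGroup E] [NormedSpace ℝ E]

theorem integrable_smul_of_tsupport_subset {X : Type*} [TopologicalSpace X] [LocallyCompactSpace X]
    [T2Space X] [MeasurableSpace X] [OpensMeasurableSpace X] {m : Measure X} {J : Set X}
    (hJ : IsOpen J) {f : X → E} (hf : LocallyIntegrableOn f J m) {g : X → ℝ} (hg : Continuous g)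
    (hgc : HasCompactSupport g) (hgJ : tsupport g ⊆ J) : Integrable (fun x ↦ g x • f x) m := by
  have hfK : IntegrableOn f (tsupport g) m :=
    (locallyIntegrableOn_iff hJ.isLocallyClosed).1 hf _ hgJ hgc
  refine (integrableOn_iff_integrable_of_support_subset ?_).1
    (hfK.continuousOn_smul hg.continuousOn hgc)
  exact (Function.support_smul_subset_left _ _).trans (subset_tsupport g)

theorem ae_eq_const_of_integral_deriv_smul_eq_zero [CompleteSpace E] {J : Set ℝ} (hJo : IsOpen J)
    (hJ : J.OrdConnected) {f : ℝ → E} (hf : LocallyIntegrableOn f J)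
    (h : ∀ φ : ℝ → ℝ, ContDiff ℝ ∞ φ → HasCompactSupport φ → tsupport φ ⊆ J →
      ∫ x, deriv φ x • f x = 0) :
    ∃ c, ∀ᵐ x, x ∈ J → f x = c := by
  rcases J.eq_empty_or_nonempty with rfl | hne
  · exact ⟨0, by simp⟩
  obtain ⟨ψ, hψ, hψc, hψJ, hψ₁⟩ := exists_contDiff_integral_eq_one hJo hne
  have hψi : Integrable ψ := hψ.continuous.integrable_of_hasCompactSupport hψc
  have hψf := integrable_smul_of_tsupport_subset hJo hf hψ.continuous hψc hψJ
  refine ⟨∫ x, ψ x • f x, ?_⟩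
  suffices hzero : ∀ᵐ x, x ∈ J → f x - ∫ t, ψ t • f t = 0 by
    simpa only [sub_eq_zero] using hzero
  refine hJo.ae_eq_zero_of_integral_contDiff_smul_eq_zero
    (hf.sub (continuousOn_const.locallyIntegrableOn hJo.measurableSet)) fun g hg hgc hgJ ↦ ?_
  have hgi : Integrable g := hg.continuous.integrable_of_hasCompactSupport hgc
  have hgf := integrable_smul_of_tsupport_subset hJo hf hg.continuous hgc hgJ
  obtain ⟨φ, hφ, hφc, hφJ, hφη⟩ := exists_contDiff_deriv_eq_of_integral_eq_zero hJ
    (η := fun x ↦ g x - (∫ t, g t) * ψ x) (hg.sub (contDiff_const.mul hψ)) (hgc.sub hψc.mul_left)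
    ((tsupport_sub _ _).trans (union_subset hgJ (tsupport_mul_subset_right.trans hψJ)))
    (by rw [integral_sub hgi (hψi.const_mul _), integral_const_mul, hψ₁, mul_one, sub_self])
  calc ∫ x, g x • (f x - ∫ t, ψ t • f t)
      = (∫ x, g x • f x) - (∫ x, g x) • ∫ x, ψ x • f x := by
        simp_rw [smul_sub]
        rw [integral_sub hgf (hgi.smul_const _), integral_smul_const]
    _ = ∫ x, deriv φ x • f x := by
        simp_rw [hφη, sub_smul, mul_smul]
        rw [integral_sub hgf (hψf.fun_smul _), integral_smul]
    _ = 0 := h φ hφ hφc hφJ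

end DuBoisReymond

theorem integral_apply_Iic_mul_deriv (μ : SignedMeasure ℝ) {φ : ℝ → ℝ} (hφ : ContDiff ℝ 1 φ)
    (hφc : HasCompactSupport φ) :
    ∫ t, μ (Iic t) * deriv φ t = -∫ᵛ x, φ x ∂•μ := by
  have hdi : Integrable (deriv φ) :=
    (hφ.continuous_deriv le_rfl).integrable_of_hasCompactSupport hφc.deriv
  have hIci (x : ℝ) : volume.withDensityᵥ (deriv φ) (Ici x) = -φ x := by
    rw [withDensityᵥ_apply hdi measurableSet_Ici, integral_Ici_eq_integral_Ioi,
      hφc.integral_Ioi_deriv_eq hφ]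
  rw [← integral_withDensityᵥ_lsmul hdi (integrable_apply_Iic _ μ),
    integral_apply_Iic_eq_integral_apply_Ici]
  simp_rw [hIci]
  exact VectorMeasure.integral_fun_neg _ _ φ

theorem setIntegral_mul_deriv_eq_integral {I : Set ℝ} (u : ℝ → ℝ) {φ : ℝ → ℝ}
    (hφ : tsupport φ ⊆ interior I) :
    ∫ x in I, u x * deriv φ x = ∫ x, u x * deriv φ x :=
  setIntegral_eq_integral_of_forall_compl_eq_zero fun x hx ↦ by
    rw [deriv_of_notMem_tsupport fun h ↦ hx (interior_subset (hφ h)), mul_zero]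

theorem IsDistribDeriv.exists_ae_eq_add_apply_Iic {I : Set ℝ} (hI : I.OrdConnected) {u : ℝ → ℝ}
    (hu : LocallyIntegrableOn u (interior I)) {μ : SignedMeasure ℝ} (hμ : IsDistribDeriv I u μ) :
    ∃ c, ∀ᵐ x, x ∈ interior I → u x = c + μ (Iic x) := by
  have hμi : LocallyIntegrable fun x ↦ μ (Iic x) :=
    (memLp_top_of_bound (measurable_apply_Iic μ).aestronglyMeasurable μ.bound
      (.of_forall fun _ ↦ VectorMeasure.norm_apply_le_bound)).locallyIntegrable le_top
  have horth (φ : ℝ → ℝ) (hφ : ContDiff ℝ ∞ φ) (hφc : HasCompactSupport φ)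
      (hφI : tsupport φ ⊆ interior I) : ∫ x, deriv φ x • (u x - μ (Iic x)) = 0 := by
    have hd : Continuous (deriv φ) := hφ.continuous_deriv (by simp)
    have hdI : tsupport (deriv φ) ⊆ interior I := tsupport_deriv_subset.trans hφI
    have hud := integrable_smul_of_tsupport_subset isOpen_interior hu hd hφc.deriv hdI
    have hμd := integrable_smul_of_tsupport_subset isOpen_interior (hμi.locallyIntegrableOn _) hd
      hφc.deriv hdI
    simp_rw [smul_sub]
    rw [integral_sub hud hμd, sub_eq_zero]
    simp_rw [smul_eq_mul, mul_comm (deriv φ _)]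
    rw [← setIntegral_mul_deriv_eq_integral u hφI, hμ.2 φ hφ hφc hφI,
      integral_apply_Iic_mul_deriv μ (hφ.of_le (by simp)) hφc]
  obtain ⟨c, hc⟩ := ae_eq_const_of_integral_deriv_smul_eq_zero isOpen_interior hI.interior
    (hu.sub (hμi.locallyIntegrableOn _)) horth
  exact ⟨c, hc.mono fun x hx hxI ↦ sub_eq_iff_eq_add.1 (hx hxI)⟩

theorem isDistribDeriv_of_ae_eq_add_apply_Iic {I : Set ℝ} {u : ℝ → ℝ} {μ : SignedMeasure ℝ}
    (hμ : ∀ E, MeasurableSet E → Disjoint E (interior I) → μ E = 0) {c : ℝ}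
    (hu : ∀ᵐ x, x ∈ interior I → u x = c + μ (Iic x)) : IsDistribDeriv I u μ := by
  refine ⟨hμ, fun φ hφ hφc hφI ↦ ?_⟩
  have hφ₁ : ContDiff ℝ 1 φ := hφ.of_le (by simp)
  have hdi : Integrable (deriv φ) :=
    (hφ₁.continuous_deriv le_rfl).integrable_of_hasCompactSupport hφc.deriv
  have hμd : Integrable fun x ↦ μ (Iic x) * deriv φ x :=
    hdi.bdd_mul (measurable_apply_Iic μ).aestronglyMeasurable
      (.of_forall fun _ ↦ VectorMeasure.norm_apply_le_bound)
  calc ∫ x in I, u x * deriv φ x = ∫ x, u x * deriv φ x := setIntegral_mul_deriv_eq_integral u hφI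
    _ = ∫ x, c * deriv φ x + μ (Iic x) * deriv φ x := integral_congr_ae <| by
        filter_upwards [hu] with x hx
        by_cases hxI : x ∈ interior I
        · rw [hx hxI, add_mul]
        · rw [deriv_of_notMem_tsupport fun h ↦ hxI (hφI h), mul_zero, mul_zero, mul_zero, add_zero]
    _ = c * (∫ x, deriv φ x) + ∫ x, μ (Iic x) * deriv φ x := by
        rw [integral_add (hdi.const_mul c) hμd, integral_const_mul]
    _ = -∫ᵛ x, φ x ∂•μ := by
        rw [integral_eq_zero_of_hasDerivAt_of_integrable
            (fun x ↦ (hφ₁.differentiable one_ne_zero x).hasDerivAt) hdi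
            (hφ.continuous.integrable_of_hasCompactSupport hφc), mul_zero, zero_add,
          integral_apply_Iic_mul_deriv μ hφ₁ hφc]

theorem ae_variation_mem_of_apply_eq_zero {X : Type*} [MeasurableSpace X] {μ : SignedMeasure X}
    {s : Set X} (hs : MeasurableSet s)
    (h : ∀ E, MeasurableSet E → Disjoint E s → μ E = 0) : ∀ᵐ x ∂μ.variation, x ∈ s :=
  (VectorMeasure.variation_apply_eq_zero hs.compl).2 fun E hE hEm ↦ h E hEm (disjoint_left.2 hE)

theorem IsDistribDeriv.ae_mem_interior {I : Set ℝ} {u : ℝ → ℝ} {μ : SignedMeasure ℝ}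
    (hμ : IsDistribDeriv I u μ) : ∀ᵐ x ∂μ.variation, x ∈ interior I :=
  ae_variation_mem_of_apply_eq_zero isOpen_interior.measurableSet hμ.1

theorem withDensityᵥ_rnDeriv_variation {X : Type*} [MeasurableSpace X] (μ : SignedMeasure X) :
    μ.variation.withDensityᵥ (μ.rnDeriv μ.variation) = μ :=
  (SignedMeasure.absolutelyContinuous_iff_withDensityᵥ_rnDeriv_eq μ μ.variation).1
    (VectorMeasure.absolutelyContinuous μ)

theorem eq_zero_of_integral_contDiff_eq_zero {J : Set ℝ} (hJ : IsOpen J) {μ : SignedMeasure ℝ}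
    (hμ : ∀ E, MeasurableSet E → Disjoint E J → μ E = 0)
    (h : ∀ φ : ℝ → ℝ, ContDiff ℝ ∞ φ → HasCompactSupport φ → tsupport φ ⊆ J →
      ∫ᵛ x, φ x ∂•μ = 0) : μ = 0 := by
  have hint := SignedMeasure.integrable_rnDeriv μ μ.variation
  have hzero : ∀ᵐ x ∂μ.variation, x ∈ J → μ.rnDeriv μ.variation x = 0 :=
    hJ.ae_eq_zero_of_integral_contDiff_smul_eq_zero
      (hint.locallyIntegrable.locallyIntegrableOn J) fun φ hφ hφc hφJ ↦ by
        simp_rw [smul_eq_mul]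
        rw [← integral_withDensityᵥ_lsmul hint, withDensityᵥ_rnDeriv_variation, h φ hφ hφc hφJ]
        exact hφ.continuous.integrable_of_hasCompactSupport hφc
  rw [← withDensityᵥ_rnDeriv_variation μ, WithDensityᵥEq.congr_ae (g := 0), withDensityᵥ_zero]
  filter_upwards [hzero, ae_variation_mem_of_apply_eq_zero hJ.measurableSet hμ] with x hx hxJ
    using hx hxJ

theorem IsDistribDeriv.unique {I : Set ℝ} {u : ℝ → ℝ} {μ ν : SignedMeasure ℝ}
    (hμ : IsDistribDeriv I u μ) (hν : IsDistribDeriv I u ν) : μ = ν := by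
  rw [← sub_eq_zero]
  refine eq_zero_of_integral_contDiff_eq_zero (isOpen_interior (s := I)) (fun E hE hEI ↦ ?_)
    fun φ hφ hφc hφI ↦ ?_
  · rw [_root_.sub_apply, hμ.1 E hE hEI, hν.1 E hE hEI, sub_zero]
  · have hint (ρ : SignedMeasure ℝ) : ρ.Integrable φ :=
      hφ.continuous.integrable_of_hasCompactSupport hφc
    rw [VectorMeasure.integral_sub_vectorMeasure (hint μ) (hint ν), sub_eq_zero]
    exact neg_injective ((hμ.2 φ hφ hφc hφI).symm.trans (hν.2 φ hφ hφc hφI))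

section Product

variable {I : Set ℝ} {u v : ℝ → ℝ} {μ ν : SignedMeasure ℝ} {d : ℝ}

theorem IsDistribDeriv.preciseRep_ae_eq (hμ : IsDistribDeriv I u μ)
    (hv : ∀ᵐ x, x ∈ interior I → v x = d + ν (Iic x)) :
    preciseRep I v =ᵐ[μ.variation] fun x ↦ d + meanPrimitive ν x := by
  filter_upwards [hμ.ae_mem_interior] with x hx using preciseRep_eq_add_meanPrimitive hv hx

theorem IsDistribDeriv.integrable_preciseRep (hμ : IsDistribDeriv I u μ)
    (hv : ∀ᵐ x, x ∈ interior I → v x = d + ν (Iic x)) : μ.Integrable (preciseRep I v) :=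
  ((integrable_const d).add (integrable_meanPrimitive _ ν)).congr (hμ.preciseRep_ae_eq hv).symm

theorem densityMul_apply {f : ℝ → ℝ} (hf : μ.Integrable f) (E : Set ℝ) :
    densityMul f μ E = ∫ᵛ x in E, f x ∂•μ :=
  VectorMeasure.withDensity_apply hf

theorem IsDistribDeriv.densityMul_eq_zero_of_disjoint (hμ : IsDistribDeriv I u μ) {f : ℝ → ℝ}
    (hf : μ.Integrable f) {E : Set ℝ} (hE : Disjoint E (interior I)) : densityMul f μ E = 0 := by
  have hzero : ∀ᵐ x ∂μ.variation, x ∈ E → f x = 0 := by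
    filter_upwards [hμ.ae_mem_interior] with x hx hxE
    exact absurd hx (disjoint_left.1 hE hxE)
  rw [densityMul_apply hf, VectorMeasure.setIntegral_congr_ae hzero,
    VectorMeasure.integral_zero]

theorem IsDistribDeriv.densityMul_preciseRep_Iic (hμ : IsDistribDeriv I u μ)
    (hv : ∀ᵐ x, x ∈ interior I → v x = d + ν (Iic x)) (t : ℝ) :
    densityMul (preciseRep I v) μ (Iic t) =
      d * μ (Iic t) + ∫ᵛ x in Iic t, meanPrimitive ν x ∂•μ := by
  rw [densityMul_apply (hμ.integrable_preciseRep hv),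
    VectorMeasure.setIntegral_congr_ae ((hμ.preciseRep_ae_eq hv).mono fun x hx _ ↦ hx),
    VectorMeasure.integral_fun_add (integrable_const d) (integrable_meanPrimitive _ ν),
    setIntegral_const_lsmul]

theorem IsDistribDeriv.mul (hI : I.OrdConnected) (hu : LocallyIntegrableOn u (interior I))
    (hv : LocallyIntegrableOn v (interior I)) (hμ : IsDistribDeriv I u μ)
    (hν : IsDistribDeriv I v ν) :
    μ.Integrable (preciseRep I v) ∧ ν.Integrable (preciseRep I u) ∧
      IsDistribDeriv I (fun x ↦ u x * v x)
        (densityMul (preciseRep I v) μ + densityMul (preciseRep I u) ν) := by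
  obtain ⟨c, hc⟩ := hμ.exists_ae_eq_add_apply_Iic hI hu
  obtain ⟨d, hd⟩ := hν.exists_ae_eq_add_apply_Iic hI hv
  have hvi := hμ.integrable_preciseRep hd
  have hui := hν.integrable_preciseRep hc
  refine ⟨hvi, hui, isDistribDeriv_of_ae_eq_add_apply_Iic (c := c * d) (fun E _ hEI ↦ ?_) ?_⟩
  · rw [_root_.add_apply, hμ.densityMul_eq_zero_of_disjoint hvi hEI,
      hν.densityMul_eq_zero_of_disjoint hui hEI, add_zero]
  · filter_upwards [hc, hd] with x hux hvx hx
    rw [hux hx, hvx hx, _root_.add_apply, hμ.densityMul_preciseRep_Iic hd,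
      hν.densityMul_preciseRep_Iic hc]
    linear_combination
      -setIntegral_Iic_meanPrimitive_add_setIntegral_Iic_meanPrimitive μ ν x

theorem IsDistribDeriv.exists_ae_norm_le (hI : I.OrdConnected)
    (hv : LocallyIntegrableOn v (interior I)) (hν : IsDistribDeriv I v ν) :
    ∃ C, ∀ᵐ x ∂volume.restrict I, ‖v x‖ ≤ C := by
  obtain ⟨d, hd⟩ := hν.exists_ae_eq_add_apply_Iic hI hv
  refine ⟨‖d‖ + ν.bound, ?_⟩
  rw [← Measure.restrict_congr_set (interior_ae_eq_of_null_frontier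
    (hI.convex.addHaar_frontier volume)), ae_restrict_iff' isOpen_interior.measurableSet]
  filter_upwards [hd] with x hx hxI
  rw [hx hxI]
  exact (norm_add_le _ _).trans (add_le_add_right VectorMeasure.norm_apply_le_bound _)

end Product

/-- **Leibniz rule for BV functions.** If `u, v ∈ BV(I)` then `uv ∈ BV(I)` and
`(uv)' = u' ⟨v⟩ + ⟨u⟩ v'` as signed measures, where both products on the right are well defined. -/
theorem leibniz_rule_BV (I : Set ℝ) (hI : I.OrdConnected) (u v : ℝ → ℝ)
    (hu : MemBV I u) (hv : MemBV I v) :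
    MemBV I (fun x => u x * v x) ∧
    ∀ Du Dv Duv : SignedMeasure ℝ,
      IsDistribDeriv I u Du → IsDistribDeriv I v Dv →
      IsDistribDeriv I (fun x => u x * v x) Duv →
      VectorMeasure.Integrable Du (preciseRep I v) ∧
      VectorMeasure.Integrable Dv (preciseRep I u) ∧
      Duv = densityMul (preciseRep I v) Du + densityMul (preciseRep I u) Dv := by
  obtain ⟨hui, μ, hμ⟩ := hu
  obtain ⟨hvi, ν, hν⟩ := hv
  have hu_loc := (hui.mono_set interior_subset).locallyIntegrableOn
  have hv_loc := (hvi.mono_set interior_subset).locallyIntegrableOn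
  obtain ⟨C, hC⟩ := hν.exists_ae_norm_le hI hv_loc
  obtain ⟨-, -, hprod⟩ := hμ.mul hI hu_loc hv_loc hν
  refine ⟨⟨hui.mul_bdd hvi.aestronglyMeasurable hC, _, hprod⟩,
    fun Du Dv Duv hDu hDv hDuv ↦ ?_⟩
  obtain ⟨hv_int, hu_int, hleibniz⟩ := hDu.mul hI hu_loc hv_loc hDv
  exact ⟨hv_int, hu_int, hDuv.unique hleibniz⟩
end

section
/- Let $a<b$ and $c:=(a+b)/2$. Let $g\in C^1([0,\infty),[0,\infty))$ satisfy $g(0)=0$, $g(s)>0$ and $g'(s)>g(s)/s$ for all $s>0$, and extend $g$ by $g(s)=0$ for $s\le 0$. Let $q\in BV([a,b])$ (that is, $q\in L^1([a,b])$ and its distributional derivative is a finite signed Radon measure) be such that $q\ge 0$ a.e., $q\not\equiv 0$, $q(t)=q(a+b-t)$ for a.e. $t\in[a,b]$, and $q$ is non-decreasing on $[a,c]$ (up to a null set). Solutions are understood in the Carathéodory sense: the derivative of the solution is absolutely continuous on $[a,b]$ and the equation holds a.e. Let $u$ be a solution of $u''+q(t)g(u)=0$, $u(a)=0=u(b)$,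 with $u>0$ on $(a,b)$, and let $w$ be a solution of $w''+q(t)g'(u(t))w=0$ on $[a,b]$, not identically zero, with $w(a)\ge 0$ and $w'(a)\ge 0$. Then there exists $\xi\in(a,b)$ such that $w(\xi)=0$, $w>0$ on $(a,\xi)$, $\xi$ is the only zero of $w$ in $(a,b]$, and $w(b)<0$. Moreover: (i) unless $q$ is a.e. equal to a constant and $w'(a)=0$, one has $\xi\in(c,b)$ and $w'<0$ on $[\xi,b]$; (ii) if $q$ is a.e. equal to a constant and $w'(a)=0$, then $\xi=c$, $w'<0$ on $[\xi,b)$ and $w'(b)=0$. -/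
open Set MeasureTheory
open scoped ContDiff

/-- `q ∈ BV([a,b])`: `q` is integrable on `[a,b]` and its distributional derivative on `(a,b)` is a
finite signed Radon measure `μ` (written through its Jordan decomposition `μ = μ⁺ - μ⁻`). -/
def IsBV (a b : ℝ) (q : ℝ → ℝ) : Prop :=
  IntegrableOn q (Icc a b) ∧
  ∃ μ : SignedMeasure ℝ, ∀ φ : ℝ → ℝ, ContDiff ℝ ∞ φ → HasCompactSupport φ →
    tsupport φ ⊆ Ioo a b →
    ∫ t in Icc a b, q t * deriv φ t =
      -((∫ t, φ t ∂μ.toJordanDecomposition.posPart) -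
        ∫ t, φ t ∂μ.toJordanDecomposition.negPart)

/-- The class of `q` modulo null sets is non-decreasing on `[a,c]`: some representative is. -/
def AEMonotoneOn (q : ℝ → ℝ) (a c : ℝ) : Prop :=
  ∃ p : ℝ → ℝ, MonotoneOn p (Icc a c) ∧ ∀ᵐ t ∂(volume.restrict (Icc a c)), q t = p t

/-- `u`, with derivative `u'` on `[a,b]` (one-sided at the endpoints), is a Carathéodory solution of
`u'' + F(t, u) = 0` on `[a,b]`: `u'` is absolutely continuous and the equation holds a.e. -/
def IsCaraSol (a b : ℝ) (F : ℝ → ℝ → ℝ) (u u' : ℝ → ℝ) : Prop :=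
  (∀ t ∈ Icc a b, HasDerivWithinAt u (u' t) (Icc a b) t) ∧
  AbsolutelyContinuousOnInterval u' a b ∧
  ∀ᵐ t ∂(volume.restrict (Icc a b)), HasDerivWithinAt u' (-F t (u t)) (Icc a b) t

/-!
Along the solutions the product `u' w'` has derivative `-q (g(u) w)'`, so that
`F = u' w' + q g(u) w` satisfies `dF = g(u) w dq` as measures: `F` is non-decreasing where `q` is
non-decreasing and `w ≥ 0`, and also where `q` is non-increasing and `w ≤ 0`.

Comparing the energies of `u` and of its reflection `t ↦ u (a + b - t)` gives `u'(c) = 0`, hence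
`u' > 0` on `[a, c)` and `u' < 0` on `(c, b]`. If `w` were positive on `(a, b)`, superlinearity of
`g` would make the Wronskian `u' w - u w'` strictly larger at `b` than at `a`, whereas it is
`u'(a) w(a) ≥ 0` at `a` and `u'(b) w(b) ≤ 0` at `b`; so `w` has a first zero `ξ`, and
`F(ξ) = u'(ξ) w'(ξ)` with `w'(ξ) < 0`.

Since `F(a) = u'(a) w'(a) ≥ 0`, the case `ξ < c` is impossible. If `ξ = c` then `F(a) = F(c) = 0`,
so `F` vanishes on `[a, c]`, which forces `w'(a) = 0` and `dq = 0`. If `ξ > c` then `F(ξ) > 0`,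
while `F ≤ 0` at the first zero of `w'` after `ξ`, so there is none. When `q` is constant and
`w'(a) = 0`, the first integral `F` vanishes identically, and `ξ` and the sign of `w'` are read off
from it.
-/

open scoped Topology

/-! ### Absolutely continuous functions -/

theorem disjoint_uIoc_const_sub {x₁ x₂ y₁ y₂ : ℝ} (c : ℝ)
    (h : Disjoint (uIoc x₁ x₂) (uIoc y₁ y₂)) :
    Disjoint (uIoc (c - x₁) (c - x₂)) (uIoc (c - y₁) (c - y₂)) := by
  simp only [uIoc, Ioc_disjoint_Ioc, min_sub_sub_left, max_sub_sub_left] at h ⊢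
  rw [← sub_le_sub_iff_left c]
  simpa only [sub_sub_cancel, min_sub_sub_left, max_sub_sub_left] using h

theorem absolutelyContinuousOnInterval_comp_const_sub {f : ℝ → ℝ} {a b : ℝ} (c : ℝ)
    (hf : AbsolutelyContinuousOnInterval f a b) :
    AbsolutelyContinuousOnInterval (fun t => f (c - t)) (c - a) (c - b) := by
  rw [absolutelyContinuousOnInterval_iff] at hf ⊢
  intro ε hε
  obtain ⟨δ, hδ, h⟩ := hf ε hε
  refine ⟨δ, hδ, fun E hE hlen => h (E.1, fun i => (c - (E.2 i).1, c - (E.2 i).2)) ⟨?_, ?_⟩ ?_⟩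
  · simpa only [← preimage_const_sub_uIcc, mem_preimage] using hE.1
  · exact fun i hi j hj hij => disjoint_uIoc_const_sub c (hE.2 hi hj hij)
  · simpa only [dist_sub_left] using hlen

theorem ae_restrict_Icc_comp_const_sub {p : ℝ → Prop} {a b : ℝ} (c : ℝ)
    (h : ∀ᵐ t ∂(volume.restrict (Icc a b)), p t) :
    ∀ᵐ t ∂(volume.restrict (Icc (c - b) (c - a))), p (c - t) := by
  have := (Measure.measurePreserving_sub_left volume c).restrict_preimage
    (measurableSet_Icc (a := a) (b := b))
  rw [preimage_const_sub_Icc] at this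
  exact this.quasiMeasurePreserving.ae h

/-- `f` is absolutely continuous on `[a,b]` and `f'` is its derivative almost everywhere there. -/
structure HasACDeriv (f f' : ℝ → ℝ) (a b : ℝ) : Prop where
  absolutelyContinuous : AbsolutelyContinuousOnInterval f a b
  ae_hasDerivWithinAt :
    ∀ᵐ t ∂(volume.restrict (Icc a b)), HasDerivWithinAt f (f' t) (Icc a b) t

namespace HasACDeriv

variable {f f' k k' : ℝ → ℝ} {a b : ℝ}

theorem mono {x y : ℝ} (hf : HasACDeriv f f' a b) (hxy : x ≤ y) (hsub : Icc x y ⊆ Icc a b) :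
    HasACDeriv f f' x y := by
  refine ⟨hf.absolutelyContinuous.mono ?_, ?_⟩
  · rw [uIcc_of_le hxy]
    exact hsub.trans Icc_subset_uIcc
  · filter_upwards [ae_restrict_of_ae_restrict_of_subset hsub hf.ae_hasDerivWithinAt] with t ht
    exact ht.mono hsub

theorem congr_deriv (hf : HasACDeriv f f' a b)
    (h : ∀ᵐ t ∂(volume.restrict (Icc a b)), f' t = k' t) : HasACDeriv f k' a b := by
  refine ⟨hf.absolutelyContinuous, ?_⟩
  filter_upwards [hf.ae_hasDerivWithinAt, h] with t hft ht
  exact ht ▸ hft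

theorem neg (hf : HasACDeriv f f' a b) : HasACDeriv (fun t => -f t) (fun t => -f' t) a b :=
  ⟨hf.absolutelyContinuous.fun_neg, hf.ae_hasDerivWithinAt.mono fun _ ht => ht.neg⟩

theorem add (hf : HasACDeriv f f' a b) (hk : HasACDeriv k k' a b) :
    HasACDeriv (fun t => f t + k t) (fun t => f' t + k' t) a b := by
  refine ⟨hf.absolutelyContinuous.fun_add hk.absolutelyContinuous, ?_⟩
  filter_upwards [hf.ae_hasDerivWithinAt, hk.ae_hasDerivWithinAt] with t hft hkt
  exact hft.add hkt

theorem sub (hf : HasACDeriv f f' a b) (hk : HasACDeriv k k' a b) :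
    HasACDeriv (fun t => f t - k t) (fun t => f' t - k' t) a b := by
  simpa only [sub_eq_add_neg] using hf.add hk.neg

theorem mul (hf : HasACDeriv f f' a b) (hk : HasACDeriv k k' a b) :
    HasACDeriv (fun t => f t * k t) (fun t => f' t * k t + f t * k' t) a b := by
  refine ⟨hf.absolutelyContinuous.fun_mul hk.absolutelyContinuous, ?_⟩
  filter_upwards [hf.ae_hasDerivWithinAt, hk.ae_hasDerivWithinAt] with t hft hkt
  exact hft.mul hkt

theorem const_mul (c : ℝ) (hf : HasACDeriv f f' a b) :
    HasACDeriv (fun t => c * f t) (fun t => c * f' t) a b :=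
  ⟨hf.absolutelyContinuous.const_mul c, hf.ae_hasDerivWithinAt.mono fun _ ht => ht.const_mul c⟩

theorem of_continuousOn (hab : a ≤ b) (hf : ∀ t ∈ Icc a b, HasDerivWithinAt f (f' t) (Icc a b) t)
    (hf' : ContinuousOn f' (Icc a b)) : HasACDeriv f f' a b := by
  refine ⟨?_, ae_restrict_of_forall_mem measurableSet_Icc hf⟩
  obtain ⟨C, hC⟩ := isCompact_Icc.exists_bound_of_continuousOn hf'
  refine LipschitzOnWith.absolutelyContinuousOnInterval (K := C.toNNReal) ?_
  rw [uIcc_of_le hab]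
  refine (convex_Icc a b).lipschitzOnWith_of_nnnorm_hasDerivWithin_le hf fun t ht => ?_
  rw [← NNReal.coe_le_coe, coe_nnnorm]
  exact (hC t ht).trans (Real.le_coe_toNNReal C)

theorem comp_const_sub (c : ℝ) (hf : HasACDeriv f f' a b) :
    HasACDeriv (fun t => f (c - t)) (fun t => -f' (c - t)) (c - b) (c - a) := by
  refine ⟨(absolutelyContinuousOnInterval_comp_const_sub c hf.absolutelyContinuous).symm, ?_⟩
  filter_upwards [ae_restrict_Icc_comp_const_sub c hf.ae_hasDerivWithinAt] with t ht
  have hmaps : MapsTo (fun t => c - t) (Icc (c - b) (c - a)) (Icc a b) := fun s hs =>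
    ⟨le_sub_comm.1 hs.2, sub_le_comm.1 hs.1⟩
  simpa [Function.comp_def] using ht.comp t ((hasDerivWithinAt_id t _).const_sub c) hmaps

theorem continuousOn (hab : a ≤ b) (hf : HasACDeriv f f' a b) : ContinuousOn f (Icc a b) := by
  simpa [uIcc_of_le hab] using hf.absolutelyContinuous.continuousOn

theorem ae_deriv_eq (hab : a ≤ b) (hf : HasACDeriv f f' a b) :
    ∀ᵐ t ∂(volume.restrict (uIoc a b)), deriv f t = f' t := by
  rw [uIoc_of_le hab, ← restrict_Ioo_eq_restrict_Ioc]
  filter_upwards [ae_restrict_of_ae_restrict_of_subset Ioo_subset_Icc_self hf.ae_hasDerivWithinAt,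
    ae_restrict_mem measurableSet_Ioo] with t ht htI
  exact (ht.hasDerivAt (Icc_mem_nhds htI.1 htI.2)).deriv

theorem intervalIntegrable (hab : a ≤ b) (hf : HasACDeriv f f' a b) :
    IntervalIntegrable f' volume a b :=
  hf.absolutelyContinuous.intervalIntegrable_deriv.congr_ae (hf.ae_deriv_eq hab)

theorem integral_eq_sub (hab : a ≤ b) (hf : HasACDeriv f f' a b) :
    ∫ t in a..b, f' t = f b - f a := by
  rw [← hf.absolutelyContinuous.integral_deriv_eq_sub]
  exact (intervalIntegral.integral_congr_ae_restrict (hf.ae_deriv_eq hab)).symm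

theorem monotoneOn (hf : HasACDeriv f f' a b)
    (hnonneg : ∀ᵐ t ∂(volume.restrict (Icc a b)), 0 ≤ f' t) : MonotoneOn f (Icc a b) := by
  intro x hx y hy hxy
  have hsub : Icc x y ⊆ Icc a b := Icc_subset_Icc hx.1 hy.2
  rw [← sub_nonneg, ← (hf.mono hxy hsub).integral_eq_sub hxy]
  exact intervalIntegral.integral_nonneg_of_ae_restrict hxy
    (ae_restrict_of_ae_restrict_of_subset hsub hnonneg)

theorem antitoneOn (hf : HasACDeriv f f' a b)
    (hnonpos : ∀ᵐ t ∂(volume.restrict (Icc a b)), f' t ≤ 0) : AntitoneOn f (Icc a b) := by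
  have := (hf.neg.monotoneOn (hnonpos.mono fun _ ht => neg_nonneg.2 ht)).neg
  simpa only [neg_neg] using this

theorem lt_of_nonneg_of_pos {x y : ℝ} (hf : HasACDeriv f f' a b)
    (hnonneg : ∀ᵐ t ∂(volume.restrict (Icc a b)), 0 ≤ f' t)
    (hx : a ≤ x) (hxy : x < y) (hy : y ≤ b) (hpos : ∀ t ∈ Ioo x y, 0 < f' t) : f a < f b := by
  have hxI : x ∈ Icc a b := ⟨hx, hxy.le.trans hy⟩
  have hyI : y ∈ Icc a b := ⟨hx.trans hxy.le, hy⟩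
  have hmono := hf.monotoneOn hnonneg
  have hfxy := hf.mono hxy.le (Icc_subset_Icc hx hy)
  calc f a ≤ f x := hmono ⟨le_rfl, hx.trans hxI.2⟩ hxI hx
    _ < f y := by
      rw [← sub_pos, ← hfxy.integral_eq_sub hxy.le]
      exact intervalIntegral.intervalIntegral_pos_of_pos_on (hfxy.intervalIntegrable hxy.le) hpos
        hxy
    _ ≤ f b := hmono hyI ⟨hyI.1.trans hy, le_rfl⟩ hy

theorem eq_zero_of_abs_deriv_le {L τ : ℝ} (hf : HasACDeriv f f' a b)
    (hnonneg : ∀ t ∈ Icc a b, 0 ≤ f t)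
    (hle : ∀ᵐ t ∂(volume.restrict (Icc a b)), |f' t| ≤ L * f t) (hτ : τ ∈ Icc a b) (h0 : f τ = 0) :
    ∀ t ∈ Icc a b, f t = 0 := by
  have hexp (c : ℝ) : HasACDeriv (fun t => Real.exp (c * t)) (fun t => Real.exp (c * t) * c) a b :=
    of_continuousOn (hτ.1.trans hτ.2)
      (fun t _ => by simpa using ((hasDerivAt_id t).const_mul c).exp.hasDerivWithinAt)
      (by fun_prop)
  have hanti : AntitoneOn (fun t => f t * Real.exp (-L * t)) (Icc a b) :=
    (hf.mul (hexp (-L))).antitoneOn <| hle.mono fun t ht => by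
      nlinarith [(abs_le.1 ht).2, Real.exp_pos (-L * t)]
  have hmono : MonotoneOn (fun t => f t * Real.exp (L * t)) (Icc a b) :=
    (hf.mul (hexp L)).monotoneOn <| hle.mono fun t ht => by
      nlinarith [(abs_le.1 ht).1, Real.exp_pos (L * t)]
  intro t ht
  refine le_antisymm ?_ (hnonneg t ht)
  rcases le_total τ t with hτt | htτ
  · have := hanti hτ ht hτt
    simp only [h0, zero_mul] at this
    exact nonpos_of_mul_nonpos_left this (Real.exp_pos _)
  · have := hmono ht hτ htτ
    simp only [h0, zero_mul] at this
    exact nonpos_of_mul_nonpos_left this (Real.exp_pos _)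

end HasACDeriv

/-- Bisecting `[x, y]` `n` times divides the total error by `2 ^ n`. -/
theorem monotoneOn_of_le_add_mul_sub_mul_sub {F P : ℝ → ℝ} {s : Set ℝ} [s.OrdConnected] {C : ℝ}
    (hF : ∀ x ∈ s, ∀ y ∈ s, x ≤ y → F x ≤ F y + C * (y - x) * (P y - P x)) : MonotoneOn F s := by
  have hbisect (n : ℕ) : ∀ x ∈ s, ∀ y ∈ s, x ≤ y →
      F x ≤ F y + (1 / 2) ^ n * (C * (y - x) * (P y - P x)) := by
    induction n with
    | zero => simpa using hF
    | succ n ih =>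
      intro x hx y hy hxy
      have hm : (x + y) / 2 ∈ s := Set.Icc_subset s hx hy ⟨by linarith, by linarith⟩
      have hleft := ih x hx _ hm (by linarith)
      have hright := ih _ hm y hy (by linarith)
      rw [pow_succ]
      linear_combination hleft + hright
  intro x hx y hy hxy
  have hlim := (tendsto_pow_atTop_nhds_zero_of_lt_one (r := (1 / 2 : ℝ)) (by norm_num)
    (by norm_num)).mul_const (C * (y - x) * (P y - P x)) |>.const_add (F y)
  simpa using ge_of_tendsto' hlim fun n => hbisect n x hx y hy hxy

namespace HasACDeriv

variable {Φ P h h' : ℝ → ℝ} {a b : ℝ}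

theorem monotoneOn_add_mul_of_monotoneOn (hP : MonotoneOn P (Icc a b))
    (hΦ : HasACDeriv Φ (fun t => -(P t * h' t)) a b) (hh : HasACDeriv h h' a b)
    (hh' : ContinuousOn h' (Icc a b)) (hnonneg : ∀ t ∈ Icc a b, 0 ≤ h t) :
    MonotoneOn (fun t => Φ t + P t * h t) (Icc a b) := by
  obtain ⟨C, hC⟩ := isCompact_Icc.exists_bound_of_continuousOn hh'
  refine monotoneOn_of_le_add_mul_sub_mul_sub (P := P) (C := C) fun x hx y hy hxy => ?_
  have hsub : Icc x y ⊆ Icc a b := Icc_subset_Icc hx.1 hy.2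
  have hid : HasACDeriv (fun t => t) (fun _ => 1) a b :=
    of_continuousOn (hx.1.trans hx.2) (fun t _ => hasDerivWithinAt_id t _) continuousOn_const
  have hmono : MonotoneOn (fun t => Φ t + P y * h t + C * (P y - P x) * t) (Icc x y) := by
    refine (((hΦ.add (hh.const_mul (P y))).add (hid.const_mul _)).mono hxy hsub).monotoneOn <|
      ae_restrict_of_forall_mem measurableSet_Icc fun t ht => ?_
    have hPt : P t ≤ P y := hP (hsub ht) hy ht.2
    have hPt' : P x ≤ P t := hP hx (hsub ht) ht.1
    have hCt := abs_le.1 (hC t (hsub ht))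
    nlinarith
  have hle := hmono ⟨le_rfl, hxy⟩ ⟨hxy, le_rfl⟩ hxy
  have hPh := mul_le_mul_of_nonneg_right (hP hx hy hxy) (hnonneg x hx)
  dsimp only at hle
  linarith

theorem monotoneOn_add_mul_of_antitoneOn (hP : AntitoneOn P (Icc a b))
    (hΦ : HasACDeriv Φ (fun t => -(P t * h' t)) a b) (hh : HasACDeriv h h' a b)
    (hh' : ContinuousOn h' (Icc a b)) (hnonpos : ∀ t ∈ Icc a b, h t ≤ 0) :
    MonotoneOn (fun t => Φ t + P t * h t) (Icc a b) := by
  simpa only [neg_mul_neg] using monotoneOn_add_mul_of_monotoneOn (P := fun t => -P t) hP.neg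
    (by simpa only [neg_mul_neg] using hΦ) hh.neg hh'.neg fun t ht => neg_nonneg.2 (hnonpos t ht)

end HasACDeriv

/-! ### Signs of functions and of their derivatives -/

theorem eventually_lt_nhdsGT_of_hasDerivWithinAt_pos {f : ℝ → ℝ} {d x : ℝ}
    (hf : HasDerivWithinAt f d (Ioi x) x) (hd : 0 < d) : ∀ᶠ t in 𝓝[>] x, f x < f t := by
  have hslope := (hasDerivWithinAt_iff_tendsto_slope' self_notMem_Ioi).1 hf
  filter_upwards [hslope.eventually (lt_mem_nhds hd), self_mem_nhdsWithin] with t ht hxt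
  rw [slope_def_field, div_pos_iff_of_pos_right (sub_pos.2 hxt)] at ht
  exact sub_pos.1 ht

theorem nonpos_of_hasDerivWithinAt_of_forall_Ioo_le {f : ℝ → ℝ} {d x y : ℝ}
    (hf : HasDerivWithinAt f d (Iio y) y) (hxy : x < y) (hle : ∀ t ∈ Ioo x y, f y ≤ f t) :
    d ≤ 0 := by
  refine le_of_tendsto ((hasDerivWithinAt_iff_tendsto_slope' self_notMem_Iio).1 hf) ?_
  filter_upwards [Ioo_mem_nhdsLT hxy] with t ht
  rw [slope_def_field]
  exact div_nonpos_of_nonneg_of_nonpos (sub_nonneg.2 (hle t ht)) (sub_nonpos.2 ht.2.le)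

theorem forall_Icc_nonneg_of_forall_Ioo {f : ℝ → ℝ} {x y : ℝ} (hxy : x < y)
    (hf : ContinuousOn f (Icc x y)) (hnonneg : ∀ t ∈ Ioo x y, 0 ≤ f t) :
    ∀ t ∈ Icc x y, 0 ≤ f t := by
  intro t ht
  rw [← closure_Ioo hxy.ne] at hf ht
  exact le_on_closure hnonneg continuousOn_const hf ht

theorem exists_first_zero {f : ℝ → ℝ} {x s : ℝ} (hxs : x < s) (hf : ContinuousOn f (Icc x s))
    (hpos : ∀ᶠ t in 𝓝[>] x, 0 < f t) (hs : f s ≤ 0) :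
    ∃ ξ ∈ Ioc x s, f ξ = 0 ∧ ∀ t ∈ Ioo x ξ, 0 < f t := by
  obtain ⟨y, hy, hy_pos⟩ := (mem_nhdsGT_iff_exists_mem_Ioc_Ioo_subset hxs).1 hpos
  obtain ⟨y₁, hxy₁, hy₁y⟩ := exists_between hy.1
  have hfy₁ : ContinuousOn f (Icc y₁ s) := hf.mono (Icc_subset_Icc_left hxy₁.le)
  have hclosed : IsClosed (Icc y₁ s ∩ f ⁻¹' {0}) :=
    hfy₁.preimage_isClosed_of_isClosed isClosed_Icc isClosed_singleton
  have hzero {t : ℝ} (ht : y₁ ≤ t) (hts : t ≤ s) (hft : f t ≤ 0) : ∃ z ∈ Icc y₁ t, f z = 0 :=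
    intermediate_value_Icc' ht (hfy₁.mono (Icc_subset_Icc_right hts))
      ⟨hft, (hy_pos ⟨hxy₁, hy₁y⟩).le⟩
  obtain ⟨z, hz, hz0⟩ := hzero (hy₁y.le.trans hy.2) le_rfl hs
  obtain ⟨ξ, ⟨hξ, hξ0⟩, hξ_least⟩ :=
    (isCompact_Icc.of_isClosed_subset hclosed inter_subset_left).exists_isLeast ⟨z, hz, hz0⟩
  refine ⟨ξ, ⟨hxy₁.trans_le hξ.1, hξ.2⟩, hξ0, fun t ht => ?_⟩
  rcases lt_or_ge t y₁ with hty₁ | hy₁t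
  · exact hy_pos ⟨ht.1, hty₁.trans hy₁y⟩
  · by_contra! hft
    obtain ⟨z, hz, hz0⟩ := hzero hy₁t (ht.2.le.trans hξ.2) hft
    exact (hξ_least ⟨⟨hz.1, hz.2.trans (ht.2.le.trans hξ.2)⟩, hz0⟩).not_gt (hz.2.trans_lt ht.2)

theorem forall_Ioc_lt_of_deriv_neg {f f' : ℝ → ℝ} {x y : ℝ}
    (hf : ∀ t ∈ Icc x y, HasDerivWithinAt f (f' t) (Icc x y) t) (hneg : ∀ t ∈ Ioo x y, f' t < 0) :
    ∀ t ∈ Ioc x y, f t < f x := by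
  have hanti : StrictAntiOn f (Icc x y) := by
    refine strictAntiOn_of_hasDerivWithinAt_neg (convex_Icc x y)
      (fun t ht => (hf t ht).continuousWithinAt) (f' := f') ?_ (by rwa [interior_Icc])
    exact fun t ht => (hf t (interior_subset ht)).mono interior_subset
  exact fun t ht => hanti ⟨le_rfl, ht.1.le.trans ht.2⟩ (Ioc_subset_Icc_self ht) ht.1

/-- `f'` can only change sign at a zero, and `f` is still negative at the first such zero. -/
theorem forall_Icc_deriv_neg_of_ne_zero {f f' : ℝ → ℝ} {x y : ℝ}
    (hf : ∀ t ∈ Icc x y, HasDerivWithinAt f (f' t) (Icc x y) t) (hf' : ContinuousOn f' (Icc x y))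
    (hfx : f x = 0) (hfx' : f' x < 0)
    (hne : ∀ η ∈ Ioc x y, (∀ t ∈ Ioc x η, f t < 0) → f' η ≠ 0) : ∀ t ∈ Icc x y, f' t < 0 := by
  intro s hs
  rcases hs.1.eq_or_lt with rfl | hxs
  · exact hfx'
  by_contra! hs0
  have hsub : Icc x s ⊆ Icc x y := Icc_subset_Icc_right hs.2
  have hnear : ∀ᶠ t in 𝓝[>] x, 0 < -f' t := by
    have := ((hf' x ⟨le_rfl, hs.1.trans hs.2⟩).mono hsub).mono_of_mem_nhdsWithin
      (Icc_mem_nhdsGT hxs)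
    exact (this.eventually (gt_mem_nhds hfx')).mono fun t ht => neg_pos.2 ht
  obtain ⟨η, hη, hη0, hηpos⟩ := exists_first_zero hxs (hf'.mono hsub).fun_neg hnear
    (neg_nonpos.2 hs0)
  have hηy : Icc x η ⊆ Icc x y := (Icc_subset_Icc_right hη.2).trans hsub
  refine hne η ⟨hη.1, hη.2.trans hs.2⟩ (fun t ht => ?_) (neg_eq_zero.1 hη0)
  exact hfx ▸ forall_Ioc_lt_of_deriv_neg (fun r hr => (hf r (hηy hr)).mono hηy)
    (fun r hr => neg_pos.1 (hηpos r hr)) t ht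

/-! ### Second order equations -/

theorem HasACDeriv.eq_zero_of_abs_deriv_deriv_le {z z' z'' : ℝ → ℝ} {a b K τ : ℝ}
    (hz : HasACDeriv z z' a b) (hz' : HasACDeriv z' z'' a b)
    (hle : ∀ᵐ t ∂(volume.restrict (Icc a b)), |z'' t| ≤ K * |z t|) (hτ : τ ∈ Icc a b)
    (hτ0 : z τ = 0) (hτ0' : z' τ = 0) : ∀ t ∈ Icc a b, z t = 0 ∧ z' t = 0 := by
  have hsum := ((hz.mul hz).add (hz'.mul hz')).eq_zero_of_abs_deriv_le (L := 1 + |K|) (τ := τ)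
    (fun t _ => add_nonneg (mul_self_nonneg _) (mul_self_nonneg _)) ?_ hτ (by simp [hτ0, hτ0'])
  · intro t ht
    simpa only [mul_self_add_mul_self_eq_zero] using hsum t ht
  filter_upwards [hle] with t ht
  have hbound : |z t + z'' t| ≤ (1 + |K|) * |z t| := by
    refine (abs_add_le _ _).trans ?_
    linarith [mul_le_mul_of_nonneg_right (le_abs_self K) (abs_nonneg (z t))]
  calc |z' t * z t + z t * z' t + (z'' t * z' t + z' t * z'' t)|
      = 2 * |z' t| * |z t + z'' t| := by
        rw [← abs_two, ← abs_mul, ← abs_mul]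
        congr 1
        ring
    _ ≤ 2 * |z' t| * ((1 + |K|) * |z t|) := by gcongr
    _ ≤ (1 + |K|) * (|z t| ^ 2 + |z' t| ^ 2) := by
        linarith [mul_nonneg (by positivity : 0 ≤ 1 + |K|) (sq_nonneg (|z t| - |z' t|))]
    _ = (1 + |K|) * (z t * z t + z' t * z' t) := by rw [sq_abs, sq_abs, sq, sq]

namespace IsCaraSol

section

variable {F : ℝ → ℝ → ℝ} {u u' : ℝ → ℝ} {a b : ℝ}

theorem hasDerivWithinAt (hu : IsCaraSol a b F u u') {t : ℝ} (ht : t ∈ Icc a b) :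
    HasDerivWithinAt u (u' t) (Icc a b) t := hu.1 t ht

theorem hasACDeriv_deriv (hu : IsCaraSol a b F u u') :
    HasACDeriv u' (fun t => -F t (u t)) a b := ⟨hu.2.1, hu.2.2⟩

theorem continuousOn (hu : IsCaraSol a b F u u') : ContinuousOn u (Icc a b) :=
  fun _ ht => (hu.hasDerivWithinAt ht).continuousWithinAt

theorem continuousOn_deriv (hab : a ≤ b) (hu : IsCaraSol a b F u u') :
    ContinuousOn u' (Icc a b) := hu.hasACDeriv_deriv.continuousOn hab

theorem hasACDeriv (hab : a ≤ b) (hu : IsCaraSol a b F u u') : HasACDeriv u u' a b :=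
  .of_continuousOn hab hu.1 (hu.continuousOn_deriv hab)

theorem mono {x y : ℝ} (hu : IsCaraSol a b F u u') (hxy : x ≤ y) (hsub : Icc x y ⊆ Icc a b) :
    IsCaraSol x y F u u' := by
  have hu' := hu.hasACDeriv_deriv.mono hxy hsub
  exact ⟨fun t ht => (hu.hasDerivWithinAt (hsub ht)).mono hsub, hu'.absolutelyContinuous,
    hu'.ae_hasDerivWithinAt⟩

theorem congr_ae {G : ℝ → ℝ → ℝ} (hu : IsCaraSol a b F u u')
    (h : ∀ᵐ t ∂(volume.restrict (Icc a b)), F t (u t) = G t (u t)) : IsCaraSol a b G u u' :=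
  ⟨hu.1, hu.2.1, (hu.hasACDeriv_deriv.congr_deriv (h.mono fun _ ht => congrArg Neg.neg ht)).2⟩

theorem comp_const_sub (c : ℝ) (hu : IsCaraSol a b F u u') :
    IsCaraSol (c - b) (c - a) (fun t => F (c - t)) (fun t => u (c - t)) (fun t => -u' (c - t)) := by
  have hmaps : MapsTo (fun t => c - t) (Icc (c - b) (c - a)) (Icc a b) := fun s hs =>
    ⟨le_sub_comm.1 hs.2, sub_le_comm.1 hs.1⟩
  have hu' := (hu.hasACDeriv_deriv.comp_const_sub c).neg
  refine ⟨fun t ht => ?_, hu'.absolutelyContinuous, by simpa using hu'.ae_hasDerivWithinAt⟩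
  simpa [Function.comp_def] using
    (hu.hasDerivWithinAt (hmaps ht)).comp t ((hasDerivWithinAt_id t _).const_sub c) hmaps

theorem comp_reflect (hu : IsCaraSol a b F u u') :
    IsCaraSol a b (fun t => F (a + b - t)) (fun t => u (a + b - t)) (fun t => -u' (a + b - t)) := by
  simpa only [add_sub_cancel_left, add_sub_cancel_right] using hu.comp_const_sub (a + b)

end

section Autonomous

variable {P g u u' v v' : ℝ → ℝ} {a b : ℝ}

theorem eqOn_of_locallyLipschitz {K τ : ℝ} (hab : a ≤ b) (hg : LocallyLipschitz g)
    (hP : ∀ t ∈ Icc a b, |P t| ≤ K) (hu : IsCaraSol a b (fun t x => P t * g x) u u')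
    (hv : IsCaraSol a b (fun t x => P t * g x) v v') (hτ : τ ∈ Icc a b) (huv : u τ = v τ)
    (huv' : u' τ = v' τ) : ∀ t ∈ Icc a b, u t = v t ∧ u' t = v' t := by
  have hcompact : IsCompact (u '' Icc a b ∪ v '' Icc a b) :=
    (isCompact_Icc.image_of_continuousOn hu.continuousOn).union
      (isCompact_Icc.image_of_continuousOn hv.continuousOn)
  obtain ⟨L, hL⟩ := hg.locallyLipschitzOn.exists_lipschitzOnWith_of_compact hcompact
  have hzero := ((hu.hasACDeriv hab).sub (hv.hasACDeriv hab)).eq_zero_of_abs_deriv_deriv_le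
    (K := K * L) (hu.hasACDeriv_deriv.sub hv.hasACDeriv_deriv)
    (ae_restrict_of_forall_mem measurableSet_Icc fun t ht => ?_) hτ (sub_eq_zero.2 huv)
    (sub_eq_zero.2 huv')
  · simpa only [sub_eq_zero] using hzero
  have hLt : |g (u t) - g (v t)| ≤ L * |u t - v t| :=
    hL.dist_le_mul _ (.inl (mem_image_of_mem u ht)) _ (.inr (mem_image_of_mem v ht))
  calc |-(P t * g (u t)) - -(P t * g (v t))| = |P t| * |g (u t) - g (v t)| := by
        rw [← abs_mul, ← abs_neg]
        congr 1
        ring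
    _ ≤ K * (L * |u t - v t|) :=
        mul_le_mul (hP t ht) hLt (abs_nonneg _) ((abs_nonneg _).trans (hP t ht))
    _ = K * L * |u t - v t| := (mul_assoc _ _ _).symm

/-- The energies `u' ^ 2 + 2 * P * G(u)` of two solutions, with `G' = g`, are compared through
`d(u' ^ 2 - v' ^ 2 + 2 * P * (G(u) - G(v))) = 2 * (G(u) - G(v)) * dP ≥ 0`. -/
theorem sq_deriv_sub_sq_deriv_le (hab : a ≤ b) (hP : AntitoneOn P (Icc a b)) (hg : Continuous g)
    (hg0 : ∀ s, 0 ≤ g s) (hu : IsCaraSol a b (fun t x => P t * g x) u u')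
    (hv : IsCaraSol a b (fun t x => P t * g x) v v') (hle : ∀ t ∈ Icc a b, u t ≤ v t)
    (ha : u a = v a) (hb : u b = v b) : u' a ^ 2 - v' a ^ 2 ≤ u' b ^ 2 - v' b ^ 2 := by
  set G : ℝ → ℝ := fun s => ∫ x in (0 : ℝ)..s, g x
  have hG (s : ℝ) : HasDerivAt G (g s) s := (hg.integral_hasStrictDerivAt 0 s).hasDerivAt
  have hG_mono : Monotone G := monotone_of_hasDerivAt_nonneg hG hg0
  have hcont {x x' : ℝ → ℝ} (hx : IsCaraSol a b (fun t x => P t * g x) x x') :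
      ContinuousOn (fun t => g (x t) * x' t) (Icc a b) :=
    (hg.comp_continuousOn hx.continuousOn).mul (hx.continuousOn_deriv hab)
  have hGcomp {x x' : ℝ → ℝ} (hx : IsCaraSol a b (fun t x => P t * g x) x x') :
      HasACDeriv (fun t => G (x t)) (fun t => g (x t) * x' t) a b :=
    .of_continuousOn hab (fun t ht => (hG _).comp_hasDerivWithinAt t (hx.hasDerivWithinAt ht))
      (hcont hx)
  have hΦ : HasACDeriv (fun t => u' t * u' t - v' t * v' t)
      (fun t => -(P t * (2 * (g (u t) * u' t - g (v t) * v' t)))) a b :=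
    ((hu.hasACDeriv_deriv.mul hu.hasACDeriv_deriv).sub
      (hv.hasACDeriv_deriv.mul hv.hasACDeriv_deriv)).congr_deriv (ae_of_all _ fun t => by ring)
  have hmono := HasACDeriv.monotoneOn_add_mul_of_antitoneOn hP hΦ
    (((hGcomp hu).sub (hGcomp hv)).const_mul 2) (((hcont hu).sub (hcont hv)).const_mul 2)
    (fun t ht => by linarith [hG_mono (hle t ht)])
  simpa [ha, hb, sq] using hmono ⟨le_rfl, hab⟩ ⟨hab, le_rfl⟩ hab

theorem antitoneOn_deriv (hP : ∀ t ∈ Icc a b, 0 ≤ P t) (hg0 : ∀ s, 0 ≤ g s)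
    (hu : IsCaraSol a b (fun t x => P t * g x) u u') : AntitoneOn u' (Icc a b) :=
  hu.hasACDeriv_deriv.antitoneOn <| ae_restrict_of_forall_mem measurableSet_Icc fun t ht =>
    neg_nonpos.2 (mul_nonneg (hP t ht) (hg0 _))

end Autonomous

section Linear

variable {Q w w' : ℝ → ℝ} {a b K : ℝ}

theorem deriv_ne_zero_of_eq_zero (hab : a ≤ b) (hw : IsCaraSol a b (fun t x => Q t * x) w w')
    (hQ : ∀ t ∈ Icc a b, |Q t| ≤ K) (hne : ∃ t ∈ Icc a b, w t ≠ 0) {τ : ℝ} (hτ : τ ∈ Icc a b)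
    (hτ0 : w τ = 0) : w' τ ≠ 0 := by
  intro hτ0'
  obtain ⟨s, hs, hs0⟩ := hne
  refine hs0 ((hw.hasACDeriv hab).eq_zero_of_abs_deriv_deriv_le hw.hasACDeriv_deriv
    (K := K) (ae_restrict_of_forall_mem measurableSet_Icc fun t ht => ?_) hτ hτ0 hτ0' s hs).1
  rw [abs_neg, abs_mul]
  exact mul_le_mul_of_nonneg_right (hQ t ht) (abs_nonneg _)

theorem eventually_pos_nhdsGT (hab : a < b) (hw : IsCaraSol a b (fun t x => Q t * x) w w')
    (hQ : ∀ t ∈ Icc a b, |Q t| ≤ K) (hne : ∃ t ∈ Icc a b, w t ≠ 0) (hwa : 0 ≤ w a)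
    (hwa' : 0 ≤ w' a) : ∀ᶠ t in 𝓝[>] a, 0 < w t := by
  have ha : a ∈ Icc a b := ⟨le_rfl, hab.le⟩
  rcases hwa.eq_or_lt with hwa0 | hwa_pos
  · have hpos : 0 < w' a :=
      lt_of_le_of_ne hwa' (hw.deriv_ne_zero_of_eq_zero hab.le hQ hne ha hwa0.symm).symm
    simpa only [← hwa0] using eventually_lt_nhdsGT_of_hasDerivWithinAt_pos
      ((hw.hasDerivWithinAt ha).mono_of_mem_nhdsWithin (Icc_mem_nhdsGT hab)) hpos
  · exact ((hw.continuousOn a ha).mono_of_mem_nhdsWithin (Icc_mem_nhdsGT hab)).eventually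
      (lt_mem_nhds hwa_pos)

theorem exists_first_zero_deriv_neg (hab : a < b) (hw : IsCaraSol a b (fun t x => Q t * x) w w')
    (hQ : ∀ t ∈ Icc a b, |Q t| ≤ K) (hne : ∃ t ∈ Icc a b, w t ≠ 0) (hwa : 0 ≤ w a)
    (hwa' : 0 ≤ w' a) (hnonpos : ∃ s ∈ Ioo a b, w s ≤ 0) :
    ∃ ξ ∈ Ioo a b, w ξ = 0 ∧ (∀ t ∈ Ioo a ξ, 0 < w t) ∧ w' ξ < 0 := by
  obtain ⟨s, hs, hws⟩ := hnonpos
  obtain ⟨ξ, hξ, hξ0, hpos⟩ := exists_first_zero hs.1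
    (hw.continuousOn.mono (Icc_subset_Icc_right hs.2.le))
    (hw.eventually_pos_nhdsGT hab hQ hne hwa hwa') hws
  have hξI : ξ ∈ Icc a b := ⟨hξ.1.le, hξ.2.trans hs.2.le⟩
  have hξb : ξ < b := hξ.2.trans_lt hs.2
  refine ⟨ξ, ⟨hξ.1, hξb⟩, hξ0, hpos, lt_of_le_of_ne ?_
    (hw.deriv_ne_zero_of_eq_zero hab.le hQ hne hξI hξ0)⟩
  refine nonpos_of_hasDerivWithinAt_of_forall_Ioo_le ((hw.hasDerivWithinAt
    hξI).mono_of_mem_nhdsWithin (Icc_mem_nhdsLT_of_mem ⟨hξ.1, hξb.le⟩)) hξ.1 fun t ht => ?_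
  exact hξ0 ▸ (hpos t ht).le

end Linear

end IsCaraSol

/-! ### Symmetric unimodal weights -/

/-- A weight on `[a,b]` that is nonnegative, symmetric about the midpoint, non-decreasing up to the
midpoint and not almost everywhere zero. It is the regular representative of the coefficient `q`:
all conditions but the last hold everywhere rather than almost everywhere. -/
structure IsSymmUnimodal (P : ℝ → ℝ) (a b : ℝ) : Prop where
  nonneg : ∀ t ∈ Icc a b, 0 ≤ P t
  monotoneOn : MonotoneOn P (Icc a ((a + b) / 2))
  symm : ∀ t ∈ Icc a b, P (a + b - t) = P t
  ne_zero : ¬ ∀ᵐ t ∂(volume.restrict (Icc a b)), P t = 0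

namespace IsSymmUnimodal

variable {P : ℝ → ℝ} {a b : ℝ}

theorem antitoneOn (hP : IsSymmUnimodal P a b) (hab : a ≤ b) :
    AntitoneOn P (Icc ((a + b) / 2) b) := by
  intro x hx y hy hxy
  rw [← hP.symm x ⟨by linarith [hx.1], hx.2⟩, ← hP.symm y ⟨by linarith [hy.1], hy.2⟩]
  exact hP.monotoneOn ⟨by linarith [hy.2], by linarith [hy.1]⟩
    ⟨by linarith [hx.2], by linarith [hx.1]⟩ (by linarith)

theorem abs_le_mid (hP : IsSymmUnimodal P a b) {t : ℝ} (ht : t ∈ Icc a b) :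
    |P t| ≤ P ((a + b) / 2) := by
  have hab : a ≤ b := ht.1.trans ht.2
  rw [abs_of_nonneg (hP.nonneg t ht)]
  rcases le_total t ((a + b) / 2) with htc | hct
  · exact hP.monotoneOn ⟨ht.1, htc⟩ ⟨by linarith, le_rfl⟩ htc
  · exact hP.antitoneOn hab ⟨le_rfl, by linarith⟩ ⟨hct, ht.2⟩ hct

theorem ae_eq_of_forall_Ioo (hP : IsSymmUnimodal P a b) {k : ℝ}
    (h : ∀ t ∈ Ioo a ((a + b) / 2), P t = k) :
    ∀ᵐ t ∂(volume.restrict (Icc a b)), P t = k := by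
  rw [← restrict_Ioo_eq_restrict_Icc]
  filter_upwards [ae_restrict_mem measurableSet_Ioo,
    Measure.ae_ne (volume.restrict (Ioo a b)) ((a + b) / 2)] with t ht htc
  rcases lt_or_gt_of_ne htc with hlt | hgt
  · exact h t ⟨ht.1, hlt⟩
  · rw [← hP.symm t (Ioo_subset_Icc_self ht)]
    exact h _ ⟨by linarith [ht.2], by linarith⟩

theorem exists_pos (hP : IsSymmUnimodal P a b) (hab : a < b) :
    ∃ x ∈ Ioo a ((a + b) / 2), ∀ t ∈ Icc x ((a + b) / 2), 0 < P t := by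
  by_contra! hno
  refine hP.ne_zero (hP.ae_eq_of_forall_Ioo fun t ht => ?_)
  obtain ⟨s, hs, hPs⟩ := hno t ht
  refine le_antisymm ((hP.monotoneOn ⟨ht.1.le, ht.2.le⟩ ⟨ht.1.le.trans hs.1, hs.2⟩ hs.1).trans hPs)
    (hP.nonneg t ⟨ht.1.le, by linarith [ht.2]⟩)

theorem exists_ae_eq_const_of_antitoneOn (hP : IsSymmUnimodal P a b)
    (hanti : AntitoneOn P (Ioo a ((a + b) / 2))) :
    ∃ k, ∀ᵐ t ∂(volume.restrict (Icc a b)), P t = k := by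
  rcases (Ioo a ((a + b) / 2)).eq_empty_or_nonempty with hempty | ⟨m, hm⟩
  · exact ⟨0, hP.ae_eq_of_forall_Ioo fun t ht => absurd ht (hempty ▸ notMem_empty t)⟩
  · refine ⟨P m, hP.ae_eq_of_forall_Ioo fun t ht => ?_⟩
    have hmono : MonotoneOn P (Ioo a ((a + b) / 2)) := hP.monotoneOn.mono Ioo_subset_Icc_self
    rcases le_total t m with htm | hmt
    · exact le_antisymm (hmono ht hm htm) (hanti ht hm htm)
    · exact le_antisymm (hanti hm ht hmt) (hmono hm ht hmt)

end IsSymmUnimodal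

theorem exists_isSymmUnimodal_ae_eq {q : ℝ → ℝ} {a b : ℝ}
    (hq_nonneg : ∀ᵐ t ∂(volume.restrict (Icc a b)), 0 ≤ q t)
    (hq_ne : ¬ ∀ᵐ t ∂(volume.restrict (Icc a b)), q t = 0)
    (hq_symm : ∀ᵐ t ∂(volume.restrict (Icc a b)), q t = q (a + b - t))
    (hq_mono : AEMonotoneOn q a ((a + b) / 2)) :
    ∃ P, IsSymmUnimodal P a b ∧ ∀ᵐ t ∂(volume.restrict (Icc a b)), q t = P t := by
  obtain ⟨p, hp, hqp⟩ := hq_mono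
  set c := (a + b) / 2 with hc
  let m (t : ℝ) : ℝ := min t (a + b - t)
  have hm_symm (t : ℝ) : m (a + b - t) = m t := by simp [m, min_comm]
  have hm_left {t : ℝ} (ht : t ≤ c) : m t = t := min_eq_left (by linarith)
  have hqp_right : ∀ᵐ t ∂(volume.restrict (Icc c b)), q (a + b - t) = p (a + b - t) := by
    have := ae_restrict_Icc_comp_const_sub (a + b) hqp
    rwa [add_sub_cancel_left, show a + b - c = c by linarith] at this
  have hq : ∀ᵐ t ∂(volume.restrict (Icc a b)), q t = max (p (m t)) 0 := by
    rw [ae_restrict_iff' measurableSet_Icc] at hq_nonneg hq_symm hqp hqp_right ⊢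
    filter_upwards [hq_nonneg, hq_symm, hqp, hqp_right] with t hq0 hsymm hleft hright ht
    have hqm : q t = p (m t) := by
      rcases le_total t c with htc | hct
      · rw [hm_left htc, hleft ⟨ht.1, htc⟩]
      · rw [← hm_symm, hm_left (by linarith), hsymm ht, hright ⟨hct, ht.2⟩]
    rw [← hqm, max_eq_left (hq0 ht)]
  refine ⟨fun t => max (p (m t)) 0, ⟨fun t _ => le_max_right _ _, fun x hx y hy hxy => ?_,
    fun t _ => by simp only [hm_symm], fun h0 => hq_ne ?_⟩, hq⟩
  · simp only [hm_left hx.2, hm_left hy.2]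
    exact max_le_max_right 0 (hp hx hy hxy)
  · filter_upwards [hq, h0] with t hqt ht
    rw [hqt, ht]

/-! ### Superlinear nonlinearities -/

/-- The class of nonlinearities satisfying (g₊) and (g_s); the slope condition is strict
superlinearity, `g s / s` being increasing. -/
structure IsSuperlinear (g : ℝ → ℝ) : Prop where
  contDiffOn : ContDiffOn ℝ 1 g (Ici 0)
  pos : ∀ s > 0, 0 < g s
  eq_zero_of_nonpos : ∀ s ≤ 0, g s = 0
  div_lt_derivWithin : ∀ s > 0, g s / s < derivWithin g (Ici 0) s

namespace IsSuperlinear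

variable {g : ℝ → ℝ}

theorem nonneg (hg : IsSuperlinear g) (s : ℝ) : 0 ≤ g s :=
  (le_or_gt s 0).elim (fun hs => (hg.eq_zero_of_nonpos s hs).ge) fun hs => (hg.pos s hs).le

theorem map_zero (hg : IsSuperlinear g) : g 0 = 0 := hg.eq_zero_of_nonpos 0 le_rfl

theorem locallyLipschitz (hg : IsSuperlinear g) : LocallyLipschitz g := by
  have hcomp : g = fun s => g (max s 0) := by
    funext s
    rcases le_total s 0 with hs | hs
    · rw [max_eq_right hs, hg.eq_zero_of_nonpos s hs, hg.map_zero]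
    · rw [max_eq_left hs]
  have hmax : LipschitzWith 1 fun s : ℝ => max s 0 := LipschitzWith.id.max_const 0
  intro s
  obtain ⟨K, T, hT, hK⟩ := hg.contDiffOn.locallyLipschitzOn (convex_Ici 0) (le_max_right s 0)
  refine ⟨K * 1, (fun s => max s 0) ⁻¹' T, ?_, ?_⟩
  · exact tendsto_nhdsWithin_iff.2 ⟨hmax.continuous.tendsto s, .of_forall fun s => le_max_right s 0⟩
      |>.eventually_mem hT
  · rw [hcomp]
    exact hK.comp hmax.lipschitzOnWith (mapsTo_preimage _ _)

theorem hasDerivWithinAt (hg : IsSuperlinear g) {s : ℝ} (hs : 0 ≤ s) :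
    HasDerivWithinAt g (derivWithin g (Ici 0) s) (Ici 0) s :=
  (hg.contDiffOn.differentiableOn one_ne_zero s hs).hasDerivWithinAt

theorem continuousOn_derivWithin (hg : IsSuperlinear g) :
    ContinuousOn (derivWithin g (Ici 0)) (Ici 0) :=
  hg.contDiffOn.continuousOn_derivWithin (uniqueDiffOn_Ici 0) le_rfl

theorem lt_derivWithin_mul (hg : IsSuperlinear g) {s : ℝ} (hs : 0 < s) :
    g s < derivWithin g (Ici 0) s * s := (div_lt_iff₀ hs).1 (hg.div_lt_derivWithin s hs)

end IsSuperlinear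

/-! ### Positive solutions of the Dirichlet problem -/

namespace IsCaraSol

theorem eqOn_of_le_of_sq_deriv_le {P g u u' v v' : ℝ → ℝ} {x y : ℝ} (hxy : x < y)
    (hP : AntitoneOn P (Icc x y)) (hP0 : ∀ t ∈ Icc x y, 0 ≤ P t) (hg : LocallyLipschitz g)
    (hg0 : ∀ s, 0 ≤ g s) (hu : IsCaraSol x y (fun t s => P t * g s) u u')
    (hv : IsCaraSol x y (fun t s => P t * g s) v v') (hle : ∀ t ∈ Icc x y, u t ≤ v t)
    (hx : u x = v x) (hy : u y = v y) (hux : u' x ≤ 0) (hsq : v' x ^ 2 ≤ u' x ^ 2) :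
    ∀ t ∈ Icc x y, u t = v t ∧ u' t = v' t := by
  have hxI : x ∈ Icc x y := ⟨le_rfl, hxy.le⟩
  have hyI : y ∈ Icc x y := ⟨hxy.le, le_rfl⟩
  have henergy := hu.sq_deriv_sub_sq_deriv_le hxy.le hP hg.continuous hg0 hv hle hx hy
  have huy : u' y ≤ u' x := hu.antitoneOn_deriv hP0 hg0 hxI hyI hxy.le
  have hvuy : v' y - u' y ≤ 0 :=
    nonpos_of_hasDerivWithinAt_of_forall_Ioo_le (((hv.hasDerivWithinAt hyI).sub
      (hu.hasDerivWithinAt hyI)).mono_of_mem_nhdsWithin (Icc_mem_nhdsLT hxy)) hxy fun t ht => by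
        simpa [hy] using hle t (Ioo_subset_Icc_self ht)
  have heq : u' y = v' y := by nlinarith
  exact eqOn_of_locallyLipschitz hxy.le hg (K := P x)
    (fun t ht => (abs_of_nonneg (hP0 t ht)).trans_le (hP hxI ht ht.1)) hu hv hyI hy heq

end IsCaraSol

/-- `u`, with derivative `u'`, is a positive solution of the Dirichlet problem for
`u'' + P(t) g(u) = 0` on `[a,b]`. -/
structure IsPositiveDirichletSol (P g u u' : ℝ → ℝ) (a b : ℝ) : Prop where
  isCaraSol : IsCaraSol a b (fun t x => P t * g x) u u'
  left_eq_zero : u a = 0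
  right_eq_zero : u b = 0
  pos : ∀ t ∈ Ioo a b, 0 < u t

namespace IsPositiveDirichletSol

variable {P g u u' : ℝ → ℝ} {a b : ℝ}

theorem nonneg (hab : a < b) (hu : IsPositiveDirichletSol P g u u' a b) :
    ∀ t ∈ Icc a b, 0 ≤ u t :=
  forall_Icc_nonneg_of_forall_Ioo hab hu.isCaraSol.continuousOn fun t ht => (hu.pos t ht).le

theorem comp_reflect (hP : ∀ t ∈ Icc a b, P (a + b - t) = P t)
    (hu : IsPositiveDirichletSol P g u u' a b) :
    IsPositiveDirichletSol P g (fun t => u (a + b - t)) (fun t => -u' (a + b - t)) a b where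
  isCaraSol := hu.isCaraSol.comp_reflect.congr_ae <|
    ae_restrict_of_forall_mem measurableSet_Icc fun t ht => by rw [hP t ht]
  left_eq_zero := by simpa using hu.right_eq_zero
  right_eq_zero := by simpa using hu.left_eq_zero
  pos t ht := hu.pos _ ⟨by linarith [ht.2], by linarith [ht.1]⟩

theorem deriv_mid_nonneg (hab : a < b) (hP : IsSymmUnimodal P a b) (hg : LocallyLipschitz g)
    (hg0 : ∀ s, 0 ≤ g s) (hu : IsPositiveDirichletSol P g u u' a b) :
    0 ≤ u' ((a + b) / 2) := by
  by_contra! hneg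
  set c := (a + b) / 2 with hc
  have hac : a < c := by linarith
  have hcb : c < b := by linarith
  have hcc : a + b - c = c := by linarith
  have hv := hu.comp_reflect hP.symm
  have hsub {y : ℝ} (hyb : y ≤ b) : Icc c y ⊆ Icc a b := Icc_subset_Icc hac.le hyb
  have hdiff : ∀ t ∈ Icc c b, HasDerivWithinAt (fun t => u (a + b - t) - u t)
      (-u' (a + b - t) - u' t) (Icc c b) t := fun t ht =>
    ((hv.isCaraSol.hasDerivWithinAt (hsub le_rfl ht)).sub
      (hu.isCaraSol.hasDerivWithinAt (hsub le_rfl ht))).mono (hsub le_rfl)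
  have hnear : ∀ᶠ t in 𝓝[>] c, 0 < u (a + b - t) - u t := by
    simpa [hcc] using eventually_lt_nhdsGT_of_hasDerivWithinAt_pos
      ((hdiff c ⟨le_rfl, hcb.le⟩).mono_of_mem_nhdsWithin (Icc_mem_nhdsGT hcb))
      (by rw [hcc]; linarith)
  obtain ⟨σ, hσ, hσ0, hσ_pos⟩ := exists_first_zero hcb
    (fun t ht => (hdiff t ht).continuousWithinAt) hnear
    (by simp [hu.left_eq_zero, hu.right_eq_zero])
  have hle : ∀ t ∈ Icc c σ, 0 ≤ u (a + b - t) - u t :=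
    forall_Icc_nonneg_of_forall_Ioo hσ.1
      (fun t ht => ((hdiff t ⟨ht.1, ht.2.trans hσ.2⟩).continuousWithinAt).mono
        (Icc_subset_Icc_right hσ.2)) fun t ht => (hσ_pos t ht).le
  have heq := IsCaraSol.eqOn_of_le_of_sq_deriv_le hσ.1
    ((hP.antitoneOn hab.le).mono (Icc_subset_Icc_right hσ.2))
    (fun t ht => hP.nonneg t (hsub hσ.2 ht)) hg hg0 (hu.isCaraSol.mono hσ.1.le (hsub hσ.2))
    (hv.isCaraSol.mono hσ.1.le (hsub hσ.2)) (fun t ht => sub_nonneg.1 (hle t ht)) (by rw [hcc])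
    (sub_eq_zero.1 hσ0).symm hneg.le (by rw [hcc, neg_sq])
  have hcσ := (heq c ⟨le_rfl, hσ.1.le⟩).2
  rw [hcc] at hcσ
  linarith

theorem deriv_mid_eq_zero (hab : a < b) (hP : IsSymmUnimodal P a b) (hg : LocallyLipschitz g)
    (hg0 : ∀ s, 0 ≤ g s) (hu : IsPositiveDirichletSol P g u u' a b) :
    u' ((a + b) / 2) = 0 := by
  have hv := (hu.comp_reflect hP.symm).deriv_mid_nonneg hab hP hg hg0
  rw [show a + b - (a + b) / 2 = (a + b) / 2 by ring, neg_nonneg] at hv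
  exact le_antisymm hv (hu.deriv_mid_nonneg hab hP hg hg0)

theorem deriv_pos_of_lt_mid (hab : a < b) (hP : IsSymmUnimodal P a b) (hg : IsSuperlinear g)
    (hu : IsPositiveDirichletSol P g u u' a b) : ∀ t ∈ Ico a ((a + b) / 2), 0 < u' t := by
  intro t ht
  obtain ⟨x, hx, hPx⟩ := hP.exists_pos hab
  have hcb : (a + b) / 2 < b := by linarith
  have hsub : Icc t ((a + b) / 2) ⊆ Icc a b := Icc_subset_Icc ht.1 hcb.le
  have hlt := (hu.isCaraSol.hasACDeriv_deriv.neg.mono ht.2.le hsub).lt_of_nonneg_of_pos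
    (ae_restrict_of_forall_mem measurableSet_Icc fun s hs => by
      rw [neg_neg]
      exact mul_nonneg (hP.nonneg s (hsub hs)) (hg.nonneg _))
    (le_max_left t x) (max_lt ht.2 hx.2) le_rfl fun s hs => by
      have hxs : x < s := (le_max_right t x).trans_lt hs.1
      rw [neg_neg]
      exact mul_pos (hPx s ⟨hxs.le, hs.2.le⟩)
        (hg.pos _ (hu.pos s ⟨hx.1.trans hxs, hs.2.trans hcb⟩))
  rw [hu.deriv_mid_eq_zero hab hP hg.locallyLipschitz hg.nonneg] at hlt
  linarith

theorem deriv_neg_of_mid_lt (hab : a < b) (hP : IsSymmUnimodal P a b) (hg : IsSuperlinear g)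
    (hu : IsPositiveDirichletSol P g u u' a b) : ∀ t ∈ Ioc ((a + b) / 2) b, u' t < 0 := by
  intro t ht
  have hv := (hu.comp_reflect hP.symm).deriv_pos_of_lt_mid hab hP hg (a + b - t)
    ⟨by linarith [ht.2], by linarith [ht.1]⟩
  simpa using hv

end IsPositiveDirichletSol

/-! ### The linearized equation -/

/-- `w`, with derivative `w'`, solves on `[a,b]` the linearization `w'' + P(t) g'(u(t)) w = 0` of
`u'' + P(t) g(u) = 0` at `u ≥ 0`; the derivative of `g` at `0` is one-sided. -/
abbrev IsLinearizedSol (P g u w w' : ℝ → ℝ) (a b : ℝ) : Prop :=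
  IsCaraSol a b (fun t x => P t * derivWithin g (Ici 0) (u t) * x) w w'

section Product

variable {F G : ℝ → ℝ → ℝ} {P g u u' w w' : ℝ → ℝ} {a b : ℝ}

theorem IsCaraSol.continuousOn_derivWithin_comp (hg : IsSuperlinear g)
    (hu : IsCaraSol a b F u u') (hu0 : ∀ t ∈ Icc a b, 0 ≤ u t) :
    ContinuousOn (fun t => derivWithin g (Ici 0) (u t)) (Icc a b) :=
  hg.continuousOn_derivWithin.comp hu.continuousOn hu0

theorem IsCaraSol.continuousOn_deriv_comp_mul (hab : a ≤ b) (hg : IsSuperlinear g)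
    (hu : IsCaraSol a b F u u') (hu0 : ∀ t ∈ Icc a b, 0 ≤ u t) (hw : IsCaraSol a b G w w') :
    ContinuousOn (fun t => derivWithin g (Ici 0) (u t) * u' t * w t + g (u t) * w' t)
      (Icc a b) :=
  (((hu.continuousOn_derivWithin_comp hg hu0).mul (hu.continuousOn_deriv hab)).mul
    hw.continuousOn).add ((hg.locallyLipschitz.continuous.comp_continuousOn
      hu.continuousOn).mul (hw.continuousOn_deriv hab))

theorem IsCaraSol.hasACDeriv_comp_mul (hab : a ≤ b) (hg : IsSuperlinear g)
    (hu : IsCaraSol a b F u u') (hu0 : ∀ t ∈ Icc a b, 0 ≤ u t) (hw : IsCaraSol a b G w w') :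
    HasACDeriv (fun t => g (u t) * w t)
      (fun t => derivWithin g (Ici 0) (u t) * u' t * w t + g (u t) * w' t) a b :=
  .of_continuousOn hab (fun t ht => ((hg.hasDerivWithinAt (hu0 t ht)).comp t
    (hu.hasDerivWithinAt ht) hu0).mul (hw.hasDerivWithinAt ht))
    (hu.continuousOn_deriv_comp_mul hab hg hu0 hw)

theorem IsCaraSol.hasACDeriv_deriv_mul_deriv (hu : IsCaraSol a b (fun t x => P t * g x) u u')
    (hw : IsLinearizedSol P g u w w' a b) :
    HasACDeriv (fun t => u' t * w' t)
      (fun t => -(P t * (derivWithin g (Ici 0) (u t) * u' t * w t + g (u t) * w' t))) a b :=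
  (hu.hasACDeriv_deriv.mul hw.hasACDeriv_deriv).congr_deriv (ae_of_all _ fun t => by ring)

end Product

/-- The quantity `u' w' + P g(u) w`, which is a first integral of the linearized equation when the
weight `P` is constant. -/
def firstIntegral (P g u u' w w' : ℝ → ℝ) (t : ℝ) : ℝ := u' t * w' t + P t * (g (u t) * w t)

namespace IsPositiveDirichletSol

variable {P g u u' w w' : ℝ → ℝ} {a b : ℝ}

theorem exists_nonpos_of_isLinearizedSol (hab : a < b) (hP : IsSymmUnimodal P a b)
    (hg : IsSuperlinear g) (hu : IsPositiveDirichletSol P g u u' a b)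
    (hw : IsLinearizedSol P g u w w' a b) : ∃ s ∈ Ioo a b, w s ≤ 0 := by
  by_contra! hpos
  have hw0 := forall_Icc_nonneg_of_forall_Ioo hab hw.continuousOn fun t ht => (hpos t ht).le
  have hle : ∀ t ∈ Icc a b, g (u t) ≤ derivWithin g (Ici 0) (u t) * u t := fun t ht => by
    rcases (hu.nonneg hab t ht).eq_or_lt with h0 | hut
    · rw [← h0, hg.map_zero, mul_zero]
    · exact (hg.lt_derivWithin_mul hut).le
  have hwronskian : HasACDeriv (fun t => u' t * w t - u t * w' t)
      (fun t => P t * (derivWithin g (Ici 0) (u t) * u t - g (u t)) * w t) a b :=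
    ((hu.isCaraSol.hasACDeriv_deriv.mul (hw.hasACDeriv hab.le)).sub
      ((hu.isCaraSol.hasACDeriv hab.le).mul hw.hasACDeriv_deriv)).congr_deriv
        (ae_of_all _ fun t => by ring)
  obtain ⟨x, hx, hPx⟩ := hP.exists_pos hab
  have hlt := hwronskian.lt_of_nonneg_of_pos
    (ae_restrict_of_forall_mem measurableSet_Icc fun t ht =>
      mul_nonneg (mul_nonneg (hP.nonneg t ht) (sub_nonneg.2 (hle t ht))) (hw0 t ht))
    hx.1.le hx.2 (by linarith) fun t ht => by
      have htI : t ∈ Ioo a b := ⟨hx.1.trans ht.1, by linarith [ht.2]⟩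
      exact mul_pos (mul_pos (hPx t (Ioo_subset_Icc_self ht))
        (sub_pos.2 (hg.lt_derivWithin_mul (hu.pos t htI)))) (hpos t htI)
  have hua' : 0 < u' a := hu.deriv_pos_of_lt_mid hab hP hg a ⟨le_rfl, by linarith⟩
  have hub' : u' b < 0 := hu.deriv_neg_of_mid_lt hab hP hg b ⟨by linarith, le_rfl⟩
  simp only [hu.left_eq_zero, hu.right_eq_zero, zero_mul, sub_zero] at hlt
  linarith [mul_nonneg hua'.le (hw0 a ⟨le_rfl, hab.le⟩),
    mul_nonpos_of_nonpos_of_nonneg hub'.le (hw0 b ⟨hab.le, le_rfl⟩)]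

theorem exists_first_zero_of_isLinearizedSol (hab : a < b) (hP : IsSymmUnimodal P a b)
    (hg : IsSuperlinear g) (hu : IsPositiveDirichletSol P g u u' a b)
    (hw : IsLinearizedSol P g u w w' a b) (hne : ∃ t ∈ Icc a b, w t ≠ 0) (hwa : 0 ≤ w a)
    (hwa' : 0 ≤ w' a) : ∃ ξ ∈ Ioo a b, w ξ = 0 ∧ (∀ t ∈ Ioo a ξ, 0 < w t) ∧ w' ξ < 0 := by
  obtain ⟨C, hC⟩ := isCompact_Icc.exists_bound_of_continuousOn
    (hu.isCaraSol.continuousOn_derivWithin_comp hg (hu.nonneg hab))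
  refine hw.exists_first_zero_deriv_neg hab (K := P ((a + b) / 2) * C) (fun t ht => ?_) hne hwa hwa'
    (hu.exists_nonpos_of_isLinearizedSol hab hP hg hw)
  rw [abs_mul]
  exact mul_le_mul (hP.abs_le_mid ht) (hC t ht) (abs_nonneg _)
    ((abs_nonneg _).trans (hP.abs_le_mid ht))

theorem firstIntegral_left (hg0 : g 0 = 0) (hu : IsPositiveDirichletSol P g u u' a b)
    (R w w' : ℝ → ℝ) : firstIntegral R g u u' w w' a = u' a * w' a := by
  simp [firstIntegral, hu.left_eq_zero, hg0]

theorem firstIntegral_right (hg0 : g 0 = 0) (hu : IsPositiveDirichletSol P g u u' a b)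
    (R w w' : ℝ → ℝ) : firstIntegral R g u u' w w' b = u' b * w' b := by
  simp [firstIntegral, hu.right_eq_zero, hg0]

theorem firstIntegral_add_le (hab : a < b) (hP : IsSymmUnimodal P a b) (hg : IsSuperlinear g)
    (hu : IsPositiveDirichletSol P g u u' a b) (hw : IsLinearizedSol P g u w w' a b)
    {x y m : ℝ} (hax : a ≤ x) (hxy : x ≤ y) (hyc : y ≤ (a + b) / 2)
    (hm : ∀ t ∈ Icc x y, m ≤ g (u t) * w t) :
    firstIntegral P g u u' w w' x + (P y - P x) * m ≤ firstIntegral P g u u' w w' y := by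
  have hsub : Icc x y ⊆ Icc a b := Icc_subset_Icc hax (by linarith)
  have hh : HasACDeriv (fun t => g (u t) * w t - m)
      (fun t => derivWithin g (Ici 0) (u t) * u' t * w t + g (u t) * w' t) x y := by
    simpa only [sub_zero] using ((hu.isCaraSol.hasACDeriv_comp_mul hab.le hg (hu.nonneg hab)
      hw).mono hxy hsub).sub
        (.of_continuousOn hxy (fun t _ => hasDerivWithinAt_const t _ m) continuousOn_const)
  have hmono := HasACDeriv.monotoneOn_add_mul_of_monotoneOn
    (hP.monotoneOn.mono (Icc_subset_Icc hax hyc))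
    ((hu.isCaraSol.hasACDeriv_deriv_mul_deriv hw).mono hxy hsub) hh
    ((hu.isCaraSol.continuousOn_deriv_comp_mul hab.le hg (hu.nonneg hab) hw).mono hsub)
    (fun t ht => sub_nonneg.2 (hm t ht))
    ⟨le_rfl, hxy⟩ ⟨hxy, le_rfl⟩ hxy
  simp only [firstIntegral]
  linarith

theorem firstIntegral_le_of_nonneg (hab : a < b) (hP : IsSymmUnimodal P a b)
    (hg : IsSuperlinear g) (hu : IsPositiveDirichletSol P g u u' a b)
    (hw : IsLinearizedSol P g u w w' a b) {x y : ℝ} (hax : a ≤ x) (hxy : x ≤ y)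
    (hyc : y ≤ (a + b) / 2) (hw0 : ∀ t ∈ Icc x y, 0 ≤ w t) :
    firstIntegral P g u u' w w' x ≤ firstIntegral P g u u' w w' y := by
  simpa using hu.firstIntegral_add_le hab hP hg hw hax hxy hyc (m := 0)
    fun t ht => mul_nonneg (hg.nonneg _) (hw0 t ht)

theorem firstIntegral_le_of_nonpos (hab : a < b) (hP : IsSymmUnimodal P a b)
    (hg : IsSuperlinear g) (hu : IsPositiveDirichletSol P g u u' a b)
    (hw : IsLinearizedSol P g u w w' a b) {x y : ℝ} (hcx : (a + b) / 2 ≤ x) (hxy : x ≤ y)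
    (hyb : y ≤ b) (hw0 : ∀ t ∈ Icc x y, w t ≤ 0) :
    firstIntegral P g u u' w w' x ≤ firstIntegral P g u u' w w' y := by
  have hsub : Icc x y ⊆ Icc a b := Icc_subset_Icc (by linarith) hyb
  exact HasACDeriv.monotoneOn_add_mul_of_antitoneOn
    ((hP.antitoneOn hab.le).mono (Icc_subset_Icc hcx hyb))
    ((hu.isCaraSol.hasACDeriv_deriv_mul_deriv hw).mono hxy hsub)
    ((hu.isCaraSol.hasACDeriv_comp_mul hab.le hg (hu.nonneg hab) hw).mono hxy hsub)
    ((hu.isCaraSol.continuousOn_deriv_comp_mul hab.le hg (hu.nonneg hab) hw).mono hsub)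
    (fun t ht => mul_nonpos_of_nonneg_of_nonpos (hg.nonneg _) (hw0 t ht))
    ⟨le_rfl, hxy⟩ ⟨hxy, le_rfl⟩ hxy

theorem firstIntegral_eq_left_of_ae_eq_const {k : ℝ} (hab : a < b) (hg : IsSuperlinear g)
    (hu : IsPositiveDirichletSol P g u u' a b) (hw : IsLinearizedSol P g u w w' a b)
    (hPk : ∀ᵐ t ∂(volume.restrict (Icc a b)), P t = k) {t : ℝ} (ht : t ∈ Icc a b) :
    firstIntegral (fun _ => k) g u u' w w' t = firstIntegral (fun _ => k) g u u' w w' a := by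
  have hF : HasACDeriv (firstIntegral (fun _ => k) g u u' w w') (fun _ => 0) a b :=
    ((hu.isCaraSol.hasACDeriv_deriv_mul_deriv hw).add
      ((hu.isCaraSol.hasACDeriv_comp_mul hab.le hg (hu.nonneg hab) hw).const_mul k)).congr_deriv <|
        hPk.mono fun t ht => by rw [ht, neg_add_cancel]
  have haI : a ∈ Icc a b := ⟨le_rfl, hab.le⟩
  exact le_antisymm (hF.antitoneOn (ae_of_all _ fun _ => le_rfl) haI ht ht.1)
    (hF.monotoneOn (ae_of_all _ fun _ => le_rfl) haI ht ht.1)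

theorem mid_le_of_first_zero (hab : a < b) (hP : IsSymmUnimodal P a b) (hg : IsSuperlinear g)
    (hu : IsPositiveDirichletSol P g u u' a b) (hw : IsLinearizedSol P g u w w' a b)
    (hwa' : 0 ≤ w' a) {ξ : ℝ} (hξ : ξ ∈ Ioo a b) (hξ0 : w ξ = 0)
    (hpos : ∀ t ∈ Ioo a ξ, 0 < w t) (hξ' : w' ξ < 0) : (a + b) / 2 ≤ ξ := by
  by_contra! hξc
  have hF := hu.firstIntegral_le_of_nonneg hab hP hg hw le_rfl hξ.1.le hξc.le <|
    forall_Icc_nonneg_of_forall_Ioo hξ.1 (hw.continuousOn.mono (Icc_subset_Icc_right hξ.2.le))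
      fun t ht => (hpos t ht).le
  have hFa : 0 ≤ u' a * w' a :=
    mul_nonneg (hu.deriv_pos_of_lt_mid hab hP hg a ⟨le_rfl, hξ.1.trans hξc⟩).le hwa'
  have hFξ : u' ξ * w' ξ < 0 :=
    mul_neg_of_pos_of_neg (hu.deriv_pos_of_lt_mid hab hP hg ξ ⟨hξ.1.le, hξc⟩) hξ'
  rw [hu.firstIntegral_left hg.map_zero, firstIntegral, hξ0, mul_zero, mul_zero, add_zero] at hF
  linarith

theorem firstIntegral_mid (hab : a < b) (hP : IsSymmUnimodal P a b) (hg : IsSuperlinear g)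
    (hu : IsPositiveDirichletSol P g u u' a b) (R w w' : ℝ → ℝ) :
    firstIntegral R g u u' w w' ((a + b) / 2) =
      R ((a + b) / 2) * (g (u ((a + b) / 2)) * w ((a + b) / 2)) := by
  rw [firstIntegral, hu.deriv_mid_eq_zero hab hP hg.locallyLipschitz hg.nonneg, zero_mul, zero_add]

theorem firstIntegral_eq_zero_of_mid_eq_zero (hab : a < b) (hP : IsSymmUnimodal P a b)
    (hg : IsSuperlinear g) (hu : IsPositiveDirichletSol P g u u' a b)
    (hw : IsLinearizedSol P g u w w' a b) (hwa' : 0 ≤ w' a) (hwc : w ((a + b) / 2) = 0)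
    (hw0 : ∀ t ∈ Icc a ((a + b) / 2), 0 ≤ w t) :
    ∀ t ∈ Icc a ((a + b) / 2), firstIntegral P g u u' w w' t = 0 := by
  have hua' : 0 < u' a := hu.deriv_pos_of_lt_mid hab hP hg a ⟨le_rfl, by linarith⟩
  intro t ht
  refine le_antisymm ?_ ?_
  · calc firstIntegral P g u u' w w' t ≤ firstIntegral P g u u' w w' ((a + b) / 2) :=
          hu.firstIntegral_le_of_nonneg hab hP hg hw ht.1 ht.2 le_rfl fun s hs =>
            hw0 s ⟨ht.1.trans hs.1, hs.2⟩
      _ = 0 := by rw [hu.firstIntegral_mid hab hP hg, hwc, mul_zero, mul_zero]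
  · calc 0 ≤ u' a * w' a := mul_nonneg hua'.le hwa'
      _ = firstIntegral P g u u' w w' a := (hu.firstIntegral_left hg.map_zero P w w').symm
      _ ≤ firstIntegral P g u u' w w' t :=
          hu.firstIntegral_le_of_nonneg hab hP hg hw le_rfl ht.1 ht.2 fun s hs =>
            hw0 s ⟨hs.1, hs.2.trans ht.2⟩

theorem deriv_left_eq_zero_and_ae_eq_const_of_mid_eq_zero (hab : a < b) (hP : IsSymmUnimodal P a b)
    (hg : IsSuperlinear g) (hu : IsPositiveDirichletSol P g u u' a b)
    (hw : IsLinearizedSol P g u w w' a b) (hwa' : 0 ≤ w' a) (hwc : w ((a + b) / 2) = 0)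
    (hpos : ∀ t ∈ Ioo a ((a + b) / 2), 0 < w t) :
    w' a = 0 ∧ ∃ k, ∀ᵐ t ∂(volume.restrict (Icc a b)), P t = k := by
  have hac : a < (a + b) / 2 := by linarith
  have hcb : (a + b) / 2 < b := by linarith
  have hF := hu.firstIntegral_eq_zero_of_mid_eq_zero hab hP hg hw hwa' hwc <|
    forall_Icc_nonneg_of_forall_Ioo hac (hw.continuousOn.mono (Icc_subset_Icc_right hcb.le))
      fun t ht => (hpos t ht).le
  have hFa := hF a ⟨le_rfl, hac.le⟩
  rw [hu.firstIntegral_left hg.map_zero] at hFa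
  refine ⟨(mul_eq_zero.1 hFa).resolve_left (hu.deriv_pos_of_lt_mid hab hP hg a ⟨le_rfl, hac⟩).ne',
    hP.exists_ae_eq_const_of_antitoneOn fun s hs t ht hst => ?_⟩
  have hsub : Icc s t ⊆ Icc a b := Icc_subset_Icc hs.1.le (ht.2.trans hcb).le
  have hcont := (hu.isCaraSol.hasACDeriv_comp_mul hab.le hg (hu.nonneg hab) hw).continuousOn hab.le
  obtain ⟨x, hx, hmin⟩ := isCompact_Icc.exists_isMinOn ⟨s, le_rfl, hst⟩ (hcont.mono hsub)
  have hax : a < x := hs.1.trans_le hx.1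
  have hxc : x < (a + b) / 2 := hx.2.trans_lt ht.2
  have hmin_pos : 0 < g (u x) * w x :=
    mul_pos (hg.pos _ (hu.pos x ⟨hax, hxc.trans hcb⟩)) (hpos x ⟨hax, hxc⟩)
  have hle := hu.firstIntegral_add_le hab hP hg hw hs.1.le hst ht.2.le fun y hy => hmin hy
  rw [hF s (Ioo_subset_Icc_self hs), hF t (Ioo_subset_Icc_self ht), zero_add] at hle
  exact sub_nonpos.1 (nonpos_of_mul_nonpos_left hle hmin_pos)

theorem forall_Icc_deriv_neg_of_mid_lt (hab : a < b) (hP : IsSymmUnimodal P a b)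
    (hg : IsSuperlinear g) (hu : IsPositiveDirichletSol P g u u' a b)
    (hw : IsLinearizedSol P g u w w' a b) {ξ : ℝ} (hcξ : (a + b) / 2 < ξ) (hξb : ξ ≤ b)
    (hξ0 : w ξ = 0) (hξ' : w' ξ < 0) : ∀ t ∈ Icc ξ b, w' t < 0 := by
  have hsub : Icc ξ b ⊆ Icc a b := Icc_subset_Icc_left (by linarith)
  refine forall_Icc_deriv_neg_of_ne_zero (fun t ht => (hw.hasDerivWithinAt (hsub ht)).mono hsub)
    ((hw.continuousOn_deriv hab.le).mono hsub) hξ0 hξ' fun η hη hneg hη0 => ?_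
  have hF := hu.firstIntegral_le_of_nonpos hab hP hg hw hcξ.le hη.1.le hη.2 fun t ht =>
    ht.1.eq_or_lt.elim (fun h => (h ▸ hξ0).le) fun h => (hneg t ⟨h, ht.2⟩).le
  have hFξ : 0 < u' ξ * w' ξ :=
    mul_pos_of_neg_of_neg (hu.deriv_neg_of_mid_lt hab hP hg ξ ⟨hcξ, hξb⟩) hξ'
  have hFη : P η * (g (u η) * w η) ≤ 0 :=
    mul_nonpos_of_nonneg_of_nonpos (hP.nonneg η (hsub (Ioc_subset_Icc_self hη)))
      (mul_nonpos_of_nonneg_of_nonpos (hg.nonneg _) (hneg η ⟨hη.1, le_rfl⟩).le)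
  rw [firstIntegral, firstIntegral, hξ0, hη0, mul_zero, mul_zero, mul_zero] at hF
  linarith

theorem mid_lt_and_deriv_neg_of_first_zero (hab : a < b) (hP : IsSymmUnimodal P a b)
    (hg : IsSuperlinear g) (hu : IsPositiveDirichletSol P g u u' a b)
    (hw : IsLinearizedSol P g u w w' a b) (hwa' : 0 ≤ w' a)
    (hnonrigid : ¬ (w' a = 0 ∧ ∃ k, ∀ᵐ t ∂(volume.restrict (Icc a b)), P t = k)) {ξ : ℝ}
    (hξ : ξ ∈ Ioo a b) (hξ0 : w ξ = 0) (hpos : ∀ t ∈ Ioo a ξ, 0 < w t) (hξ' : w' ξ < 0) :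
    ξ ∈ Ioo ((a + b) / 2) b ∧ ∀ t ∈ Icc ξ b, w' t < 0 := by
  have hcξ : (a + b) / 2 < ξ := by
    refine lt_of_le_of_ne (hu.mid_le_of_first_zero hab hP hg hw hwa' hξ hξ0 hpos hξ') ?_
    rintro rfl
    exact hnonrigid
      (hu.deriv_left_eq_zero_and_ae_eq_const_of_mid_eq_zero hab hP hg hw hwa' hξ0 hpos)
  exact ⟨⟨hcξ, hξ.2⟩, hu.forall_Icc_deriv_neg_of_mid_lt hab hP hg hw hcξ hξ.2.le hξ0 hξ'⟩

theorem eq_mid_and_deriv_neg_of_first_zero {k : ℝ} (hab : a < b) (hP : IsSymmUnimodal P a b)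
    (hg : IsSuperlinear g) (hu : IsPositiveDirichletSol P g u u' a b)
    (hw : IsLinearizedSol P g u w w' a b) (hwa' : w' a = 0)
    (hPk : ∀ᵐ t ∂(volume.restrict (Icc a b)), P t = k) {ξ : ℝ} (hξ : ξ ∈ Ioo a b)
    (hξ0 : w ξ = 0) (hpos : ∀ t ∈ Ioo a ξ, 0 < w t) (hξ' : w' ξ < 0) :
    ξ = (a + b) / 2 ∧ (∀ t ∈ Ico ξ b, w' t < 0) ∧ w' b = 0 := by
  have hcI : (a + b) / 2 ∈ Ioo a b := ⟨by linarith, by linarith⟩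
  have hF : ∀ t ∈ Icc a b, firstIntegral (fun _ => k) g u u' w w' t = 0 := fun t ht => by
    rw [hu.firstIntegral_eq_left_of_ae_eq_const hab hg hw hPk ht,
      hu.firstIntegral_left hg.map_zero, hwa', mul_zero]
  have hw_eq_zero : ∀ t ∈ Ioo a b, u' t * w' t = 0 → w t = 0 := fun t ht ht0 => by
    have hk : k ≠ 0 := fun hk => hP.ne_zero (hk ▸ hPk)
    have hFt := hF t (Ioo_subset_Icc_self ht)
    rw [firstIntegral, ht0, zero_add, mul_eq_zero, mul_eq_zero] at hFt
    exact (hFt.resolve_left hk).resolve_left (hg.pos _ (hu.pos t ht)).ne'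
  have hwc : w ((a + b) / 2) = 0 := hw_eq_zero _ hcI <| by
    rw [hu.deriv_mid_eq_zero hab hP hg.locallyLipschitz hg.nonneg, zero_mul]
  refine ⟨le_antisymm (not_lt.1 fun hcξ => (hpos _ ⟨hcI.1, hcξ⟩).ne' hwc)
    (hu.mid_le_of_first_zero hab hP hg hw hwa'.ge hξ hξ0 hpos hξ'), fun t ht => ?_, ?_⟩
  · have hsub : Icc ξ t ⊆ Icc a b := Icc_subset_Icc hξ.1.le ht.2.le
    refine forall_Icc_deriv_neg_of_ne_zero (fun s hs => (hw.hasDerivWithinAt (hsub hs)).mono hsub)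
      ((hw.continuousOn_deriv hab.le).mono hsub) hξ0 hξ' (fun η hη hneg hη0 => ?_) t ⟨ht.1, le_rfl⟩
    exact (hneg η ⟨hη.1, le_rfl⟩).ne <| hw_eq_zero η ⟨hξ.1.trans hη.1, hη.2.trans_lt ht.2⟩ <| by
      rw [hη0, mul_zero]
  · have hFb := hF b ⟨hab.le, le_rfl⟩
    rw [hu.firstIntegral_right hg.map_zero] at hFb
    exact (mul_eq_zero.1 hFb).resolve_left (hu.deriv_neg_of_mid_lt hab hP hg b ⟨hcI.2, le_rfl⟩).ne

end IsPositiveDirichletSol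

theorem linearized_unique_zero
    (a b : ℝ) (hab : a < b)
    (g : ℝ → ℝ)
    (hg_C1 : ContDiffOn ℝ 1 g (Set.Ici 0))
    (hg_pos : ∀ s > 0, 0 < g s)
    (hg_ext : ∀ s ≤ (0 : ℝ), g s = 0)
    (hg_s : ∀ s > (0 : ℝ), g s / s < derivWithin g (Set.Ici 0) s)
    (q : ℝ → ℝ)
    (hq_bv : IsBV a b q)
    (hq_nonneg : ∀ᵐ t ∂(volume.restrict (Set.Icc a b)), 0 ≤ q t)
    (hq_ne : ¬ ∀ᵐ t ∂(volume.restrict (Set.Icc a b)), q t = 0)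
    (hq_symm : ∀ᵐ t ∂(volume.restrict (Set.Icc a b)), q t = q (a + b - t))
    (hq_mono : AEMonotoneOn q a ((a + b) / 2))
    (u u' : ℝ → ℝ)
    (hu_sol : IsCaraSol a b (fun t x => q t * g x) u u')
    (hua : u a = 0) (hub : u b = 0)
    (hu_pos : ∀ t ∈ Set.Ioo a b, 0 < u t)
    (w w' : ℝ → ℝ)
    (hw_sol : IsCaraSol a b (fun t x => q t * derivWithin g (Set.Ici 0) (u t) * x) w w')
    (hw_nt : ∃ t ∈ Set.Icc a b, w t ≠ 0)
    (hwa : 0 ≤ w a) (hwa' : 0 ≤ w' a) :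
    ∃ ξ ∈ Set.Ioo a b,
      w ξ = 0 ∧
      (∀ t ∈ Set.Ioo a ξ, 0 < w t) ∧
      (∀ t ∈ Set.Ioc a b, w t = 0 → t = ξ) ∧
      w b < 0 ∧
      -- the general case
      (¬ (w' a = 0 ∧ ∃ k : ℝ, ∀ᵐ t ∂(volume.restrict (Set.Icc a b)), q t = k) →
        ξ ∈ Set.Ioo ((a + b) / 2) b ∧ ∀ t ∈ Set.Icc ξ b, w' t < 0) ∧
      -- the single exceptional case: a constant weight together with `w'(a) = 0`
      ((w' a = 0 ∧ ∃ k : ℝ, ∀ᵐ t ∂(volume.restrict (Set.Icc a b)), q t = k) →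
        ξ = (a + b) / 2 ∧ (∀ t ∈ Set.Ico ξ b, w' t < 0) ∧ w' b = 0) := by
  obtain ⟨P, hP, hqP⟩ := exists_isSymmUnimodal_ae_eq hq_nonneg hq_ne hq_symm hq_mono
  have hq_const {k : ℝ} : (∀ᵐ t ∂(volume.restrict (Icc a b)), q t = k) ↔
      ∀ᵐ t ∂(volume.restrict (Icc a b)), P t = k :=
    Filter.eventually_congr (hqP.mono fun t ht => by rw [ht])
  simp only [hq_const]
  have hg : IsSuperlinear g := ⟨hg_C1, hg_pos, hg_ext, hg_s⟩
  have hu : IsPositiveDirichletSol P g u u' a b :=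
    ⟨hu_sol.congr_ae (hqP.mono fun t ht => by rw [ht]), hua, hub, hu_pos⟩
  have hw : IsLinearizedSol P g u w w' a b := hw_sol.congr_ae (hqP.mono fun t ht => by rw [ht])
  obtain ⟨ξ, hξ, hξ0, hpos, hξ'⟩ :=
    hu.exists_first_zero_of_isLinearizedSol hab hP hg hw hw_nt hwa hwa'
  have hgeneric := (hu.mid_lt_and_deriv_neg_of_first_zero hab hP hg hw hwa' · hξ hξ0 hpos hξ')
  have hrigid (h : w' a = 0 ∧ ∃ k : ℝ, ∀ᵐ t ∂(volume.restrict (Icc a b)), P t = k) :=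
    h.2.elim fun _ hk =>
      hu.eq_mid_and_deriv_neg_of_first_zero hab hP hg hw h.1 hk hξ hξ0 hpos hξ'
  have hderiv_neg : ∀ t ∈ Ico ξ b, w' t < 0 := (em _).elim (fun h => (hrigid h).2.1)
    fun h t ht => (hgeneric h).2 t (Ico_subset_Icc_self ht)
  have hneg : ∀ t ∈ Ioc ξ b, w t < 0 := fun t ht => hξ0 ▸ forall_Ioc_lt_of_deriv_neg
    (hw.mono hξ.2.le (Icc_subset_Icc_left hξ.1.le)).1
    (fun s hs => hderiv_neg s (Ioo_subset_Ico_self hs)) t ht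
  refine ⟨ξ, hξ, hξ0, hpos, fun t ht ht0 => ?_, hneg b ⟨hξ.2, le_rfl⟩, hgeneric, hrigid⟩
  exact le_antisymm (not_lt.1 fun hξt => (hneg t ⟨hξt, ht.2⟩).ne ht0)
    (not_lt.1 fun htξ => (hpos t ⟨ht.1, htξ⟩).ne' ht0)
end

section
/- (Limit profiles as $\mu\to+\infty$.) Let $g:[0,\infty)\to[0,\infty)$ be continuous with $g(0)=0$, $g(s)>0$ for all $s>0$, $\lim_{s\to0^+}g(s)/s=0$ and $\lim_{s\to+\infty}g(s)/s=+\infty$; extend $g$ to $\mathbb R$ by $g(s)=0$ for $s\le 0$. Let $a<b$, let $h\in L^1([a,b])$, and put $h^{\pm}:=|h|/2\pm h/2$. Suppose that there are $m\ge1$ and points $$a=\tau_0\le\sigma_1<\tau_1<\sigma_2<\tau_2<\cdots<\sigma_m<\tau_m\le\sigma_{m+1}=b$$ such that, for every $i\in\{1,\dots,m\}$, $h\ge0$ a.e. and $h\not\equiv0$ on $I_i^+:=[\sigma_i,\tau_i]$, and, for every $i\in\{0,\dots,m\}$, $h\le0$ a.e. on $I_i^-:=[\tau_i,\sigma_{i+1}]$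 and $h\not\equiv0$ on $I_i^-$ whenever this interval is nondegenerate (here $h\not\equiv 0$ means that $h$ is not a.e. zero). Suppose moreover that, for every $i\in\{1,\dots,m\}$, $h\not\equiv0$ on every left neighborhood of $\sigma_i$ in $[a,b]$ if $\sigma_i>a$, and $h\not\equiv0$ on every right neighborhood of $\tau_i$ in $[a,b]$ if $\tau_i<b$. For $\mu>0$ consider the problem $$(D_\mu)\qquad u''+\bigl(h^+(t)-\mu h^-(t)\bigr)g(u)=0,\qquad u(a)=0=u(b).$$ Solutions of this and of the problems below are understood in the Carathéodory sense on the compact interval under consideration: $u$ is differentiable there (one-sidedly at the end points), $u'$ is absolutely continuous, and the equation holds a.e. A solution is positive if it is $>0$ in the interior of the interval. Assume that $R>0$ and $\mu^*>0$ are such that every positive solution $u$ of $(D_\mu)$ with $\mu>\mu^*$ satisfies $\|u\|_\infty<R$. Let $(\mu_n)_n\subseteq(\mu^*,+\infty)$ with $\mu_n\to+\infty$, and for each $n$ let $u_{\mu_n}$ be a positive solution of $(D_{\mu_n})$. Then there exists a continuous function $u_\infty:[a,b]\to[0,\infty)$ such that, after passing to a subsequence, $u_{\mu_n}\to u_\infty$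 uniformly on $[a,b]$; moreover $u_\infty\equiv0$ on $I_i^-$ for every $i\in\{0,\dots,m\}$ and, for every $i\in\{1,\dots,m\}$, the restriction of $u_\infty$ to $I_i^+$ is a non-negative solution on $I_i^+$ of the limit problem $$u''+h^+(t)g(u)=0,\qquad u(\sigma_i)=0=u(\tau_i).$$ Suppose in addition that $0<r<R$ is small enough that, for each $i\in\{1,\dots,m\}$, the only non-negative solution of the limit problem on $I_i^+$ with maximum $\le r$ is the zero solution, and that, for some nonempty $\mathcal I\subseteq\{1,\dots,m\}$, all $u_{\mu_n}$ belong to $$\Lambda^{\mathcal I}:=\Bigl\{u\in C([a,b]) : r<\max_{I_i^+}|u|<R \text{ for } i\in\mathcal I,\ \max_{I_i^+}|u|<r \text{ for } i\in\{1,\dots,m\}\setminus\mathcal I\Bigr\}.$$ Then $u_\infty\equiv0$ on $I_i^+$ for every $i\in\{1,\dots,m\}\setminus\mathcal I$, and for every $i\in\mathcal I$ the restriction of $u_\infty$ to $I_i^+$ is a positive solution of the limit problem. -/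
open Set MeasureTheory Filter Topology

/-- `u` is a Carathéodory solution of `u'' + F(t, u) = 0` on `[a,b]`: it is differentiable on `[a,b]`
(one-sidedly at the end points), its derivative is absolutely continuous on `[a,b]`, and the
equation holds almost everywhere. Only the values of `u` on `[a,b]` matter. -/
def IsCaratheodorySol (a b : ℝ) (F : ℝ → ℝ → ℝ) (u : ℝ → ℝ) : Prop :=
  ∃ u' : ℝ → ℝ,
    (∀ t ∈ Icc a b, HasDerivWithinAt u (u' t) (Icc a b) t) ∧
    AbsolutelyContinuousOnInterval u' a b ∧
    ∀ᵐ t ∂volume.restrict (Icc a b), HasDerivWithinAt u' (-F t (u t)) (Icc a b) t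

/-- `u` solves the Dirichlet problem `u'' + q(t) g(u) = 0`, `u(a) = 0 = u(b)`. -/
def IsDirichletSol (a b : ℝ) (q g u : ℝ → ℝ) : Prop :=
  IsCaratheodorySol a b (fun t x => q t * g x) u ∧ u a = 0 ∧ u b = 0

/-- Non-negative solution of the Dirichlet problem. -/
def IsNonnegDirichletSol (a b : ℝ) (q g u : ℝ → ℝ) : Prop :=
  IsDirichletSol a b q g u ∧ ∀ t ∈ Icc a b, 0 ≤ u t

/-- Positive solution of the Dirichlet problem: positive in the open interval. -/
def IsPosDirichletSol (a b : ℝ) (q g u : ℝ → ℝ) : Prop :=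
  IsDirichletSol a b q g u ∧ ∀ t ∈ Ioo a b, 0 < u t

/-- The positive part `h⁺ = |h|/2 + h/2` of a weight. -/
noncomputable def posW (h : ℝ → ℝ) : ℝ → ℝ := fun t => |h t| / 2 + h t / 2

/-- The negative part `h⁻ = |h|/2 - h/2` of a weight. -/
noncomputable def negW (h : ℝ → ℝ) : ℝ → ℝ := fun t => |h t| / 2 - h t / 2

/-- The weight `h⁺ - μ h⁻`. -/
noncomputable def muW (h : ℝ → ℝ) (μ : ℝ) : ℝ → ℝ := fun t => posW h t - μ * negW h t

/-- `h = 0` almost everywhere on `s`. -/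
def VanishesOn (h : ℝ → ℝ) (s : Set ℝ) : Prop := ∀ᵐ t ∂volume.restrict s, h t = 0

/-- The sign condition on `h`, with
`a = τ 0 ≤ σ 1 < τ 1 < ⋯ < σ m < τ m ≤ σ (m+1) = b`; the values `σ 0` and `σ i`, `τ (i-1)` with
`i > m + 1` play no role. The positivity intervals are `[σ i, τ i]`, `1 ≤ i ≤ m`, the negativity
intervals `[τ i, σ (i+1)]`, `0 ≤ i ≤ m`; of the latter the first and the last may be degenerate.
A point `σ i = a` has no left neighborhoods, and a point `τ i = b` no right neighborhoods,
in `[a,b]`. -/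
structure SignCondition (a b : ℝ) (h : ℝ → ℝ) (m : ℕ) (σ τ : ℕ → ℝ) : Prop where
  one_le : 1 ≤ m
  left_end : τ 0 = a
  right_end : σ (m + 1) = b
  first_le : τ 0 ≤ σ 1
  last_le : τ m ≤ σ (m + 1)
  pos_lt : ∀ i, 1 ≤ i → i ≤ m → σ i < τ i
  neg_lt : ∀ i, 1 ≤ i → i < m → τ i < σ (i + 1)
  nonneg : ∀ i, 1 ≤ i → i ≤ m → ∀ᵐ t ∂volume.restrict (Icc (σ i) (τ i)), 0 ≤ h t
  pos_nontrivial : ∀ i, 1 ≤ i → i ≤ m → ¬ VanishesOn h (Icc (σ i) (τ i))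
  nonpos : ∀ i, i ≤ m → ∀ᵐ t ∂volume.restrict (Icc (τ i) (σ (i + 1))), h t ≤ 0
  neg_nontrivial : ∀ i, i ≤ m → τ i < σ (i + 1) → ¬ VanishesOn h (Icc (τ i) (σ (i + 1)))
  left_nhds : ∀ i, 1 ≤ i → i ≤ m → a < σ i → ∀ δ > (0 : ℝ),
    ¬ VanishesOn h (Icc (σ i - δ) (σ i) ∩ Icc a b)
  right_nhds : ∀ i, 1 ≤ i → i ≤ m → τ i < b → ∀ δ > (0 : ℝ),
    ¬ VanishesOn h (Icc (τ i) (τ i + δ) ∩ Icc a b)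

/-- The maximum of `|u|` on `[c,d]` (attained when `u` is continuous on `[c,d]` and `c ≤ d`). -/
noncomputable def maxAbs (u : ℝ → ℝ) (c d : ℝ) : ℝ := sSup ((fun t => |u t|) '' Icc c d)

/-- The set `Λ^𝓘` of continuous functions on `[a,b]` that are large on `[σ i, τ i]` for `i ∈ 𝓘`
and small on the other positivity intervals. -/
def LambdaSet (a b : ℝ) (m : ℕ) (σ τ : ℕ → ℝ) (r R : ℝ) (𝓘 : Finset ℕ) : Set (ℝ → ℝ) :=
  {u | ContinuousOn u (Icc a b) ∧
    (∀ i ∈ 𝓘, r < maxAbs u (σ i) (τ i) ∧ maxAbs u (σ i) (τ i) < R) ∧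
    ∀ i ∈ Finset.Icc 1 m \ 𝓘, maxAbs u (σ i) (τ i) < r}

/-!
A non-negative solution `u` of `(D_μ)` satisfies `u'(a) ≥ 0 ≥ u'(b)`. Integrating the equation from
either end point and discarding the favourable term `-μ h⁻ g(u)` bounds `|u'|` by `∫ h⁺ g(u)`,
uniformly in `μ`, so bounded families of solutions are precompact. Integrating over `[a,b]` gives
`μ ∫ h⁻ g(u) ≤ ∫ h⁺ g(u)`, whose right-hand side stays bounded, so a limit `v` satisfies
`h⁻ g(v) = 0` a.e. Since `h` does not vanish near the nodes, `v` vanishes there; as a limit of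
convex functions it then vanishes on every `I_i⁻`. On `I_i⁺` the equation does not involve `μ` and
passes to the limit in its Volterra form, and a non-zero solution there is positive by concavity.
-/

/-! ### Compactness, convexity and iterated integrals -/

theorem exists_subseq_tendstoUniformlyOn_of_equicontinuousOn {α β : Type*} [TopologicalSpace α]
    [MetricSpace β] {s : Set α} {K : Set β} (hs : IsCompact s) (hK : IsCompact K)
    {f : ℕ → α → β} (hf : EquicontinuousOn f s) (hfK : ∀ n, MapsTo (f n) s K) :
    ∃ φ : ℕ → ℕ, StrictMono φ ∧ ∃ v : α → β,
      TendstoUniformlyOn (fun k => f (φ k)) v atTop s := by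
  have := isCompact_iff_compactSpace.1 hs
  let G (n : ℕ) : BoundedContinuousFunction s β := BoundedContinuousFunction.mkOfCompact
    ⟨s.domRestrict (f n), (hf.continuousOn n).domRestrict⟩
  have hG : Equicontinuous ((↑) : range G → s → β) := by
    rw [equicontinuous_iff_range]
    refine (equicontinuous_iff_range.1 ((equicontinuous_restrict_iff f).2 hf)).mono ?_
    rintro _ ⟨⟨_, n, rfl⟩, rfl⟩
    exact ⟨n, rfl⟩
  have hcompact : IsCompact (closure (range G)) :=
    BoundedContinuousFunction.arzela_ascoli K hK _ (by rintro _ x ⟨n, rfl⟩; exact hfK n x.2) hG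
  obtain ⟨w, -, φ, hφ, hw⟩ := hcompact.tendsto_subseq fun n => subset_closure (mem_range_self n)
  refine ⟨φ, hφ, Function.extend Subtype.val w (f 0), ?_⟩
  have hext : Function.extend Subtype.val w (f 0) ∘ Subtype.val = w :=
    funext fun x => Subtype.val_injective.extend_apply _ _ x
  rw [tendstoUniformlyOn_iff_tendstoUniformly_comp_coe, hext]
  exact BoundedContinuousFunction.tendsto_iff_tendstoUniformly.1 hw

theorem tendsto_comp_of_continuousOn {X Y ι : Type*} [TopologicalSpace X] [TopologicalSpace Y]
    {l : Filter ι} [l.NeBot] {D : Set X} {g : X → Y} {x : ι → X} {y : X} (hD : IsClosed D)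
    (hg : ContinuousOn g D) (hxD : ∀ i, x i ∈ D) (hx : Tendsto x l (𝓝 y)) :
    Tendsto (fun i => g (x i)) l (𝓝 (g y)) :=
  (hg y (hD.mem_of_tendsto hx (.of_forall hxD))).tendsto.comp
    (tendsto_nhdsWithin_iff.2 ⟨hx, .of_forall hxD⟩)

theorem convexOn_of_tendsto {ι E : Type*} [AddCommGroup E] [Module ℝ E] {l : Filter ι} [l.NeBot]
    {s : Set E} {f : ι → E → ℝ} {v : E → ℝ} (hf : ∀ i, ConvexOn ℝ s (f i))
    (hlim : ∀ x ∈ s, Tendsto (fun i => f i x) l (𝓝 (v x))) : ConvexOn ℝ s v := by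
  obtain ⟨i₀⟩ := l.nonempty_of_neBot
  refine ⟨(hf i₀).1, fun x hx y hy a b ha hb hab => ?_⟩
  exact le_of_tendsto_of_tendsto' (hlim _ ((hf i₀).1 hx hy ha hb hab))
    (((hlim x hx).const_smul a).add ((hlim y hy).const_smul b))
    fun i => (hf i).2 hx hy ha hb hab

theorem pos_on_Ioo_of_concaveOn {c d : ℝ} {u : ℝ → ℝ} (hu : ConcaveOn ℝ (Icc c d) u)
    (hu0 : ∀ t ∈ Icc c d, 0 ≤ u t) {x : ℝ} (hx : x ∈ Icc c d) (hux : 0 < u x) :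
    ∀ t ∈ Ioo c d, 0 < u t := by
  intro t ht
  have hcd : c ≤ d := hx.1.trans hx.2
  by_contra! hle
  rcases le_total t x with htx | hxt
  · have := hu.right_le_of_le_left'' (left_mem_Icc.2 hcd) hx ht.1 htx
      (hle.trans (hu0 c (left_mem_Icc.2 hcd)))
    linarith
  · have := hu.left_le_of_le_right'' hx (right_mem_Icc.2 hcd) hxt ht.2
      (hle.trans (hu0 d (right_mem_Icc.2 hcd)))
    linarith

theorem sub_mul_deriv_nonneg_of_isMinOn {s : Set ℝ} (hs : Convex ℝ s) {f : ℝ → ℝ} {p x y : ℝ}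
    (hmin : IsMinOn f s x) (hf : HasDerivWithinAt f p s x) (hx : x ∈ s) (hy : y ∈ s) :
    0 ≤ (y - x) * p := by
  simpa using hmin.localize.hasFDerivWithinAt_nonneg hf.hasFDerivWithinAt
    (sub_mem_posTangentConeAt_of_segment_subset (hs.segment_subset hx hy))

theorem intervalIntegrable_of_integrableOn_Icc {f : ℝ → ℝ} {a b s t : ℝ}
    (hf : IntegrableOn f (Icc a b)) (hs : s ∈ Icc a b) (ht : t ∈ Icc a b) :
    IntervalIntegrable f volume s t :=
  (hf.mono_set (ordConnected_Icc.uIcc_subset hs ht)).intervalIntegrable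

theorem continuousOn_primitive_Icc {f : ℝ → ℝ} {a b : ℝ} (hf : IntegrableOn f (Icc a b)) :
    ContinuousOn (fun t => ∫ x in a..t, f x) (Icc a b) := by
  rcases le_or_gt a b with hab | hab
  · rw [← uIcc_of_le hab] at hf ⊢
    exact intervalIntegral.continuousOn_primitive_interval hf
  · simp only [Icc_eq_empty hab.not_ge, continuousOn_empty]

theorem tendsto_intervalIntegral_of_dominated {ι : Type*} {l : Filter ι}
    [l.IsCountablyGenerated] {a b s t : ℝ} {f : ι → ℝ → ℝ} {f₀ bound : ℝ → ℝ}
    (hf : ∀ i, IntegrableOn (f i) (Icc a b)) (hbound : IntegrableOn bound (Icc a b))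
    (hle : ∀ i, ∀ᵐ x ∂volume.restrict (Icc a b), ‖f i x‖ ≤ bound x)
    (hlim : ∀ᵐ x ∂volume.restrict (Icc a b), Tendsto (fun i => f i x) l (𝓝 (f₀ x)))
    (hs : s ∈ Icc a b) (ht : t ∈ Icc a b) :
    Tendsto (fun i => ∫ x in s..t, f i x) l (𝓝 (∫ x in s..t, f₀ x)) := by
  have hsub : uIoc s t ⊆ Icc a b := uIoc_subset_uIcc.trans (ordConnected_Icc.uIcc_subset hs ht)
  refine intervalIntegral.tendsto_integral_filter_of_dominated_convergence bound
    (.of_forall fun i => ((hf i).mono_set hsub).aestronglyMeasurable)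
    (.of_forall fun i => ?_) (intervalIntegrable_of_integrableOn_Icc hbound hs ht) ?_
  · exact (ae_restrict_iff' measurableSet_uIoc).1
      (ae_restrict_of_ae_restrict_of_subset hsub (hle i))
  · exact (ae_restrict_iff' measurableSet_uIoc).1
      (ae_restrict_of_ae_restrict_of_subset hsub hlim)

theorem tendsto_integral_integral_of_dominated {ι : Type*} {l : Filter ι}
    [l.IsCountablyGenerated] {a b t : ℝ} {f : ι → ℝ → ℝ} {f₀ bound : ℝ → ℝ}
    (hf : ∀ i, IntegrableOn (f i) (Icc a b)) (hbound : IntegrableOn bound (Icc a b))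
    (hle : ∀ i, ∀ᵐ x ∂volume.restrict (Icc a b), ‖f i x‖ ≤ bound x)
    (hlim : ∀ᵐ x ∂volume.restrict (Icc a b), Tendsto (fun i => f i x) l (𝓝 (f₀ x)))
    (ht : t ∈ Icc a b) :
    Tendsto (fun i => ∫ s in a..t, ∫ x in a..s, f i x) l (𝓝 (∫ s in a..t, ∫ x in a..s, f₀ x)) := by
  have ha : a ∈ Icc a b := left_mem_Icc.2 (ht.1.trans ht.2)
  refine tendsto_intervalIntegral_of_dominated (bound := fun s => ∫ x in a..s, bound x)
    (fun i => (continuousOn_primitive_Icc (hf i)).integrableOn_Icc)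
    (continuousOn_primitive_Icc hbound).integrableOn_Icc
    (fun i => ae_restrict_of_forall_mem measurableSet_Icc fun s hs => ?_)
    (ae_restrict_of_forall_mem measurableSet_Icc fun s hs =>
      tendsto_intervalIntegral_of_dominated hf hbound hle hlim ha hs) ha ht
  have hsub : Ioc a s ⊆ Icc a b := Ioc_subset_Icc_self.trans (Icc_subset_Icc_right hs.2)
  exact intervalIntegral.norm_integral_le_of_norm_le hs.1
    ((ae_restrict_iff' measurableSet_Ioc).1 (ae_restrict_of_ae_restrict_of_subset hsub (hle i)))
    (intervalIntegrable_of_integrableOn_Icc hbound ha hs)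

/-! ### Carathéodory solutions -/

namespace IsCaratheodorySol

variable {a b : ℝ} {F : ℝ → ℝ → ℝ} {u : ℝ → ℝ}

theorem continuousOn (hu : IsCaratheodorySol a b F u) : ContinuousOn u (Icc a b) := by
  obtain ⟨u', hd, -, -⟩ := hu
  exact fun t ht => (hd t ht).continuousWithinAt

theorem mono {c d : ℝ} (hu : IsCaratheodorySol a b F u) (hcd : c ≤ d)
    (hsub : Icc c d ⊆ Icc a b) : IsCaratheodorySol c d F u := by
  obtain ⟨u', hd, hac, hae⟩ := hu
  have hab : a ≤ b := nonempty_Icc.1 ((nonempty_Icc.2 hcd).mono hsub)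
  refine ⟨u', fun t ht => (hd t (hsub ht)).mono hsub, hac.mono ?_, ?_⟩
  · rwa [uIcc_of_le hcd, uIcc_of_le hab]
  · filter_upwards [ae_restrict_of_ae_restrict_of_subset hsub hae] with t ht using ht.mono hsub

theorem congr_ae {F' : ℝ → ℝ → ℝ} (hu : IsCaratheodorySol a b F u)
    (hF : ∀ᵐ t ∂volume.restrict (Icc a b), F t (u t) = F' t (u t)) :
    IsCaratheodorySol a b F' u := by
  obtain ⟨u', hd, hac, hae⟩ := hu
  refine ⟨u', hd, hac, ?_⟩
  filter_upwards [hae, hF] with t ht hFt using hFt ▸ ht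

theorem neg (hu : IsCaratheodorySol a b F u) :
    IsCaratheodorySol a b (fun t x => -F t (-x)) (-u) := by
  obtain ⟨u', hd, hac, hae⟩ := hu
  refine ⟨-u', fun t ht => (hd t ht).neg, hac.neg, ?_⟩
  filter_upwards [hae] with t ht
  simpa only [Pi.neg_apply, neg_neg] using ht.neg

theorem exists_deriv (hu : IsCaratheodorySol a b F u) :
    ∃ u' : ℝ → ℝ, (∀ t ∈ Icc a b, HasDerivWithinAt u (u' t) (Icc a b) t) ∧
      IntegrableOn (fun t => F t (u t)) (Icc a b) ∧
      ∀ s ∈ Icc a b, ∀ t ∈ Icc a b, u' t = u' s - ∫ x in s..t, F x (u x) := by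
  obtain ⟨u', hd, hac, hae⟩ := hu
  have hderiv : ∀ᵐ t ∂volume.restrict (Icc a b), deriv u' t = -F t (u t) := by
    rw [← restrict_Ioo_eq_restrict_Icc]
    filter_upwards [ae_restrict_of_ae_restrict_of_subset Ioo_subset_Icc_self hae,
      ae_restrict_mem measurableSet_Ioo] with t ht hmem
    exact (ht.hasDerivAt (Icc_mem_nhds hmem.1 hmem.2)).deriv
  refine ⟨u', hd, ?_, fun s hs t ht => ?_⟩
  · have hint : IntegrableOn (deriv u') (Icc a b) := by
      rcases le_or_gt a b with hab | hab
      · exact (intervalIntegrable_iff_integrableOn_Icc_of_le hab).1 hac.intervalIntegrable_deriv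
      · simp only [Icc_eq_empty hab.not_ge, integrableOn_empty]
    exact hint.neg.congr (hderiv.mono fun t ht => by simp only [Pi.neg_apply, ht, neg_neg])
  · have hsub : uIcc s t ⊆ Icc a b := ordConnected_Icc.uIcc_subset hs ht
    have hFTC : ∫ x in s..t, deriv u' x = u' t - u' s :=
      (hac.mono (hsub.trans Icc_subset_uIcc)).integral_deriv_eq_sub
    have hcongr : ∫ x in s..t, deriv u' x = ∫ x in s..t, -F x (u x) :=
      intervalIntegral.integral_congr_ae_restrict
        (ae_restrict_of_ae_restrict_of_subset (uIoc_subset_uIcc.trans hsub) hderiv)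
    rw [hcongr, intervalIntegral.integral_neg] at hFTC
    linarith

theorem integrableOn (hu : IsCaratheodorySol a b F u) :
    IntegrableOn (fun t => F t (u t)) (Icc a b) := by
  obtain ⟨-, -, hint, -⟩ := hu.exists_deriv
  exact hint

theorem convexOn (hu : IsCaratheodorySol a b F u)
    (hF : ∀ᵐ t ∂volume.restrict (Icc a b), F t (u t) ≤ 0) : ConvexOn ℝ (Icc a b) u := by
  obtain ⟨u', hd, -, hsub⟩ := hu.exists_deriv
  have hd' (t : ℝ) (ht : t ∈ Ioo a b) : HasDerivAt u (u' t) t :=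
    (hd t (Ioo_subset_Icc_self ht)).hasDerivAt (Icc_mem_nhds ht.1 ht.2)
  refine MonotoneOn.convexOn_of_deriv (convex_Icc a b) hu.continuousOn ?_ ?_ <;>
    rw [interior_Icc]
  · exact fun t ht => (hd' t ht).differentiableAt.differentiableWithinAt
  · intro s hs t ht hst
    rw [(hd' s hs).deriv, (hd' t ht).deriv,
      hsub s (Ioo_subset_Icc_self hs) t (Ioo_subset_Icc_self ht)]
    have : ∫ x in s..t, F x (u x) ≤ 0 := by
      rw [intervalIntegral.integral_of_le hst]
      refine integral_nonpos_of_ae (ae_restrict_of_ae_restrict_of_subset ?_ hF)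
      exact Ioc_subset_Icc_self.trans (Icc_subset_Icc hs.1.le ht.2.le)
    linarith

theorem concaveOn (hu : IsCaratheodorySol a b F u)
    (hF : ∀ᵐ t ∂volume.restrict (Icc a b), 0 ≤ F t (u t)) : ConcaveOn ℝ (Icc a b) u := by
  refine neg_convexOn_iff.1 (hu.neg.convexOn (hF.mono fun t ht => ?_))
  simpa only [Pi.neg_apply, neg_neg, neg_nonpos] using ht

theorem exists_volterra (hu : IsCaratheodorySol a b F u) (hab : a ≤ b) :
    ∃ p : ℝ, ∀ t ∈ Icc a b,
      u t = u a + (t - a) * p - ∫ s in a..t, ∫ x in a..s, F x (u x) := by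
  obtain ⟨u', hd, hint, hsub⟩ := hu.exists_deriv
  have ha : a ∈ Icc a b := left_mem_Icc.2 hab
  refine ⟨u' a, fun t ht => ?_⟩
  have hprim := continuousOn_primitive_Icc hint
  have hcont : ContinuousOn u' (Icc a b) :=
    (continuousOn_const.sub hprim).congr fun s hs => hsub a ha s hs
  have hFTC : ∫ s in a..t, u' s = u t - u a :=
    intervalIntegral.integral_eq_sub_of_hasDerivAt_of_le ht.1
      (hu.continuousOn.mono (Icc_subset_Icc_right ht.2))
      (fun s hs => (hd s ⟨hs.1.le, hs.2.le.trans ht.2⟩).hasDerivAt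
        (Icc_mem_nhds hs.1 (hs.2.trans_le ht.2)))
      (intervalIntegrable_of_integrableOn_Icc hcont.integrableOn_Icc ha ht)
  have hcongr : ∫ s in a..t, u' s = ∫ s in a..t, (u' a - ∫ x in a..s, F x (u x)) :=
    intervalIntegral.integral_congr fun s hs =>
      hsub a ha s (ordConnected_Icc.uIcc_subset ha ht hs)
  rw [hcongr, intervalIntegral.integral_sub intervalIntegrable_const
    (intervalIntegrable_of_integrableOn_Icc hprim.integrableOn_Icc ha ht),
    intervalIntegral.integral_const, smul_eq_mul] at hFTC
  linarith

theorem of_volterra (hab : a ≤ b) (hint : IntegrableOn (fun t => F t (u t)) (Icc a b)) {p : ℝ}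
    (hu : ∀ t ∈ Icc a b, u t = u a + (t - a) * p - ∫ s in a..t, ∫ x in a..s, F x (u x)) :
    IsCaratheodorySol a b F u := by
  have hprim := continuousOn_primitive_Icc hint
  have hint' : IntervalIntegrable (fun t => F t (u t)) volume a b :=
    (intervalIntegrable_iff_integrableOn_Icc_of_le hab).2 hint
  refine ⟨fun t => p - ∫ x in a..t, F x (u x), fun t ht => ?_, ?_, ?_⟩
  · have := Fact.mk ht
    have hlin : HasDerivWithinAt (fun t => u a + (t - a) * p) p (Icc a b) t := by
      simpa only [id_eq, one_mul] using
        ((hasDerivWithinAt_id t _).sub_const a).mul_const p |>.const_add (u a)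
    have hdouble := intervalIntegral.integral_hasDerivWithinAt_right (s := Icc a b) (t := Icc a b)
      (intervalIntegrable_of_integrableOn_Icc hprim.integrableOn_Icc (left_mem_Icc.2 hab) ht)
      (hprim.stronglyMeasurableAtFilter_nhdsWithin measurableSet_Icc t) (hprim t ht)
    exact (hlin.sub hdouble).congr_of_mem hu ht
  · have hconst : AbsolutelyContinuousOnInterval (fun _ : ℝ => p) a b :=
      ((LipschitzWith.const p).lipschitzOnWith (s := uIcc a b)).absolutelyContinuousOnInterval
    exact hconst.sub (hint'.absolutelyContinuousOnInterval_intervalIntegral left_mem_uIcc)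
  · rw [ae_restrict_iff' measurableSet_Icc, ← uIcc_of_le hab]
    filter_upwards [hint'.ae_hasDerivAt_integral] with t ht hmem
    exact ((ht hmem a left_mem_uIcc).const_sub p).hasDerivWithinAt

theorem of_tendsto {ι : Type*} [Countable ι] {l : Filter ι} [l.NeBot]
    [l.IsCountablyGenerated] (hab : a < b) {w : ι → ℝ → ℝ} {bound : ℝ → ℝ}
    (hw : ∀ i, IsCaratheodorySol a b F (w i))
    (hbound : IntegrableOn bound (Icc a b))
    (hle : ∀ i, ∀ᵐ t ∂volume.restrict (Icc a b), ‖F t (w i t)‖ ≤ bound t)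
    (hlim : ∀ t ∈ Icc a b, Tendsto (fun i => w i t) l (𝓝 (u t)))
    (hFlim : ∀ᵐ t ∂volume.restrict (Icc a b),
      Tendsto (fun i => F t (w i t)) l (𝓝 (F t (u t)))) :
    IsCaratheodorySol a b F u := by
  have ha : a ∈ Icc a b := left_mem_Icc.2 hab.le
  have hb : b ∈ Icc a b := right_mem_Icc.2 hab.le
  have hba : b - a ≠ 0 := (sub_pos.2 hab).ne'
  have hint (i : ι) : IntegrableOn (fun t => F t (w i t)) (Icc a b) := (hw i).integrableOn
  have hint_u : IntegrableOn (fun t => F t (u t)) (Icc a b) := by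
    refine hbound.mono' (aestronglyMeasurable_of_tendsto_ae l
      (fun i => (hint i).aestronglyMeasurable) hFlim) ?_
    filter_upwards [ae_all_iff.2 hle, hFlim] with t hle_t hlim_t
    exact le_of_tendsto' hlim_t.norm hle_t
  have hdouble (t : ℝ) (ht : t ∈ Icc a b) :=
    tendsto_integral_integral_of_dominated hint hbound hle hFlim ht
  choose p hp using fun i => (hw i).exists_volterra hab.le
  have hp_eq (i : ι) :
      p i = (w i b - w i a + ∫ s in a..b, ∫ x in a..s, F x (w i x)) / (b - a) := by
    rw [eq_div_iff hba]
    linarith [hp i b hb]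
  -- The slopes `p i` converge because the boundary values determine them.
  obtain ⟨q, hp_lim⟩ : ∃ q, Tendsto p l (𝓝 q) := by
    rw [funext hp_eq]
    exact ⟨_, (((hlim b hb).sub (hlim a ha)).add (hdouble b hb)).div_const _⟩
  refine of_volterra hab.le hint_u (p := q) fun t ht => tendsto_nhds_unique (hlim t ht) ?_
  rw [funext fun i => hp i t ht]
  exact ((hlim a ha).add (hp_lim.const_mul (t - a))).sub (hdouble t ht)

theorem exists_deriv_of_nonneg (hu : IsCaratheodorySol a b F u) (hab : a < b)
    (hu0 : ∀ t ∈ Icc a b, 0 ≤ u t) (hua : u a = 0) (hub : u b = 0) :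
    ∃ u' : ℝ → ℝ, (∀ t ∈ Icc a b, HasDerivWithinAt u (u' t) (Icc a b) t) ∧
      (∀ s ∈ Icc a b, ∀ t ∈ Icc a b, u' t = u' s - ∫ x in s..t, F x (u x)) ∧
      0 ≤ u' a ∧ u' b ≤ 0 := by
  obtain ⟨u', hd, -, hsub⟩ := hu.exists_deriv
  have ha : a ∈ Icc a b := left_mem_Icc.2 hab.le
  have hb : b ∈ Icc a b := right_mem_Icc.2 hab.le
  have hmin {x : ℝ} (hx : u x = 0) : IsMinOn u (Icc a b) x := fun t ht => hx.trans_le (hu0 t ht)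
  refine ⟨u', hd, hsub, ?_, ?_⟩
  · exact nonneg_of_mul_nonneg_right (sub_mul_deriv_nonneg_of_isMinOn (convex_Icc a b) (hmin hua)
      (hd a ha) ha hb) (sub_pos.2 hab)
  · exact nonpos_of_mul_nonneg_right (sub_mul_deriv_nonneg_of_isMinOn (convex_Icc a b) (hmin hub)
      (hd b hb) hb ha) (sub_neg.2 hab)

theorem integral_nonneg (hu : IsCaratheodorySol a b F u) (hab : a < b)
    (hu0 : ∀ t ∈ Icc a b, 0 ≤ u t) (hua : u a = 0) (hub : u b = 0) :
    0 ≤ ∫ t in a..b, F t (u t) := by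
  obtain ⟨u', -, hsub, ha, hb⟩ := hu.exists_deriv_of_nonneg hab hu0 hua hub
  linarith [hsub a (left_mem_Icc.2 hab.le) b (right_mem_Icc.2 hab.le)]

theorem lipschitzOnWith (hu : IsCaratheodorySol a b F u) (hab : a < b)
    (hu0 : ∀ t ∈ Icc a b, 0 ≤ u t) (hua : u a = 0) (hub : u b = 0) {f : ℝ → ℝ}
    (hf : IntegrableOn f (Icc a b)) (hf0 : ∀ t, 0 ≤ f t)
    (hFf : ∀ t ∈ Icc a b, F t (u t) ≤ f t) :
    LipschitzOnWith (∫ t in a..b, f t).toNNReal u (Icc a b) := by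
  obtain ⟨u', hd, hsub, ha, hb⟩ := hu.exists_deriv_of_nonneg hab hu0 hua hub
  have hle {s t : ℝ} (hs : s ∈ Icc a b) (ht : t ∈ Icc a b) (hst : s ≤ t) :
      ∫ x in s..t, F x (u x) ≤ ∫ x in a..b, f x :=
    (intervalIntegral.integral_mono_on hst
      (intervalIntegrable_of_integrableOn_Icc hu.integrableOn hs ht)
      (intervalIntegrable_of_integrableOn_Icc hf hs ht)
      fun x hx => hFf x ⟨hs.1.trans hx.1, hx.2.trans ht.2⟩).trans
    (intervalIntegral.integral_mono_interval hs.1 hst ht.2 (ae_of_all _ hf0)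
      ((intervalIntegrable_iff_integrableOn_Icc_of_le hab.le).2 hf))
  have hf_int : 0 ≤ ∫ x in a..b, f x := intervalIntegral.integral_nonneg hab.le fun x _ => hf0 x
  refine (convex_Icc a b).lipschitzOnWith_of_nnnorm_hasDerivWithin_le hd fun t ht => ?_
  have hat := hsub a (left_mem_Icc.2 hab.le) t ht
  have htb := hsub t ht b (right_mem_Icc.2 hab.le)
  rw [← NNReal.coe_le_coe, coe_nnnorm, Real.coe_toNNReal _ hf_int, Real.norm_eq_abs, abs_le]
  constructor
  · linarith [hle (left_mem_Icc.2 hab.le) ht ht.1]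
  · linarith [hle ht (right_mem_Icc.2 hab.le) ht.2]

end IsCaratheodorySol

theorem IsNonnegDirichletSol.isPosDirichletSol {a b : ℝ} {q g u : ℝ → ℝ}
    (hu : IsNonnegDirichletSol a b q g u)
    (hF : ∀ᵐ t ∂volume.restrict (Icc a b), 0 ≤ q t * g (u t)) {x : ℝ} (hx : x ∈ Icc a b)
    (hux : u x ≠ 0) : IsPosDirichletSol a b q g u :=
  ⟨hu.1, pos_on_Ioo_of_concaveOn (hu.1.1.concaveOn hF) hu.2 hx ((hu.2 x hx).lt_of_ne' hux)⟩

theorem IsPosDirichletSol.isNonnegDirichletSol {a b : ℝ} {q g u : ℝ → ℝ}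
    (hu : IsPosDirichletSol a b q g u) : IsNonnegDirichletSol a b q g u := by
  refine ⟨hu.1, fun t ht => ?_⟩
  rcases eq_endpoints_or_mem_Ioo_of_mem_Icc ht with rfl | rfl | ht'
  · exact hu.1.2.1.ge
  · exact hu.1.2.2.ge
  · exact (hu.2 t ht').le

/-! ### Weights -/

theorem posW_nonneg (h : ℝ → ℝ) (t : ℝ) : 0 ≤ posW h t := by
  unfold posW
  linarith [neg_abs_le (h t)]

theorem negW_nonneg (h : ℝ → ℝ) (t : ℝ) : 0 ≤ negW h t := by
  unfold negW
  linarith [le_abs_self (h t)]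

theorem muW_le_posW (h : ℝ → ℝ) {μ : ℝ} (hμ : 0 ≤ μ) (t : ℝ) : muW h μ t ≤ posW h t :=
  sub_le_self _ (mul_nonneg hμ (negW_nonneg h t))

theorem muW_of_nonneg {h : ℝ → ℝ} {t : ℝ} (μ : ℝ) (ht : 0 ≤ h t) : muW h μ t = posW h t := by
  simp only [muW, negW, abs_of_nonneg ht, sub_self, mul_zero, sub_zero]

theorem muW_nonpos {h : ℝ → ℝ} {μ t : ℝ} (hμ : 0 ≤ μ) (ht : h t ≤ 0) : muW h μ t ≤ 0 := by
  have hpos : posW h t = 0 := by simp only [posW, abs_of_nonpos ht]; ring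
  simpa only [muW, hpos, zero_sub, neg_nonpos] using mul_nonneg hμ (negW_nonneg h t)

theorem eq_zero_of_negW_eq_zero {h : ℝ → ℝ} {t : ℝ} (ht : h t ≤ 0) (hneg : negW h t = 0) :
    h t = 0 := by
  simp only [negW, abs_of_nonpos ht] at hneg
  linarith

theorem integrableOn_posW {h : ℝ → ℝ} {s : Set ℝ} (hh : IntegrableOn h s) :
    IntegrableOn (posW h) s :=
  (hh.abs.div_const 2).add (hh.div_const 2)

theorem integrableOn_negW {h : ℝ → ℝ} {s : Set ℝ} (hh : IntegrableOn h s) :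
    IntegrableOn (negW h) s :=
  (hh.abs.div_const 2).sub (hh.div_const 2)

theorem VanishesOn.mono {h : ℝ → ℝ} {s t : Set ℝ} (ht : VanishesOn h t) (hst : s ⊆ t) :
    VanishesOn h s :=
  ae_restrict_of_ae_restrict_of_subset hst ht

theorem eq_zero_of_ae_eq_zero_or {h v : ℝ → ℝ} {s : Set ℝ} {x : ℝ} (hs : MeasurableSet s)
    (hv : ContinuousWithinAt v s x)
    (hae : ∀ᵐ t ∂volume.restrict s, h t = 0 ∨ v t = 0)
    (hh : ∀ δ > 0, ¬ VanishesOn h (Metric.closedBall x δ ∩ s)) : v x = 0 := by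
  by_contra hvx
  obtain ⟨δ, hδ, hball⟩ :=
    (nhdsWithin_hasBasis Metric.nhds_basis_closedBall s).mem_iff.1 (hv.eventually_ne hvx)
  refine hh δ hδ ?_
  filter_upwards [ae_restrict_of_ae_restrict_of_subset inter_subset_right hae,
    ae_restrict_mem (Metric.isClosed_closedBall.measurableSet.inter hs)] with t ht hmem
  exact ht.resolve_right (hball hmem)

/-! ### Passing to the limit in `q(t) g(u)` -/

section Weighted

variable {q g v : ℝ → ℝ} {u : ℕ → ℝ → ℝ} {D : Set ℝ} {a b : ℝ}

theorem integrableOn_mul_comp (hq : IntegrableOn q (Icc a b)) (hg : ContinuousOn g D) {w : ℝ → ℝ}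
    (hw : ContinuousOn w (Icc a b)) (hwD : MapsTo w (Icc a b) D) :
    IntegrableOn (fun t => q t * g (w t)) (Icc a b) :=
  hq.mul_continuousOn (hg.comp hw hwD) isCompact_Icc

theorem exists_dominating_mul_comp (hq : IntegrableOn q (Icc a b)) (hD : IsCompact D)
    (hg : ContinuousOn g D) : ∃ bound : ℝ → ℝ, IntegrableOn bound (Icc a b) ∧
      ∀ t, ∀ x ∈ D, ‖q t * g x‖ ≤ bound t := by
  obtain ⟨M, hM⟩ := hD.exists_bound_of_continuousOn hg
  refine ⟨fun t => ‖q t‖ * M, hq.norm.mul_const M, fun t x hx => ?_⟩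
  rw [norm_mul]
  exact mul_le_mul_of_nonneg_left (hM x hx) (norm_nonneg _)

theorem tendsto_integral_mul_comp (hab : a ≤ b) (hq : IntegrableOn q (Icc a b)) (hD : IsCompact D)
    (hg : ContinuousOn g D) (hu : ∀ n, ContinuousOn (u n) (Icc a b))
    (huD : ∀ n, MapsTo (u n) (Icc a b) D)
    (hlim : ∀ t ∈ Icc a b, Tendsto (fun n => u n t) atTop (𝓝 (v t))) :
    Tendsto (fun n => ∫ t in a..b, q t * g (u n t)) atTop (𝓝 (∫ t in a..b, q t * g (v t))) := by
  obtain ⟨bound, hbound, hle⟩ := exists_dominating_mul_comp hq hD hg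
  exact tendsto_intervalIntegral_of_dominated
    (fun n => integrableOn_mul_comp hq hg (hu n) (huD n)) hbound
    (fun n => ae_restrict_of_forall_mem measurableSet_Icc fun t ht => hle t _ (huD n ht))
    (ae_restrict_of_forall_mem measurableSet_Icc fun t ht =>
      (tendsto_comp_of_continuousOn hD.isClosed hg (huD · ht) (hlim t ht)).const_mul (q t))
    (left_mem_Icc.2 hab) (right_mem_Icc.2 hab)

theorem isCaratheodorySol_mul_of_tendsto (hab : a < b) (hq : IntegrableOn q (Icc a b))
    (hD : IsCompact D) (hg : ContinuousOn g D)
    (hu : ∀ n, IsCaratheodorySol a b (fun t x => q t * g x) (u n))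
    (huD : ∀ n, MapsTo (u n) (Icc a b) D)
    (hlim : ∀ t ∈ Icc a b, Tendsto (fun n => u n t) atTop (𝓝 (v t))) :
    IsCaratheodorySol a b (fun t x => q t * g x) v := by
  obtain ⟨bound, hbound, hle⟩ := exists_dominating_mul_comp hq hD hg
  exact .of_tendsto hab hu hbound
    (fun n => ae_restrict_of_forall_mem measurableSet_Icc fun t ht => hle t _ (huD n ht)) hlim
    (ae_restrict_of_forall_mem measurableSet_Icc fun t ht =>
      (tendsto_comp_of_continuousOn hD.isClosed hg (huD · ht) (hlim t ht)).const_mul (q t))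

end Weighted

/-! ### The nodes -/

namespace SignCondition

variable {a b : ℝ} {h : ℝ → ℝ} {m : ℕ} {σ τ : ℕ → ℝ}

theorem neg_le (H : SignCondition a b h m σ τ) {i : ℕ} (hi : i ≤ m) : τ i ≤ σ (i + 1) := by
  rcases Nat.eq_zero_or_pos i with rfl | hpos
  · exact H.first_le
  · rcases hi.eq_or_lt with rfl | hlt
    · exact H.last_le
    · exact (H.neg_lt i hpos hlt).le

theorem left_le_tau (H : SignCondition a b h m σ τ) {i : ℕ} (hi : i ≤ m) : a ≤ τ i := by
  induction i with
  | zero => exact H.left_end.ge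
  | succ i ih =>
    exact (ih (by lia)).trans ((H.neg_le (by lia)).trans (H.pos_lt (i + 1) (by lia) hi).le)

theorem sigma_le_right (H : SignCondition a b h m σ τ) {i : ℕ} (hi : i ≤ m) :
    σ (i + 1) ≤ b := by
  induction hi using Nat.decreasingInduction with
  | self => exact H.right_end.le
  | of_succ k hk ih =>
    exact (H.pos_lt (k + 1) (by lia) (by lia)).le.trans ((H.neg_le (by lia)).trans ih)

theorem Icc_neg_subset (H : SignCondition a b h m σ τ) {i : ℕ} (hi : i ≤ m) :
    Icc (τ i) (σ (i + 1)) ⊆ Icc a b :=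
  Icc_subset_Icc (H.left_le_tau hi) (H.sigma_le_right hi)

theorem Icc_pos_subset (H : SignCondition a b h m σ τ) {i : ℕ} (h1 : 1 ≤ i) (hi : i ≤ m) :
    Icc (σ i) (τ i) ⊆ Icc a b := by
  obtain ⟨j, rfl⟩ := Nat.exists_eq_add_of_le' h1
  exact Icc_subset_Icc ((H.left_le_tau (by lia)).trans (H.neg_le (by lia)))
    ((H.neg_le hi).trans (H.sigma_le_right hi))

theorem left_lt_right (H : SignCondition a b h m σ τ) : a < b := by
  have hlt := H.pos_lt 1 le_rfl H.one_le
  obtain ⟨ha, hb⟩ := (Icc_subset_Icc_iff hlt.le).1 (H.Icc_pos_subset le_rfl H.one_le)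
  exact ha.trans_lt (hlt.trans_le hb)

theorem not_vanishesOn_right_nhds (H : SignCondition a b h m σ τ) {i : ℕ} (h1 : 1 ≤ i)
    (hi : i ≤ m) (hb : τ i < b) {δ : ℝ} (hδ : 0 < δ) :
    ¬ VanishesOn h (Metric.closedBall (τ i) δ ∩ Icc (τ i) (σ (i + 1))) := by
  have hlt : τ i < σ (i + 1) := by
    rcases hi.eq_or_lt with rfl | him
    · rwa [H.right_end]
    · exact H.neg_lt i h1 him
  refine mt (fun hv => hv.mono ?_)
    (H.right_nhds i h1 hi hb (min δ (σ (i + 1) - τ i)) (lt_min hδ (sub_pos.2 hlt)))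
  rintro t ⟨⟨hl, hr⟩, -⟩
  rw [← sub_le_iff_le_add', le_min_iff] at hr
  exact ⟨by rw [Real.closedBall_eq_Icc]; constructor <;> linarith, hl, by linarith⟩

theorem not_vanishesOn_left_nhds (H : SignCondition a b h m σ τ) {i : ℕ} (hi : i < m)
    (ha : a < σ (i + 1)) {δ : ℝ} (hδ : 0 < δ) :
    ¬ VanishesOn h (Metric.closedBall (σ (i + 1)) δ ∩ Icc (τ i) (σ (i + 1))) := by
  have hlt : τ i < σ (i + 1) := by
    rcases Nat.eq_zero_or_pos i with rfl | hpos
    · rwa [H.left_end]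
    · exact H.neg_lt i hpos hi
  refine mt (fun hv => hv.mono ?_)
    (H.left_nhds (i + 1) (by lia) hi ha (min δ (σ (i + 1) - τ i)) (lt_min hδ (sub_pos.2 hlt)))
  rintro t ⟨⟨hl, hr⟩, -⟩
  rw [sub_le_comm, le_min_iff] at hl
  exact ⟨by rw [Real.closedBall_eq_Icc]; constructor <;> linarith, by linarith, hr⟩

theorem ae_neg_eq_zero_or (H : SignCondition a b h m σ τ) {v : ℝ → ℝ}
    (hae : ∀ᵐ t ∂volume.restrict (Icc a b), negW h t = 0 ∨ v t = 0) {i : ℕ} (hi : i ≤ m) :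
    ∀ᵐ t ∂volume.restrict (Icc (τ i) (σ (i + 1))), h t = 0 ∨ v t = 0 := by
  filter_upwards [ae_restrict_of_ae_restrict_of_subset (H.Icc_neg_subset hi) hae, H.nonpos i hi]
    with t ht hneg using ht.imp_left (eq_zero_of_negW_eq_zero hneg)

theorem apply_tau_eq_zero (H : SignCondition a b h m σ τ) {v : ℝ → ℝ}
    (hv : ContinuousOn v (Icc a b)) (hva : v a = 0) (hvb : v b = 0)
    (hae : ∀ᵐ t ∂volume.restrict (Icc a b), negW h t = 0 ∨ v t = 0) {i : ℕ} (hi : i ≤ m) :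
    v (τ i) = 0 := by
  rcases Nat.eq_zero_or_pos i with rfl | hpos
  · rwa [H.left_end]
  have hmem : τ i ∈ Icc (τ i) (σ (i + 1)) := left_mem_Icc.2 (H.neg_le hi)
  rcases (H.Icc_neg_subset hi hmem).2.eq_or_lt with hb | hb
  · rwa [hb]
  · exact eq_zero_of_ae_eq_zero_or measurableSet_Icc (hv.mono (H.Icc_neg_subset hi) _ hmem)
      (H.ae_neg_eq_zero_or hae hi) fun _ => H.not_vanishesOn_right_nhds hpos hi hb

theorem apply_sigma_eq_zero (H : SignCondition a b h m σ τ) {v : ℝ → ℝ}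
    (hv : ContinuousOn v (Icc a b)) (hva : v a = 0) (hvb : v b = 0)
    (hae : ∀ᵐ t ∂volume.restrict (Icc a b), negW h t = 0 ∨ v t = 0) {i : ℕ} (hi : i ≤ m) :
    v (σ (i + 1)) = 0 := by
  rcases hi.eq_or_lt with rfl | him
  · rwa [H.right_end]
  have hmem : σ (i + 1) ∈ Icc (τ i) (σ (i + 1)) := right_mem_Icc.2 (H.neg_le hi)
  rcases (H.Icc_neg_subset hi hmem).1.eq_or_lt with ha | ha
  · rwa [← ha]
  · exact eq_zero_of_ae_eq_zero_or measurableSet_Icc (hv.mono (H.Icc_neg_subset hi) _ hmem)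
      (H.ae_neg_eq_zero_or hae hi) fun _ => H.not_vanishesOn_left_nhds him ha

end SignCondition

/-! ### The maximum of `|u|` -/

section MaxAbs

variable {u : ℝ → ℝ} {c d : ℝ}

theorem abs_le_maxAbs (hu : ContinuousOn u (Icc c d)) {t : ℝ} (ht : t ∈ Icc c d) :
    |u t| ≤ maxAbs u c d :=
  le_csSup (isCompact_Icc.bddAbove_image hu.abs) (mem_image_of_mem _ ht)

theorem maxAbs_le (hcd : c ≤ d) {r : ℝ} (hu : ∀ t ∈ Icc c d, |u t| ≤ r) : maxAbs u c d ≤ r :=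
  csSup_le ((nonempty_Icc.2 hcd).image _) (forall_mem_image.2 hu)

end MaxAbs

/-! ### A priori estimates for `(D_μ)` -/

section APriori

variable {a b R : ℝ} {g h : ℝ → ℝ}

theorem nonneg_of_continuousOn_of_pos (hg : ContinuousOn g (Ici 0)) (hg_pos : ∀ s > 0, 0 < g s)
    {s : ℝ} (hs : 0 ≤ s) : 0 ≤ g s :=
  le_on_closure (s := Ioi 0) (fun t ht => (hg_pos t ht).le) continuousOn_const
    (by rwa [closure_Ioi]) (by rwa [closure_Ioi])

theorem exists_forall_lipschitzOnWith (hab : a < b) (hh : IntegrableOn h (Icc a b))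
    (hg : ContinuousOn g (Icc 0 R)) (hg0 : ∀ s, 0 ≤ s → 0 ≤ g s) :
    ∃ K, ∀ μ, 0 ≤ μ → ∀ u, IsNonnegDirichletSol a b (muW h μ) g u → (∀ t ∈ Icc a b, u t ≤ R) →
      LipschitzOnWith K u (Icc a b) := by
  obtain ⟨M, hM⟩ := isCompact_Icc.exists_bound_of_continuousOn hg
  refine ⟨(∫ t in a..b, posW h t * |M|).toNNReal, fun μ hμ u hu huR => ?_⟩
  refine hu.1.1.lipschitzOnWith hab hu.2 hu.1.2.1 hu.1.2.2 ((integrableOn_posW hh).mul_const _)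
    (fun t => mul_nonneg (posW_nonneg h t) (abs_nonneg M)) fun t ht => ?_
  calc muW h μ t * g (u t) ≤ posW h t * g (u t) :=
        mul_le_mul_of_nonneg_right (muW_le_posW h hμ t) (hg0 _ (hu.2 t ht))
    _ ≤ posW h t * |M| := mul_le_mul_of_nonneg_left
        ((le_abs_self _).trans ((hM _ ⟨hu.2 t ht, huR t ht⟩).trans (le_abs_self M)))
        (posW_nonneg h t)

theorem mul_integral_negW_le_integral_posW (hab : a < b) (hh : IntegrableOn h (Icc a b))
    (hg : ContinuousOn g (Ici 0)) {μ : ℝ} {u : ℝ → ℝ}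
    (hu : IsNonnegDirichletSol a b (muW h μ) g u) :
    μ * ∫ t in a..b, negW h t * g (u t) ≤ ∫ t in a..b, posW h t * g (u t) := by
  have hint {q : ℝ → ℝ} (hq : IntegrableOn q (Icc a b)) :
      IntervalIntegrable (fun t => q t * g (u t)) volume a b :=
    (intervalIntegrable_iff_integrableOn_Icc_of_le hab.le).2
      (integrableOn_mul_comp hq hg hu.1.1.continuousOn hu.2)
  have hsplit : ∫ t in a..b, muW h μ t * g (u t) =
      (∫ t in a..b, posW h t * g (u t)) - μ * ∫ t in a..b, negW h t * g (u t) := by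
    rw [← intervalIntegral.integral_const_mul, ← intervalIntegral.integral_sub
      (hint (integrableOn_posW hh)) ((hint (integrableOn_negW hh)).const_mul μ)]
    exact intervalIntegral.integral_congr fun t _ => by simp only [muW]; ring
  linarith [hu.1.1.integral_nonneg hab hu.2 hu.1.2.1 hu.1.2.2]

theorem IsNonnegDirichletSol.convexOn_of_nonpos {c d μ : ℝ} {u : ℝ → ℝ}
    (hu : IsNonnegDirichletSol a b (muW h μ) g u) (hg0 : ∀ s, 0 ≤ s → 0 ≤ g s) (hμ : 0 ≤ μ)
    (hcd : c ≤ d) (hsub : Icc c d ⊆ Icc a b)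
    (hh : ∀ᵐ t ∂volume.restrict (Icc c d), h t ≤ 0) : ConvexOn ℝ (Icc c d) u := by
  refine (hu.1.1.mono hcd hsub).convexOn ?_
  filter_upwards [hh, ae_restrict_mem measurableSet_Icc] with t ht hmem
  exact mul_nonpos_of_nonpos_of_nonneg (muW_nonpos hμ ht) (hg0 _ (hu.2 t (hsub hmem)))

theorem IsCaratheodorySol.posW_of_nonneg {c d μ : ℝ} {u : ℝ → ℝ}
    (hu : IsCaratheodorySol a b (fun t x => muW h μ t * g x) u) (hcd : c ≤ d)
    (hsub : Icc c d ⊆ Icc a b) (hh : ∀ᵐ t ∂volume.restrict (Icc c d), 0 ≤ h t) :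
    IsCaratheodorySol c d (fun t x => posW h t * g x) u :=
  (hu.mono hcd hsub).congr_ae (hh.mono fun _ ht => by simp only [muW_of_nonneg μ ht])

end APriori

/-! ### Limit profiles -/

/-- `v` is the uniform limit on `[a,b]` of non-negative solutions `u n` of `(D_μₙ)`, bounded by a
common constant `R`, along a sequence of parameters `μₙ → +∞`. -/
structure IsLimitProfile (a b : ℝ) (h g : ℝ → ℝ) (R : ℝ) (μ : ℕ → ℝ) (u : ℕ → ℝ → ℝ)
    (v : ℝ → ℝ) : Prop where
  nonneg_param : ∀ n, 0 ≤ μ n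
  tendsto_param : Tendsto μ atTop atTop
  sol : ∀ n, IsNonnegDirichletSol a b (muW h (μ n)) g (u n)
  le : ∀ n, ∀ t ∈ Icc a b, u n t ≤ R
  tendsto : TendstoUniformlyOn u v atTop (Icc a b)

theorem exists_subseq_isLimitProfile {a b R : ℝ} {g h : ℝ → ℝ} {μ : ℕ → ℝ} {u : ℕ → ℝ → ℝ}
    (hab : a < b) (hh : IntegrableOn h (Icc a b)) (hg : ContinuousOn g (Icc 0 R))
    (hg0 : ∀ s, 0 ≤ s → 0 ≤ g s) (hμ0 : ∀ n, 0 ≤ μ n) (hμ : Tendsto μ atTop atTop)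
    (hu : ∀ n, IsNonnegDirichletSol a b (muW h (μ n)) g (u n))
    (huR : ∀ n, ∀ t ∈ Icc a b, u n t ≤ R) :
    ∃ φ : ℕ → ℕ, StrictMono φ ∧
      ∃ v, IsLimitProfile a b h g R (fun k => μ (φ k)) (fun k => u (φ k)) v := by
  obtain ⟨K, hK⟩ := exists_forall_lipschitzOnWith hab hh hg hg0
  have hequi : EquicontinuousOn u (Icc a b) :=
    (LipschitzOnWith.uniformEquicontinuousOn u K fun n =>
      hK _ (hμ0 n) _ (hu n) (huR n)).equicontinuousOn
  obtain ⟨φ, hφ, v, hv⟩ := exists_subseq_tendstoUniformlyOn_of_equicontinuousOn isCompact_Icc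
    (isCompact_Icc (a := 0) (b := R)) hequi fun n t ht => ⟨(hu n).2 t ht, huR n t ht⟩
  exact ⟨φ, hφ, v, fun k => hμ0 _, hμ.comp hφ.tendsto_atTop, fun k => hu _, fun k => huR _, hv⟩

namespace IsLimitProfile

variable {a b R : ℝ} {g h : ℝ → ℝ} {μ : ℕ → ℝ} {u : ℕ → ℝ → ℝ} {v : ℝ → ℝ}

theorem mapsTo (P : IsLimitProfile a b h g R μ u v) (n : ℕ) :
    MapsTo (u n) (Icc a b) (Icc 0 R) := fun t ht => ⟨(P.sol n).2 t ht, P.le n t ht⟩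

theorem continuousOn (P : IsLimitProfile a b h g R μ u v) : ContinuousOn v (Icc a b) :=
  P.tendsto.continuousOn (.of_forall fun n => (P.sol n).1.1.continuousOn)

theorem nonneg (P : IsLimitProfile a b h g R μ u v) : ∀ t ∈ Icc a b, 0 ≤ v t := fun t ht =>
  ge_of_tendsto' (P.tendsto.tendsto_at ht) fun n => (P.sol n).2 t ht

theorem apply_left (P : IsLimitProfile a b h g R μ u v) (hab : a ≤ b) : v a = 0 :=
  tendsto_nhds_unique (P.tendsto.tendsto_at (left_mem_Icc.2 hab))
    (by simp only [(P.sol _).1.2.1, tendsto_const_nhds_iff])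

theorem apply_right (P : IsLimitProfile a b h g R μ u v) (hab : a ≤ b) : v b = 0 :=
  tendsto_nhds_unique (P.tendsto.tendsto_at (right_mem_Icc.2 hab))
    (by simp only [(P.sol _).1.2.2, tendsto_const_nhds_iff])

theorem integral_negW_eq_zero (P : IsLimitProfile a b h g R μ u v) (hab : a < b)
    (hh : IntegrableOn h (Icc a b)) (hg : ContinuousOn g (Ici 0))
    (hg0 : ∀ s, 0 ≤ s → 0 ≤ g s) : ∫ t in a..b, negW h t * g (v t) = 0 := by
  have hlim {q : ℝ → ℝ} (hq : IntegrableOn q (Icc a b)) :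
      Tendsto (fun n => ∫ t in a..b, q t * g (u n t)) atTop (𝓝 (∫ t in a..b, q t * g (v t))) :=
    tendsto_integral_mul_comp hab.le hq isCompact_Icc (hg.mono Icc_subset_Ici_self)
      (fun n => (P.sol n).1.1.continuousOn) P.mapsTo fun t ht => P.tendsto.tendsto_at ht
  refine tendsto_nhds_unique (hlim (integrableOn_negW hh))
    (squeeze_zero' (.of_forall fun n => ?_) ?_
      ((hlim (integrableOn_posW hh)).div_atTop P.tendsto_param))
  · exact intervalIntegral.integral_nonneg hab.le fun t ht =>
      mul_nonneg (negW_nonneg h t) (hg0 _ ((P.sol n).2 t ht))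
  · filter_upwards [P.tendsto_param.eventually_gt_atTop 0] with n hn
    rw [le_div_iff₀' hn]
    exact mul_integral_negW_le_integral_posW hab hh hg (P.sol n)

theorem ae_negW_eq_zero_or (P : IsLimitProfile a b h g R μ u v) (hab : a < b)
    (hh : IntegrableOn h (Icc a b)) (hg : ContinuousOn g (Ici 0)) (hg_pos : ∀ s > 0, 0 < g s) :
    ∀ᵐ t ∂volume.restrict (Icc a b), negW h t = 0 ∨ v t = 0 := by
  have hg0 (s : ℝ) (hs : 0 ≤ s) : 0 ≤ g s := nonneg_of_continuousOn_of_pos hg hg_pos hs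
  have hint := integrableOn_mul_comp (integrableOn_negW hh) hg P.continuousOn P.nonneg
  have hnonneg : 0 ≤ᵐ[volume.restrict (Icc a b)] fun t => negW h t * g (v t) :=
    ae_restrict_of_forall_mem measurableSet_Icc fun t ht =>
      mul_nonneg (negW_nonneg h t) (hg0 _ (P.nonneg t ht))
  have hzero := P.integral_negW_eq_zero hab hh hg hg0
  rw [intervalIntegral.integral_of_le hab.le, ← integral_Icc_eq_integral_Ioc,
    setIntegral_eq_zero_iff_of_nonneg_ae hnonneg hint] at hzero
  filter_upwards [hzero, ae_restrict_mem measurableSet_Icc] with t ht hmem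
  refine (mul_eq_zero.1 ht).imp_right fun hgv => ?_
  by_contra hv
  exact (hg_pos _ ((P.nonneg t hmem).lt_of_ne' hv)).ne' hgv

variable {m : ℕ} {σ τ : ℕ → ℝ}

theorem apply_tau (P : IsLimitProfile a b h g R μ u v) (H : SignCondition a b h m σ τ)
    (hh : IntegrableOn h (Icc a b)) (hg : ContinuousOn g (Ici 0)) (hg_pos : ∀ s > 0, 0 < g s)
    {i : ℕ} (hi : i ≤ m) : v (τ i) = 0 :=
  have hab := H.left_lt_right
  H.apply_tau_eq_zero P.continuousOn (P.apply_left hab.le) (P.apply_right hab.le)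
    (P.ae_negW_eq_zero_or hab hh hg hg_pos) hi

theorem apply_sigma (P : IsLimitProfile a b h g R μ u v) (H : SignCondition a b h m σ τ)
    (hh : IntegrableOn h (Icc a b)) (hg : ContinuousOn g (Ici 0)) (hg_pos : ∀ s > 0, 0 < g s)
    {i : ℕ} (hi : i ≤ m) : v (σ (i + 1)) = 0 :=
  have hab := H.left_lt_right
  H.apply_sigma_eq_zero P.continuousOn (P.apply_left hab.le) (P.apply_right hab.le)
    (P.ae_negW_eq_zero_or hab hh hg hg_pos) hi

theorem eq_zero_on_neg (P : IsLimitProfile a b h g R μ u v) (H : SignCondition a b h m σ τ)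
    (hh : IntegrableOn h (Icc a b)) (hg : ContinuousOn g (Ici 0)) (hg_pos : ∀ s > 0, 0 < g s)
    {i : ℕ} (hi : i ≤ m) : ∀ t ∈ Icc (τ i) (σ (i + 1)), v t = 0 := by
  intro t ht
  have hconv : ConvexOn ℝ (Icc (τ i) (σ (i + 1))) v := convexOn_of_tendsto
    (fun n => (P.sol n).convexOn_of_nonpos
      (fun _ hs => nonneg_of_continuousOn_of_pos hg hg_pos hs) (P.nonneg_param n) (H.neg_le hi)
      (H.Icc_neg_subset hi) (H.nonpos i hi))
    fun t ht => P.tendsto.tendsto_at (H.Icc_neg_subset hi ht)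
  have hle := hconv.le_max_of_mem_Icc (left_mem_Icc.2 (H.neg_le hi))
    (right_mem_Icc.2 (H.neg_le hi)) ht
  rw [P.apply_tau H hh hg hg_pos hi, P.apply_sigma H hh hg hg_pos hi, max_self] at hle
  exact hle.antisymm (P.nonneg t (H.Icc_neg_subset hi ht))

theorem isNonnegDirichletSol_on_pos (P : IsLimitProfile a b h g R μ u v)
    (H : SignCondition a b h m σ τ) (hh : IntegrableOn h (Icc a b)) (hg : ContinuousOn g (Ici 0))
    (hg_pos : ∀ s > 0, 0 < g s) {i : ℕ} (h1 : 1 ≤ i) (hi : i ≤ m) :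
    IsNonnegDirichletSol (σ i) (τ i) (posW h) g v := by
  have hlt := H.pos_lt i h1 hi
  have hsub := H.Icc_pos_subset h1 hi
  have hsol : IsCaratheodorySol (σ i) (τ i) (fun t x => posW h t * g x) v :=
    isCaratheodorySol_mul_of_tendsto hlt ((integrableOn_posW hh).mono_set hsub) isCompact_Icc
      (hg.mono Icc_subset_Ici_self)
      (fun n => (P.sol n).1.1.posW_of_nonneg hlt.le hsub (H.nonneg i h1 hi))
      (fun n => (P.mapsTo n).mono_left hsub) fun t ht => P.tendsto.tendsto_at (hsub ht)
  obtain ⟨j, rfl⟩ := Nat.exists_eq_add_of_le' h1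
  exact ⟨⟨hsol, P.apply_sigma H hh hg hg_pos (by lia), P.apply_tau H hh hg hg_pos hi⟩,
    fun t ht => P.nonneg t (hsub ht)⟩

theorem le_of_maxAbs_le {c d r : ℝ} (P : IsLimitProfile a b h g R μ u v)
    (hsub : Icc c d ⊆ Icc a b) (hr : ∀ n, maxAbs (u n) c d ≤ r) : ∀ t ∈ Icc c d, v t ≤ r :=
  fun _ ht => le_of_tendsto' (P.tendsto.tendsto_at (hsub ht)) fun n =>
    (le_abs_self _).trans
      ((abs_le_maxAbs ((P.sol n).1.1.continuousOn.mono hsub) ht).trans (hr n))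

theorem exists_ne_zero_of_lt_maxAbs {c d r : ℝ} (P : IsLimitProfile a b h g R μ u v)
    (hcd : c ≤ d) (hsub : Icc c d ⊆ Icc a b) (hr0 : 0 < r) (hr : ∀ n, r < maxAbs (u n) c d) :
    ∃ t ∈ Icc c d, v t ≠ 0 := by
  by_contra! hv
  obtain ⟨n, hn⟩ := (Metric.tendstoUniformlyOn_iff.1 P.tendsto r hr0).exists
  refine (hr n).not_ge (maxAbs_le hcd fun t ht => ?_)
  simpa only [hv t ht, dist_zero_left, Real.norm_eq_abs] using (hn t (hsub ht)).le

end IsLimitProfile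

theorem limit_profiles_general {a b R : ℝ} {g h : ℝ → ℝ} {m : ℕ} {σ τ : ℕ → ℝ} {μ : ℕ → ℝ}
    {u : ℕ → ℝ → ℝ} (hg : ContinuousOn g (Ici 0)) (hg_pos : ∀ s > 0, 0 < g s)
    (hh : IntegrableOn h (Icc a b)) (H : SignCondition a b h m σ τ) (hμ0 : ∀ n, 0 ≤ μ n)
    (hμ : Tendsto μ atTop atTop) (hu : ∀ n, IsNonnegDirichletSol a b (muW h (μ n)) g (u n))
    (huR : ∀ n, ∀ t ∈ Icc a b, u n t ≤ R) :
    ∃ φ : ℕ → ℕ, StrictMono φ ∧ ∃ v : ℝ → ℝ,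
      ContinuousOn v (Icc a b) ∧
      (∀ t ∈ Icc a b, 0 ≤ v t) ∧
      TendstoUniformlyOn (fun k => u (φ k)) v atTop (Icc a b) ∧
      (∀ i, i ≤ m → ∀ t ∈ Icc (τ i) (σ (i + 1)), v t = 0) ∧
      (∀ i, 1 ≤ i → i ≤ m → IsNonnegDirichletSol (σ i) (τ i) (posW h) g v) ∧
      (∀ (r R' : ℝ) (𝓘 : Finset ℕ), 0 < r →
        (∀ i ∈ Finset.Icc 1 m \ 𝓘, ∀ w : ℝ → ℝ,
          IsNonnegDirichletSol (σ i) (τ i) (posW h) g w →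
          (∀ t ∈ Icc (σ i) (τ i), w t ≤ r) →
          ∀ t ∈ Icc (σ i) (τ i), w t = 0) →
        𝓘 ⊆ Finset.Icc 1 m →
        (∀ n, u n ∈ LambdaSet a b m σ τ r R' 𝓘) →
        (∀ i ∈ Finset.Icc 1 m \ 𝓘, ∀ t ∈ Icc (σ i) (τ i), v t = 0) ∧
        (∀ i ∈ 𝓘, IsPosDirichletSol (σ i) (τ i) (posW h) g v)) := by
  have hg0 (s : ℝ) (hs : 0 ≤ s) : 0 ≤ g s := nonneg_of_continuousOn_of_pos hg hg_pos hs
  obtain ⟨φ, hφ, v, P⟩ := exists_subseq_isLimitProfile H.left_lt_right hh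
    (hg.mono Icc_subset_Ici_self) hg0 hμ0 hμ hu huR
  have hsol (i : ℕ) (h1 : 1 ≤ i) (hi : i ≤ m) := P.isNonnegDirichletSol_on_pos H hh hg hg_pos h1 hi
  refine ⟨φ, hφ, v, P.continuousOn, P.nonneg, P.tendsto,
    fun i hi => P.eq_zero_on_neg H hh hg hg_pos hi, hsol, ?_⟩
  intro r R' 𝓘 hr huniq h𝓘 hΛ
  refine ⟨fun i hi => ?_, fun i hi => ?_⟩
  · obtain ⟨h1, him⟩ := Finset.mem_Icc.1 (Finset.mem_sdiff.1 hi).1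
    exact huniq i hi v (hsol i h1 him)
      (P.le_of_maxAbs_le (H.Icc_pos_subset h1 him) fun k => ((hΛ (φ k)).2.2 i hi).le)
  · obtain ⟨h1, him⟩ := Finset.mem_Icc.1 (h𝓘 hi)
    obtain ⟨x, hx, hvx⟩ := P.exists_ne_zero_of_lt_maxAbs (H.pos_lt i h1 him).le
      (H.Icc_pos_subset h1 him) hr fun k => ((hΛ (φ k)).2.1 i hi).1
    refine (hsol i h1 him).isPosDirichletSol
      (ae_restrict_of_forall_mem measurableSet_Icc fun t ht => ?_) hx hvx
    exact mul_nonneg (posW_nonneg h t) (hg0 _ ((hsol i h1 him).2 t ht))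

/-- **Limit profiles as `μ → +∞`.** -/
theorem limit_profiles
    (a b : ℝ) (hab : a < b)
    (g : ℝ → ℝ)
    (hg_cont : ContinuousOn g (Ici 0))
    (hg_pos : ∀ s > 0, 0 < g s)
    -- `g 0 = 0` and the extension of `g` by zero:
    (hg_ext : ∀ s ≤ (0 : ℝ), g s = 0)
    (hg_zero : Tendsto (fun s => g s / s) (𝓝[>] 0) (𝓝 0))
    (hg_infty : Tendsto (fun s => g s / s) atTop atTop)
    (h : ℝ → ℝ) (hh_int : IntegrableOn h (Icc a b))
    (m : ℕ) (σ τ : ℕ → ℝ) (hh_sign : SignCondition a b h m σ τ)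
    -- the constants `R` and `μ*` with `‖u‖_∞ < R` for all positive solutions with `μ > μ*`:
    (R μstar : ℝ) (hR : 0 < R) (hμstar : 0 < μstar)
    (hbound : ∀ μ > μstar, ∀ u : ℝ → ℝ, IsPosDirichletSol a b (muW h μ) g u →
      ∀ t ∈ Icc a b, |u t| < R)
    (μseq : ℕ → ℝ) (hμseq : ∀ n, μstar < μseq n)
    (hμ_tendsto : Tendsto μseq atTop atTop)
    (U : ℕ → ℝ → ℝ)
    (hU : ∀ n, IsPosDirichletSol a b (muW h (μseq n)) g (U n)) :
    ∃ φ : ℕ → ℕ, StrictMono φ ∧ ∃ uinf : ℝ → ℝ,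
      ContinuousOn uinf (Icc a b) ∧
      (∀ t ∈ Icc a b, 0 ≤ uinf t) ∧
      TendstoUniformlyOn (fun k => U (φ k)) uinf atTop (Icc a b) ∧
      (∀ i, i ≤ m → ∀ t ∈ Icc (τ i) (σ (i + 1)), uinf t = 0) ∧
      (∀ i, 1 ≤ i → i ≤ m → IsNonnegDirichletSol (σ i) (τ i) (posW h) g uinf) ∧
      -- the refinement when all the solutions lie in `Λ^𝓘`:
      (∀ (r : ℝ) (𝓘 : Finset ℕ), 0 < r → r < R →
        (∀ i, 1 ≤ i → i ≤ m → ∀ v : ℝ → ℝ,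
          IsNonnegDirichletSol (σ i) (τ i) (posW h) g v →
          (∀ t ∈ Icc (σ i) (τ i), v t ≤ r) →
          ∀ t ∈ Icc (σ i) (τ i), v t = 0) →
        𝓘.Nonempty → 𝓘 ⊆ Finset.Icc 1 m →
        (∀ n, U n ∈ LambdaSet a b m σ τ r R 𝓘) →
        (∀ i ∈ Finset.Icc 1 m \ 𝓘, ∀ t ∈ Icc (σ i) (τ i), uinf t = 0) ∧
        (∀ i ∈ 𝓘, IsPosDirichletSol (σ i) (τ i) (posW h) g uinf)) := by
  obtain ⟨φ, hφ, v, hcont, hnonneg, hlim, hneg, hpos, hΛ⟩ :=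
    limit_profiles_general hg_cont hg_pos hh_int hh_sign
      (fun n => (hμstar.trans (hμseq n)).le) hμ_tendsto (fun n => (hU n).isNonnegDirichletSol)
      fun n t ht => (le_abs_self _).trans (hbound _ (hμseq n) _ (hU n) t ht).le
  exact ⟨φ, hφ, v, hcont, hnonneg, hlim, hneg, hpos, fun r 𝓘 hr _ huniq _ =>
    hΛ r R 𝓘 hr fun i hi => huniq i (Finset.mem_Icc.1 (Finset.mem_sdiff.1 hi).1).1
      (Finset.mem_Icc.1 (Finset.mem_sdiff.1 hi).1).2⟩
end
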